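/- arXiv:1305.5273 — 2 statements merged into one kernel-verified Lean document; each statement's English description precedes it below -/
import Mathlib

section
/- Let κ > 0 and write κ = l + α with l ∈ ℕ and α ∈ (0,1]. Let u be a λ-mode solution whose initial data (φ,ψ) are smooth on (2M,∞), vanish for r ≥ R₀ (for some R₀ > 2M), and have the form φ(r) = (r−2M)^{κ/2}·φ̃(√(r−2M)) and ψ(r) = (r−2M)^{κ/2}·ψ̃(√(r−2M)) for some smooth functions φ̃, ψ̃ : [0,∞) → ℝ. Let ε > 0 be such that δ := min(α − ε, 1/2) > 0. Then for all 0 < a₀ < e^{−1} and 0 < b₁ < b₂: (a) for each i ≤ l, the function ∂_a^i Ũ on (0,a₀] × [b₁,b₂] extends continuously to [0,a₀] × [b₁,b₂]; and (b) there is a constant C such that |∂_a^l Ũ(a,b) − ∂_a^l Ũ(a′,b)| ≤ C·|a − a′|^δ for all a, a′ ∈ (0,a₀] and all b ∈ [b₁,b₂]. (Event-horizon half of Theorem 1.1 in the case k = 0, for a single spherical-harmonic mode: the Hölder regularity of the rescaled solution up to the event horizon {a = 0} is determined by the decay rate κ of the initial data at r = 2M.) -/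
/-!
Pass to the Kruskal coordinates `s = -U = exp((r_* - t) / (4M))`, `V = exp((r_* + t) / (4M))`,
normalised so that `s V = (r - 2M) exp(r / (2M))`, in which the event horizon is `s = 0` and the
initial surface `t = 0` is `s = V`. The function `w = r u` solves `∂ₛ∂_V w = Q(sV) w` (`wave_kru`),
where all derivatives of `Q` are bounded near `0`. On the initial surface `√(r - 2M)` is a smooth
function of `s` vanishing to first order, so data of the form `(r - 2M)^{κ/2} F(√(r - 2M))` are
symbols of order `κ` in `s`: their `i`-th derivatives are `O(s^{κ-i})`. Since
`∂_V ∂ₛʲ⁺¹ w = ∂ₛʲ(Q(sV) w)` involves only `∂ₛᵐ w` with `m ≤ j`, it follows inductively that `∂ₛʲ w`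
restricted to `s = V` is a symbol of order `κ - j` (`symb_diag`).

The function `w` is bounded for `0 < s ≤ V ≤ B` by an exponentially weighted maximum argument along
the characteristics (`bounded_of_wave`). Integrating the equation for `∂ₛʲ⁺¹ w` in `V` from the initial
surface then gives, by induction on `j`, the bound `|∂ₛʲ w| ≤ C s^{α-1}` for every `j ≤ l + 1`
(`wave_bound`), because `κ - j ≥ α - 1`.

In the blown-up coordinates, `b = V` and `s = a b exp(1 + a b² / (2M))` is smooth across `a = 0`, so
`∂ₐⁿ Ũ` is a combination of the `∂ₛʲ w`, `j ≤ n`, with coefficients smooth across `a = 0`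
(`exists_iteratedDeriv`). Hence `∂ₐⁿ Ũ = O(a^{α-1})` for `n ≤ l + 1`, locally uniformly in `b > 0`.
Integrating in `a` shows that `∂ₐⁿ Ũ` is Hölder continuous in `a` with exponent `δ ≤ α` for `n ≤ l`
(`holder_of_deriv_bound`), and uniform Hölder continuity yields the continuous extension to `a = 0`
(`exists_continuous_extension`).
-/

open MeasureTheory Filter Set Function
open scoped ContDiff

/-- The tortoise coordinate `r_* = r + 2M log(r - 2M)`. -/
noncomputable def rstar (M r : ℝ) : ℝ := r + 2*M*Real.log (r - 2*M)

/-- Partial derivative of `u` in the first (time) variable. -/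
noncomputable def pdt (u : ℝ → ℝ → ℝ) (t r : ℝ) : ℝ := deriv (fun s => u s r) t

/-- Second partial derivative of `u` in the first (time) variable. -/
noncomputable def pdtt (u : ℝ → ℝ → ℝ) (t r : ℝ) : ℝ := deriv (fun s => pdt u s r) t

/-- Partial derivative of `u` in the second (radial) variable. -/
noncomputable def pdr (u : ℝ → ℝ → ℝ) (t r : ℝ) : ℝ := deriv (fun s => u t s) r

/-- Second partial derivative of `u` in the second (radial) variable. -/
noncomputable def pdrr (u : ℝ → ℝ → ℝ) (t r : ℝ) : ℝ := deriv (fun s => pdr u t s) r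

/-- `u(t,r)` is a λ-mode solution of the wave equation on the mass-`M`
Schwarzschild exterior: it is smooth on `ℝ × (2M,∞)` and satisfies
`−(r/(r−2M))·∂²ₜu + ((r−2M)/r)·∂²ᵣu + (2(r−M)/r²)·∂ᵣu − (λ²/r²)·u = 0` there. -/
def IsModeSolution (M lam : ℝ) (u : ℝ → ℝ → ℝ) : Prop :=
  ContDiffOn ℝ ∞ (Function.uncurry u) ((Set.univ : Set ℝ) ×ˢ Set.Ioi (2*M)) ∧
  ∀ t r : ℝ, 2*M < r →
    -(r/(r-2*M)) * pdtt u t r + ((r-2*M)/r) * pdrr u t r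
      + (2*(r-M)/r^2) * pdr u t r - lam^2/r^2 * u t r = 0

/-- The horizon-rescaled solution in the blown-up coordinates
`a = e^{−(t+r)/(2M)}`, `b = e^{(t+r)/(4M)}·√(r−2M)`:
`Ũ(a,b) = 2√M·b·u(−2M·log a − 2M − a·b², 2M + a·b²)`. -/
noncomputable def Utilde (M : ℝ) (u : ℝ → ℝ → ℝ) (a b : ℝ) : ℝ :=
  2 * Real.sqrt M * b * u (-(2*M)*Real.log a - 2*M - a*b^2) (2*M + a*b^2)

/-! ### Partial derivatives and a mean value inequality -/

/-- Partial derivative of `f : ℝ × ℝ → ℝ` in the first variable. -/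
noncomputable def d1 (f : ℝ × ℝ → ℝ) (p : ℝ × ℝ) : ℝ := fderiv ℝ f p (1, 0)

/-- Partial derivative of `f : ℝ × ℝ → ℝ` in the second variable. -/
noncomputable def d2 (f : ℝ × ℝ → ℝ) (p : ℝ × ℝ) : ℝ := fderiv ℝ f p (0, 1)

lemma contDiffOn_fderiv_apply {Ω : Set (ℝ × ℝ)} (hΩ : IsOpen Ω) {f : ℝ × ℝ → ℝ}
    (hf : ContDiffOn ℝ ∞ f Ω) (e : ℝ × ℝ) :
    ContDiffOn ℝ ∞ (fun p => fderiv ℝ f p e) Ω :=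
  (hf.fderiv_of_isOpen hΩ (m := ∞) (by simp)).clm_apply contDiffOn_const

lemma contDiffOn_d1 {Ω : Set (ℝ × ℝ)} (hΩ : IsOpen Ω) {f : ℝ × ℝ → ℝ}
    (hf : ContDiffOn ℝ ∞ f Ω) : ContDiffOn ℝ ∞ (d1 f) Ω :=
  contDiffOn_fderiv_apply hΩ hf _

lemma contDiffOn_d2 {Ω : Set (ℝ × ℝ)} (hΩ : IsOpen Ω) {f : ℝ × ℝ → ℝ}
    (hf : ContDiffOn ℝ ∞ f Ω) : ContDiffOn ℝ ∞ (d2 f) Ω :=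
  contDiffOn_fderiv_apply hΩ hf _

lemma contDiffOn_iterate_d1 {Ω : Set (ℝ × ℝ)} (hΩ : IsOpen Ω) {f : ℝ × ℝ → ℝ}
    (hf : ContDiffOn ℝ ∞ f Ω) (j : ℕ) : ContDiffOn ℝ ∞ (d1^[j] f) Ω := by
  induction j with
  | zero => exact hf
  | succ j ih => rw [iterate_succ_apply']; exact contDiffOn_d1 hΩ ih

lemma hasFDerivAt_of_smooth {Ω : Set (ℝ × ℝ)} (hΩ : IsOpen Ω) {f : ℝ × ℝ → ℝ}
    (hf : ContDiffOn ℝ ∞ f Ω) {p : ℝ × ℝ} (hp : p ∈ Ω) : HasFDerivAt f (fderiv ℝ f p) p :=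
  ((hf.contDiffAt (hΩ.mem_nhds hp)).differentiableAt (by simp)).hasFDerivAt

lemma hasDerivAt_comp_pair {Ω : Set (ℝ × ℝ)} (hΩ : IsOpen Ω) {f : ℝ × ℝ → ℝ}
    (hf : ContDiffOn ℝ ∞ f Ω) {x y : ℝ → ℝ} {x' y' t : ℝ} (hx : HasDerivAt x x' t)
    (hy : HasDerivAt y y' t) (hp : (x t, y t) ∈ Ω) :
    HasDerivAt (fun s => f (x s, y s)) (d1 f (x t, y t) * x' + d2 f (x t, y t) * y') t := by
  have h := (hasFDerivAt_of_smooth hΩ hf hp).comp_hasDerivAt t (hx.prodMk hy)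
  refine h.congr_deriv ?_
  have : ((x', y') : ℝ × ℝ) = x' • (1, 0) + y' • (0, 1) := by ext <;> simp
  rw [this, map_add, map_smul, map_smul]
  simp [d1, d2, mul_comm]

lemma hasDerivAt_fst {Ω : Set (ℝ × ℝ)} (hΩ : IsOpen Ω) {f : ℝ × ℝ → ℝ}
    (hf : ContDiffOn ℝ ∞ f Ω) {p : ℝ × ℝ} (hp : p ∈ Ω) :
    HasDerivAt (fun s => f (s, p.2)) (d1 f p) p.1 := by
  simpa using hasDerivAt_comp_pair hΩ hf (hasDerivAt_id p.1) (hasDerivAt_const p.1 p.2) hp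

lemma hasDerivAt_snd {Ω : Set (ℝ × ℝ)} (hΩ : IsOpen Ω) {f : ℝ × ℝ → ℝ}
    (hf : ContDiffOn ℝ ∞ f Ω) {p : ℝ × ℝ} (hp : p ∈ Ω) :
    HasDerivAt (fun s => f (p.1, s)) (d2 f p) p.2 := by
  simpa using hasDerivAt_comp_pair hΩ hf (hasDerivAt_const p.2 p.1) (hasDerivAt_id p.2) hp

lemma d1_d2_comm {Ω : Set (ℝ × ℝ)} (hΩ : IsOpen Ω) {f : ℝ × ℝ → ℝ}
    (hf : ContDiffOn ℝ ∞ f Ω) {p : ℝ × ℝ} (hp : p ∈ Ω) : d1 (d2 f) p = d2 (d1 f) p := by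
  have hs : IsSymmSndFDerivAt ℝ f p :=
    (hf.contDiffAt (hΩ.mem_nhds hp)).isSymmSndFDerivAt (by
      rw [minSmoothness_of_isRCLikeNormedField]
      exact WithTop.coe_le_coe.2 (le_top : (2 : ℕ∞) ≤ ⊤))
  have hd : DifferentiableAt ℝ (fderiv ℝ f) p :=
    ((hf.fderiv_of_isOpen hΩ (m := ∞) (by simp)).contDiffAt (hΩ.mem_nhds hp)).differentiableAt
      (by simp)
  have key : ∀ e e' : ℝ × ℝ,
      fderiv ℝ (fun q => fderiv ℝ f q e) p e' = fderiv ℝ (fderiv ℝ f) p e' e := by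
    intro e e'
    have := hd.hasFDerivAt.clm_apply (hasFDerivAt_const e p)
    rw [this.fderiv]
    simp
  change fderiv ℝ (fun q => fderiv ℝ f q (0, 1)) p (1, 0)
    = fderiv ℝ (fun q => fderiv ℝ f q (1, 0)) p (0, 1)
  rw [key, key]
  exact hs _ _

lemma d1_eq_of_hasDerivAt {Ω : Set (ℝ × ℝ)} (hΩ : IsOpen Ω) {f g : ℝ × ℝ → ℝ}
    (hf : ContDiffOn ℝ ∞ f Ω) (hfg : EqOn f g Ω) {p : ℝ × ℝ} (hp : p ∈ Ω) {g' : ℝ}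
    (hg : HasDerivAt (fun s => g (s, p.2)) g' p.1) : d1 f p = g' := by
  refine (hasDerivAt_fst hΩ hf hp).unique (hg.congr_of_eventuallyEq ?_)
  have hc : ContinuousAt (fun s : ℝ => (s, p.2)) p.1 := by fun_prop
  filter_upwards [hc.preimage_mem_nhds (hΩ.mem_nhds hp)] with s hs using hfg hs

lemma d2_eq_of_hasDerivAt {Ω : Set (ℝ × ℝ)} (hΩ : IsOpen Ω) {f g : ℝ × ℝ → ℝ}
    (hf : ContDiffOn ℝ ∞ f Ω) (hfg : EqOn f g Ω) {p : ℝ × ℝ} (hp : p ∈ Ω) {g' : ℝ}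
    (hg : HasDerivAt (fun s => g (p.1, s)) g' p.2) : d2 f p = g' := by
  refine (hasDerivAt_snd hΩ hf hp).unique (hg.congr_of_eventuallyEq ?_)
  have hc : ContinuousAt (fun s : ℝ => (p.1, s)) p.2 := by fun_prop
  filter_upwards [hc.preimage_mem_nhds (hΩ.mem_nhds hp)] with s hs using hfg hs

/-- Comparison form of the mean value inequality: `|f'| ≤ g'` gives
`|f b - f a| ≤ g b - g a`. -/
lemma abs_sub_le_of_abs_deriv_le {f g f' g' : ℝ → ℝ} {a b : ℝ} (hab : a ≤ b)
    (hf : ∀ x ∈ Icc a b, HasDerivAt f (f' x) x) (hg : ∀ x ∈ Icc a b, HasDerivAt g (g' x) x)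
    (hb : ∀ x ∈ Icc a b, |f' x| ≤ g' x) : |f b - f a| ≤ g b - g a := by
  have mono : ∀ h h' : ℝ → ℝ, (∀ x ∈ Icc a b, HasDerivAt h (h' x) x) →
      (∀ x ∈ Icc a b, 0 ≤ h' x) → h a ≤ h b := by
    intro h h' hh hp
    refine monotoneOn_of_deriv_nonneg (convex_Icc a b)
      (fun x hx => (hh x hx).continuousAt.continuousWithinAt)
      (fun x hx => (hh x (interior_subset hx)).differentiableAt.differentiableWithinAt)
      (fun x hx => ?_) (left_mem_Icc.2 hab) (right_mem_Icc.2 hab) hab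
    rw [(hh x (interior_subset hx)).deriv]
    exact hp x (interior_subset hx)
  have h1 := mono (fun x => g x - f x) (fun x => g' x - f' x)
    (fun x hx => (hg x hx).sub (hf x hx)) (fun x hx => by linarith [(abs_le.1 (hb x hx)).2])
  have h2 := mono (fun x => g x + f x) (fun x => g' x + f' x)
    (fun x hx => (hg x hx).add (hf x hx)) (fun x hx => by linarith [(abs_le.1 (hb x hx)).1])
  rw [abs_le]
  constructor <;> linarith

/-! ### Symbol classes at the origin -/

/-- `Symb B k μ f`: on `(0, B)` the function `f` is `k` times differentiable, and its `i`-th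
derivative is `O(s ^ (μ - i))` for every `i ≤ k`. The interval is open so that derivatives on it are
two-sided and hence unique. -/
def Symb (B : ℝ) : ℕ → ℝ → (ℝ → ℝ) → Prop
  | 0, μ, f => ∃ C, ∀ s ∈ Ioo 0 B, |f s| ≤ C * s ^ μ
  | k + 1, μ, f => (∃ C, ∀ s ∈ Ioo 0 B, |f s| ≤ C * s ^ μ) ∧
      ∃ g, (∀ s ∈ Ioo 0 B, HasDerivAt f (g s) s) ∧ Symb B k (μ - 1) g

namespace Symb

variable {B : ℝ} {k : ℕ} {μ ν : ℝ} {f g : ℝ → ℝ}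

lemma bound (h : Symb B k μ f) : ∃ C, ∀ s ∈ Ioo 0 B, |f s| ≤ C * s ^ μ := by
  cases k with
  | zero => exact h
  | succ k => exact h.1

lemma congr (h : Symb B k μ f) (hfg : EqOn g f (Ioo 0 B)) : Symb B k μ g := by
  cases k with
  | zero => obtain ⟨C, hC⟩ := h; exact ⟨C, fun s hs => by rw [hfg hs]; exact hC s hs⟩
  | succ k =>
    obtain ⟨⟨C, hC⟩, f', hf', h'⟩ := h
    exact ⟨⟨C, fun s hs => by rw [hfg hs]; exact hC s hs⟩, f', fun s hs =>
      (hf' s hs).congr_of_eventuallyEq (hfg.eventuallyEq_of_mem (isOpen_Ioo.mem_nhds hs)), h'⟩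

lemma deriv (h : Symb B (k + 1) μ f) (hg : ∀ s ∈ Ioo 0 B, HasDerivAt f (g s) s) :
    Symb B k (μ - 1) g := by
  obtain ⟨_, f', hf', h'⟩ := h
  exact h'.congr fun s hs => (hg s hs).unique (hf' s hs)

lemma of_succ (h : Symb B (k + 1) μ f) : Symb B k μ f := by
  induction k generalizing μ f with
  | zero => exact h.1
  | succ k ih => obtain ⟨hb, f', hf', h'⟩ := h; exact ⟨hb, f', hf', ih h'⟩

lemma mono (h : Symb B k μ f) (hν : ν ≤ μ) : Symb B k ν f := by
  have aux : ∀ {μ ν : ℝ} {f : ℝ → ℝ}, ν ≤ μ → (∃ C, ∀ s ∈ Ioo 0 B, |f s| ≤ C * s ^ μ) →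
      ∃ C, ∀ s ∈ Ioo 0 B, |f s| ≤ C * s ^ ν := by
    rintro μ ν f hν ⟨C, hC⟩
    refine ⟨|C| * B ^ (μ - ν), fun s hs => (hC s hs).trans ?_⟩
    have h1 : s ^ μ = s ^ (μ - ν) * s ^ ν := by rw [← Real.rpow_add hs.1]; simp
    have h2 : s ^ (μ - ν) ≤ B ^ (μ - ν) := by
      apply Real.rpow_le_rpow hs.1.le hs.2.le; linarith
    have h3 : 0 ≤ s ^ ν := (Real.rpow_pos_of_pos hs.1 _).le
    have h4 : 0 ≤ s ^ (μ - ν) := (Real.rpow_pos_of_pos hs.1 _).le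
    rw [h1, mul_assoc]
    have := le_abs_self C
    gcongr
  induction k generalizing μ ν f with
  | zero => exact aux hν h
  | succ k ih =>
    obtain ⟨hb, f', hf', h'⟩ := h
    exact ⟨aux hν hb, f', hf', ih h' (by linarith)⟩

lemma add (hf : Symb B k μ f) (hg : Symb B k μ g) : Symb B k μ (fun s => f s + g s) := by
  have aux : ∀ {μ : ℝ} {f g : ℝ → ℝ}, (∃ C, ∀ s ∈ Ioo 0 B, |f s| ≤ C * s ^ μ) →
      (∃ C, ∀ s ∈ Ioo 0 B, |g s| ≤ C * s ^ μ) →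
      ∃ C, ∀ s ∈ Ioo 0 B, |f s + g s| ≤ C * s ^ μ := by
    rintro μ f g ⟨C, hC⟩ ⟨D, hD⟩
    exact ⟨C + D, fun s hs => (abs_add_le _ _).trans (by linarith [hC s hs, hD s hs])⟩
  induction k generalizing μ f g with
  | zero => exact aux hf hg
  | succ k ih =>
    obtain ⟨hb, f', hf', h'⟩ := hf
    obtain ⟨hb2, g', hg', h2'⟩ := hg
    exact ⟨aux hb hb2, _, fun s hs => (hf' s hs).add (hg' s hs), ih h' h2'⟩

lemma mul (hf : Symb B k μ f) (hg : Symb B k ν g) : Symb B k (μ + ν) (fun s => f s * g s) := by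
  have aux : ∀ {μ ν : ℝ} {f g : ℝ → ℝ}, (∃ C, ∀ s ∈ Ioo 0 B, |f s| ≤ C * s ^ μ) →
      (∃ C, ∀ s ∈ Ioo 0 B, |g s| ≤ C * s ^ ν) →
      ∃ C, ∀ s ∈ Ioo 0 B, |f s * g s| ≤ C * s ^ (μ + ν) := by
    rintro μ ν f g ⟨C, hC⟩ ⟨D, hD⟩
    refine ⟨C * D, fun s hs => ?_⟩
    rw [abs_mul, Real.rpow_add hs.1]
    calc |f s| * |g s| ≤ (C * s ^ μ) * (D * s ^ ν) :=
          mul_le_mul (hC s hs) (hD s hs) (abs_nonneg _) ((abs_nonneg _).trans (hC s hs))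
      _ = C * D * (s ^ μ * s ^ ν) := by ring
  induction k generalizing μ ν f g with
  | zero => exact aux hf hg
  | succ k ih =>
    have hf0 := hf.of_succ
    have hg0 := hg.of_succ
    obtain ⟨hb, f', hf', h'⟩ := hf
    obtain ⟨hb2, g', hg', h2'⟩ := hg
    refine ⟨aux hb hb2, _, fun s hs => (hf' s hs).mul (hg' s hs), ?_⟩
    refine add ((ih h' hg0).mono (le_of_eq (by ring))) ((ih hf0 h2').mono (le_of_eq (by ring)))

lemma const (c : ℝ) : Symb B k 0 (fun _ => c) := by
  have key : ∀ k : ℕ, ∀ μ, Symb B k μ (fun _ => (0 : ℝ)) := by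
    intro k
    induction k with
    | zero => exact fun μ => ⟨0, by simp⟩
    | succ k ih => exact fun μ => ⟨⟨0, by simp⟩, _, fun s _ => hasDerivAt_const s 0, ih _⟩
  cases k with
  | zero => exact ⟨|c|, by simp⟩
  | succ k => exact ⟨⟨|c|, by simp⟩, _, fun s _ => hasDerivAt_const s c, key k _⟩

lemma const_mul (c : ℝ) (hf : Symb B k μ f) : Symb B k μ (fun s => c * f s) := by
  simpa using (const c).mul hf

lemma sub (hf : Symb B k μ f) (hg : Symb B k μ g) : Symb B k μ (fun s => f s - g s) :=
  (hf.add (hg.const_mul (-1))).congr fun s _ => by ring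

lemma rpow (k : ℕ) (μ : ℝ) : Symb B k μ (fun s => s ^ μ) := by
  have aux : ∀ μ : ℝ, ∃ C, ∀ s ∈ Ioo 0 B, |s ^ μ| ≤ C * s ^ μ := fun μ =>
    ⟨1, fun s hs => by rw [abs_of_pos (Real.rpow_pos_of_pos hs.1 _), one_mul]⟩
  induction k generalizing μ with
  | zero => exact aux μ
  | succ k ih =>
    exact ⟨aux μ, _, fun s hs => Real.hasDerivAt_rpow_const (Or.inl hs.1.ne'),
      (ih (μ - 1)).const_mul μ⟩

lemma pow (k n : ℕ) : Symb B k 0 (fun s => s ^ n) :=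
  ((rpow k (n : ℝ)).mono (Nat.cast_nonneg n)).congr fun s _ => by simp

/-- Functions smooth up to the left end point of `[0, ∞)`, composed with a smooth `χ`, are symbols
of order `0`. -/
lemma comp {χ χ' : ℝ → ℝ} (hχ : ∀ s, HasDerivAt χ (χ' s) s) (hχ0 : ∀ s, 0 < s → 0 < χ s)
    (hχ' : ∀ k, Symb B k 0 χ') (k : ℕ) {F : ℝ → ℝ} (hF : ContDiffOn ℝ ∞ F (Ici 0)) :
    Symb B k 0 (fun s => F (χ s)) := by
  have hχc : Continuous χ := continuous_iff_continuousAt.2 fun s => (hχ s).continuousAt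
  have aux : ∀ F : ℝ → ℝ, ContDiffOn ℝ ∞ F (Ici 0) →
      ∃ C, ∀ s ∈ Ioo 0 B, |F (χ s)| ≤ C * s ^ (0 : ℝ) := by
    intro F hF
    have hK : IsCompact (χ '' Icc 0 B) := isCompact_Icc.image hχc
    obtain ⟨C, hC⟩ := (hK.inter_right isClosed_Ici).exists_bound_of_continuousOn
      (hF.continuousOn.mono (inter_subset_right (s := χ '' Icc 0 B)))
    refine ⟨C, fun s hs => ?_⟩
    rw [Real.rpow_zero, mul_one]
    exact hC _ ⟨⟨s, Ioo_subset_Icc_self hs, rfl⟩, (hχ0 s hs.1).le⟩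
  induction k generalizing F with
  | zero => exact aux F hF
  | succ k ih =>
    refine ⟨aux F hF, fun s => derivWithin F (Ici 0) (χ s) * χ' s, fun s hs => ?_, ?_⟩
    · have hm : Ici (0 : ℝ) ∈ nhds (χ s) := Ici_mem_nhds (hχ0 s hs.1)
      have h1 : DifferentiableAt ℝ F (χ s) := (hF.contDiffAt hm).differentiableAt (by simp)
      have h2 := h1.hasDerivAt
      rw [← derivWithin_of_mem_nhds hm] at h2
      exact h2.comp s (hχ s)
    · have := (ih (hF.derivWithin (uniqueDiffOn_Ici 0) (m := ∞) (by simp))).mul (hχ' k)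
      exact this.mono (by norm_num)

end Symb

/-! ### A characteristic estimate for `∂ₛ∂_V w = Q(sV) w` -/

/-- The open quadrant `s, V > 0`. -/
def Quad : Set (ℝ × ℝ) := Ioi 0 ×ˢ Ioi 0

lemma isOpen_Quad : IsOpen Quad := isOpen_Ioi.prod isOpen_Ioi

/-- `SrcComb Q W n f`: `f(s, V)` is a finite sum of terms `V ^ i * Q k (s V) * W m (s, V)` with
`m ≤ n`. With `Q k` the `k`-th derivative of the potential and `W m = ∂ₛᵐ w`, the `s`-derivatives of
`Q(sV) w` have this form, and the exact coefficients are irrelevant for estimates. -/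
inductive SrcComb (Q : ℕ → ℝ → ℝ) (W : ℕ → ℝ × ℝ → ℝ) : ℕ → (ℝ × ℝ → ℝ) → Prop
  | term (i k m n : ℕ) (h : m ≤ n) :
      SrcComb Q W n (fun p => p.2 ^ i * Q k (p.1 * p.2) * W m p)
  | add {n : ℕ} {f g : ℝ × ℝ → ℝ} (hf : SrcComb Q W n f) (hg : SrcComb Q W n g) :
      SrcComb Q W n (fun p => f p + g p)

section

variable {w : ℝ × ℝ → ℝ} {Q : ℕ → ℝ → ℝ}

lemma SrcComb.exists_deriv (hw : ContDiffOn ℝ ∞ w Quad)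
    (hQd : ∀ k z, 0 < z → HasDerivAt (Q k) (Q (k + 1) z) z) {n : ℕ} {f : ℝ × ℝ → ℝ}
    (hf : SrcComb Q (fun m => d1^[m] w) n f) :
    ∃ g, SrcComb Q (fun m => d1^[m] w) (n + 1) g ∧
      ∀ p ∈ Quad, HasDerivAt (fun s => f (s, p.2)) (g p) p.1 := by
  induction hf with
  | term i k m n h =>
    refine ⟨_, .add (.term (i + 1) (k + 1) m (n + 1) (by omega))
      (.term i k (m + 1) (n + 1) (by omega)), fun p hp => ?_⟩
    have hW := hasDerivAt_fst isOpen_Quad (contDiffOn_iterate_d1 isOpen_Quad hw m) hp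
    have hQ := (hQd k (p.1 * p.2) (mul_pos hp.1 hp.2)).comp p.1
      ((hasDerivAt_id p.1).mul_const p.2)
    refine ((hQ.const_mul (p.2 ^ i)).mul hW).congr_deriv ?_
    simp only [iterate_succ_apply', comp_apply, id]
    ring
  | add hf hg ihf ihg =>
    obtain ⟨f', hf', hfd⟩ := ihf
    obtain ⟨g', hg', hgd⟩ := ihg
    exact ⟨_, .add hf' hg', fun p hp => (hfd p hp).add (hgd p hp)⟩

/-- Commuting the equation with `∂ₛʲ`. -/
lemma exists_source (hw : ContDiffOn ℝ ∞ w Quad)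
    (hQd : ∀ k z, 0 < z → HasDerivAt (Q k) (Q (k + 1) z) z)
    (hpde : ∀ p ∈ Quad, d2 (d1 w) p = Q 0 (p.1 * p.2) * w p) (j : ℕ) :
    ∃ g, SrcComb Q (fun m => d1^[m] w) j g ∧ ∀ p ∈ Quad, d2 (d1^[j + 1] w) p = g p := by
  induction j with
  | zero => exact ⟨_, .term 0 0 0 0 le_rfl, fun p hp => by simpa using hpde p hp⟩
  | succ j ih =>
    obtain ⟨g, hg, hgd⟩ := ih
    obtain ⟨g', hg', hgd'⟩ := hg.exists_deriv hw hQd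
    refine ⟨g', hg', fun p hp => ?_⟩
    have hW := contDiffOn_iterate_d1 isOpen_Quad hw (j + 1)
    rw [iterate_succ_apply', ← d1_d2_comm isOpen_Quad hW hp]
    exact d1_eq_of_hasDerivAt isOpen_Quad (contDiffOn_d2 isOpen_Quad hW) hgd hp (hgd' p hp)

lemma SrcComb.symb_diag {B κ : ℝ} (hQs : ∀ k m, Symb B m 0 (fun s => Q k (s * s))) {n : ℕ}
    {W : ℕ → ℝ × ℝ → ℝ} (hW : ∀ m ≤ n, ∀ k, Symb B k (κ - m) (fun s => W m (s, s)))
    {f : ℝ × ℝ → ℝ} (hf : SrcComb Q W n f) (k : ℕ) : Symb B k (κ - n) (fun s => f (s, s)) := by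
  induction hf with
  | term i q m n h =>
    have := (((Symb.pow k i).mul (hQs q k)).mul (hW m h k))
    refine this.mono ?_
    have : (m : ℝ) ≤ n := by exact_mod_cast h
    linarith
  | add hf hg ihf ihg => exact (ihf hW).add (ihg hW)

/-- On the initial line `V = s`, the derivative `∂ₛʲ w` is a symbol of order `κ - j`: this follows
from `d/ds [(∂ₛʲ w)(s, s)] = (∂ₛʲ⁺¹ w)(s, s) + (∂_V ∂ₛʲ w)(s, s)`, where the last term is of lower
order by the equation. -/
lemma symb_diag {B κ : ℝ} (hw : ContDiffOn ℝ ∞ w Quad)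
    (hQd : ∀ k z, 0 < z → HasDerivAt (Q k) (Q (k + 1) z) z)
    (hQs : ∀ k m, Symb B m 0 (fun s => Q k (s * s)))
    (hpde : ∀ p ∈ Quad, d2 (d1 w) p = Q 0 (p.1 * p.2) * w p)
    (h0 : ∀ m, Symb B m κ (fun s => w (s, s))) (h1 : ∀ m, Symb B m (κ - 1) (fun s => d1 w (s, s)))
    (j k : ℕ) : Symb B k (κ - j) (fun s => d1^[j] w (s, s)) := by
  induction j using Nat.strong_induction_on generalizing k with
  | _ j ih =>
    match j, ih with
    | 0, _ => simpa using h0 k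
    | 1, _ => simpa using h1 k
    | j + 2, ih =>
      obtain ⟨g, hg, hgd⟩ := exists_source hw hQd hpde j
      have hsrc : Symb B k (κ - j) (fun s => g (s, s)) :=
        hg.symb_diag hQs (fun m hm k => ih m (by omega) k) k
      have hA : ∀ s ∈ Ioo 0 B, HasDerivAt (fun s => d1^[j + 1] w (s, s))
          (d1^[j + 2] w (s, s) + g (s, s)) s := by
        intro s hs
        have hp : ((s, s) : ℝ × ℝ) ∈ Quad := ⟨hs.1, hs.1⟩
        have := hasDerivAt_comp_pair isOpen_Quad (contDiffOn_iterate_d1 isOpen_Quad hw (j + 1))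
          (hasDerivAt_id s) (hasDerivAt_id s) hp
        refine this.congr_deriv ?_
        simp only [id, mul_one, hgd _ hp]
        rw [iterate_succ_apply' d1 (j + 1)]
      have h2 := (ih (j + 1) (by omega) (k + 1)).deriv hA
      have e : κ - ((j + 1 : ℕ) : ℝ) - 1 = κ - ((j + 2 : ℕ) : ℝ) := by push_cast; ring
      rw [e] at h2
      refine (h2.sub (hsrc.mono ?_)).congr fun s _ => by ring
      push_cast
      linarith

/-- Boundedness of `w` in the triangle `0 < s ≤ V ≤ B`. The maximum of `exp(-ΛV)|w|` over the
truncated triangle `η ≤ s ≤ V ≤ B` is bounded independently of `η` by integrating the equation along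
both families of characteristics; a large `Λ` absorbs the potential. -/
lemma bounded_of_wave (hw : ContDiffOn ℝ ∞ w Quad) (hQb : ∀ k Z, ∃ C, ∀ z ∈ Ioc 0 Z, |Q k z| ≤ C)
    (hpde : ∀ p ∈ Quad, d2 (d1 w) p = Q 0 (p.1 * p.2) * w p) {B α C0 C1 : ℝ} (hα : 0 < α)
    (h0 : ∀ s ∈ Ioc 0 B, |w (s, s)| ≤ C0)
    (h1 : ∀ s ∈ Ioc 0 B, |d1 w (s, s)| ≤ C1 * s ^ (α - 1)) :
    ∃ C, ∀ s V, 0 < s → s ≤ V → V ≤ B → |w (s, V)| ≤ C := by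
  obtain ⟨K, hK⟩ := hQb 0 (B * B)
  set Λ := 2 * |K| * |B| + 1 with hΛ
  have hΛ0 : 0 < Λ := by positivity
  set C2 := |C0| + |C1| / α * |B| ^ α with hC2
  refine ⟨Real.exp (Λ * |B|) * (2 * C2), fun η V₀ hη hηV hV₀ => ?_⟩
  have hB0 : 0 < B := by linarith
  have hBa : |B| = B := abs_of_pos hB0
  rw [hBa] at hΛ hC2 ⊢
  let T : Set (ℝ × ℝ) := (Icc η B ×ˢ Icc η B) ∩ {p | p.1 ≤ p.2}
  have hTc : IsCompact T :=
    (isCompact_Icc.prod isCompact_Icc).inter_right (isClosed_le continuous_fst continuous_snd)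
  have hTQ : T ⊆ Quad := fun p hp => ⟨hη.trans_le hp.1.1.1, hη.trans_le hp.1.2.1⟩
  have hmem : ((η, V₀) : ℝ × ℝ) ∈ T :=
    ⟨⟨⟨le_rfl, by simpa using hηV.trans hV₀⟩, ⟨hηV, hV₀⟩⟩, hηV⟩
  have hcont : ContinuousOn (fun p : ℝ × ℝ => |w p| * Real.exp (-(Λ * p.2))) T :=
    ((hw.continuousOn.mono hTQ).abs).mul (by fun_prop)
  obtain ⟨⟨s₁, V₁⟩, hm, hmax⟩ := hTc.exists_isMaxOn ⟨_, hmem⟩ hcont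
  set N := |w (s₁, V₁)| * Real.exp (-(Λ * V₁)) with hN
  have hN0 : 0 ≤ N := by positivity
  have hwN : ∀ p ∈ T, |w p| ≤ N * Real.exp (Λ * p.2) := by
    intro p hp
    have h : |w p| * Real.exp (-(Λ * p.2)) ≤ N := hmax hp
    calc |w p| = |w p| * Real.exp (-(Λ * p.2)) * Real.exp (Λ * p.2) := by
          rw [mul_assoc, ← Real.exp_add]; simp
      _ ≤ _ := by gcongr
  obtain ⟨⟨⟨hs1, hs1B⟩, hV1, hV1B⟩, hsV⟩ := hm
  simp only [mem_ofPred_eq] at hs1 hs1B hV1 hV1B hsV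
  -- integration in `V` from the initial line
  have hd1 : ∀ s ∈ Icc s₁ V₁, |d1 w (s, V₁)| ≤
      |C1| * s ^ (α - 1) + |K| * N / Λ * Real.exp (Λ * V₁) := by
    intro s hs
    have hs0 : 0 < s := by linarith [hs.1]
    have h := abs_sub_le_of_abs_deriv_le (f := fun V => d1 w (s, V))
      (g := fun V => |K| * N / Λ * Real.exp (Λ * V)) (f' := fun V => d2 (d1 w) (s, V))
      (g' := fun V => |K| * N * Real.exp (Λ * V)) hs.2
      (fun V hV => hasDerivAt_snd isOpen_Quad (contDiffOn_d1 isOpen_Quad hw)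
        (p := (s, V)) ⟨hs0, by simpa using hs0.trans_le hV.1⟩)
      (fun V hV => by
        have := (((hasDerivAt_id V).const_mul Λ).exp).const_mul (|K| * N / Λ)
        refine this.congr_deriv ?_
        simp only [id]
        field_simp)
      (fun V hV => by
        have hV0 : 0 < V := hs0.trans_le hV.1
        rw [hpde (s, V) ⟨hs0, hV0⟩, abs_mul, mul_assoc |K|]
        have hsB : s ≤ B := by linarith [hs.2]
        have hVB : V ≤ B := by linarith [hV.2]
        refine mul_le_mul ((hK _ ⟨mul_pos hs0 hV0, ?_⟩).trans (le_abs_self K)) (hwN (s, V) ?_)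
          (abs_nonneg _) (abs_nonneg _)
        · exact mul_le_mul hsB hVB hV0.le hB0.le
        · exact ⟨⟨⟨by simpa using hs1.trans hs.1, hsB⟩,
            ⟨by simpa using hs1.trans (hs.1.trans hV.1), hVB⟩⟩, hV.1⟩)
    have h2 := h1 s ⟨hs0, by linarith [hs.2]⟩
    have h3 : C1 * s ^ (α - 1) ≤ |C1| * s ^ (α - 1) :=
      mul_le_mul_of_nonneg_right (le_abs_self _) (Real.rpow_pos_of_pos hs0 _).le
    have h4 : 0 ≤ |K| * N / Λ * Real.exp (Λ * s) := by positivity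
    have h5 := abs_sub_abs_le_abs_sub (d1 w (s, V₁)) (d1 w (s, s))
    linarith
  -- integration in `s` from the initial line
  have h := abs_sub_le_of_abs_deriv_le (f := fun s => w (s, V₁))
      (g := fun s => |C1| / α * s ^ α + |K| * N / Λ * Real.exp (Λ * V₁) * s)
      (f' := fun s => d1 w (s, V₁))
      (g' := fun s => |C1| * s ^ (α - 1) + |K| * N / Λ * Real.exp (Λ * V₁)) hsV
      (fun s hs => hasDerivAt_fst isOpen_Quad hw (p := (s, V₁))
        ⟨by simpa using (hη.trans_le hs1).trans_le hs.1, hη.trans_le hV1⟩)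
      (fun s hs => by
        have hs0 : 0 < s := by linarith [hs.1]
        have := ((Real.hasDerivAt_rpow_const (p := α) (Or.inl hs0.ne')).const_mul
          (|C1| / α)).add ((hasDerivAt_id s).const_mul (|K| * N / Λ * Real.exp (Λ * V₁)))
        refine this.congr_deriv ?_
        field_simp) hd1
  have hs10 : 0 < s₁ := by linarith
  have hV10 : 0 < V₁ := by linarith
  have a1 : |w (s₁, V₁)| ≤ |w (V₁, V₁)| + |w (V₁, V₁) - w (s₁, V₁)| := by
    have := abs_sub_abs_le_abs_sub (w (s₁, V₁)) (w (V₁, V₁))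
    rw [abs_sub_comm] at this
    linarith
  have a2 : |C1| / α * V₁ ^ α ≤ |C1| / α * B ^ α := by gcongr
  have a3 : 0 ≤ |C1| / α * s₁ ^ α := by positivity
  have a4 : |K| * N / Λ * Real.exp (Λ * V₁) * (V₁ - s₁) ≤ N / 2 * Real.exp (Λ * V₁) := by
    have : |K| * N / Λ * (V₁ - s₁) ≤ N / 2 := by
      rw [div_mul_eq_mul_div, div_le_iff₀ hΛ0, hΛ]
      have : |K| * N * (V₁ - s₁) ≤ |K| * N * B := by gcongr; linarith
      nlinarith
    calc _ = |K| * N / Λ * (V₁ - s₁) * Real.exp (Λ * V₁) := by ring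
      _ ≤ _ := by gcongr
  have a5 : |w (V₁, V₁)| ≤ |C0| := (h0 V₁ ⟨hV10, hV1B⟩).trans (le_abs_self _)
  have a6 : |w (s₁, V₁)| ≤ C2 + N / 2 * Real.exp (Λ * V₁) := by
    rw [hC2]
    nlinarith
  have hC20 : 0 ≤ C2 := by rw [hC2]; positivity
  have a7 : N ≤ C2 + N / 2 := by
    have e1 : Real.exp (Λ * V₁) * Real.exp (-(Λ * V₁)) = 1 := by rw [← Real.exp_add]; simp
    have e2 : Real.exp (-(Λ * V₁)) ≤ 1 := by
      rw [Real.exp_le_one_iff]; nlinarith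
    calc N ≤ (C2 + N / 2 * Real.exp (Λ * V₁)) * Real.exp (-(Λ * V₁)) := by rw [hN]; gcongr
      _ = C2 * Real.exp (-(Λ * V₁)) + N / 2 * (Real.exp (Λ * V₁) * Real.exp (-(Λ * V₁))) := by ring
      _ ≤ C2 * 1 + N / 2 * 1 := by rw [e1]; gcongr
      _ = _ := by ring
  have a8 := hwN _ hmem
  calc |w (η, V₀)| ≤ N * Real.exp (Λ * V₀) := a8
    _ ≤ (2 * C2) * Real.exp (Λ * B) := by
        gcongr
        linarith
    _ = _ := by ring

lemma SrcComb.bound (hQb : ∀ k Z, ∃ C, ∀ z ∈ Ioc 0 Z, |Q k z| ≤ C) {B β : ℝ} {n : ℕ}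
    {W : ℕ → ℝ × ℝ → ℝ} (hW : ∀ m ≤ n, ∃ C, ∀ s V, 0 < s → s ≤ V → V ≤ B →
      |W m (s, V)| ≤ C * s ^ β) {f : ℝ × ℝ → ℝ} (hf : SrcComb Q W n f) :
    ∃ C, ∀ s V, 0 < s → s ≤ V → V ≤ B → |f (s, V)| ≤ C * s ^ β := by
  induction hf with
  | term i k m n h =>
    obtain ⟨C, hC⟩ := hW m h
    obtain ⟨K, hK⟩ := hQb k (B * B)
    refine ⟨B ^ i * |K| * C, fun s V hs hsV hVB => ?_⟩
    have hV : 0 < V := hs.trans_le hsV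
    have hB : 0 < B := hV.trans_le hVB
    simp only [abs_mul, abs_pow, abs_of_pos hV]
    have h1 := (hK (s * V) ⟨mul_pos hs hV, mul_le_mul (hsV.trans hVB) hVB hV.le hB.le⟩).trans
      (le_abs_self K)
    calc V ^ i * |Q k (s * V)| * |W m (s, V)| ≤ B ^ i * |K| * (C * s ^ β) := by
          gcongr
          exact hC s V hs hsV hVB
      _ = _ := by ring
  | add hf hg ihf ihg =>
    obtain ⟨C, hC⟩ := ihf hW
    obtain ⟨D, hD⟩ := ihg hW
    exact ⟨C + D, fun s V h1 h2 h3 => (abs_add_le _ _).trans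
      (by linarith [hC s V h1 h2 h3, hD s V h1 h2 h3])⟩

/-- Transverse derivatives up to order `l + 1` are `O(s ^ (α - 1))` up to the horizon `s = 0`: the
source of the equation for `∂ₛʲ⁺¹ w` only involves lower derivatives. -/
lemma wave_bound {B B' κ α : ℝ} {l : ℕ} (hw : ContDiffOn ℝ ∞ w Quad)
    (hQd : ∀ k z, 0 < z → HasDerivAt (Q k) (Q (k + 1) z) z)
    (hQb : ∀ k Z, ∃ C, ∀ z ∈ Ioc 0 Z, |Q k z| ≤ C)
    (hQs : ∀ k m, Symb B m 0 (fun s => Q k (s * s)))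
    (hpde : ∀ p ∈ Quad, d2 (d1 w) p = Q 0 (p.1 * p.2) * w p)
    (h0 : ∀ m, Symb B m κ (fun s => w (s, s))) (h1 : ∀ m, Symb B m (κ - 1) (fun s => d1 w (s, s)))
    (hB : B' < B) (hκ : κ = l + α) (hα : α ∈ Ioc (0 : ℝ) 1) (j : ℕ) (hj : j ≤ l + 1) :
    ∃ C, ∀ s V, 0 < s → s ≤ V → V ≤ B' → |d1^[j] w (s, V)| ≤ C * s ^ (α - 1) := by
  have hl : (0 : ℝ) ≤ l := Nat.cast_nonneg l
  induction j using Nat.strong_induction_on with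
  | _ j ih =>
    match j, ih with
    | 0, _ =>
      obtain ⟨C0, hC0⟩ := ((h0 0).mono (ν := 0) (by linarith [hα.1])).bound
      obtain ⟨C1, hC1⟩ := ((h1 0).mono (ν := α - 1) (by linarith)).bound
      obtain ⟨C, hC⟩ := bounded_of_wave hw hQb hpde (B := B') hα.1
        (fun s hs => by simpa using hC0 s ⟨hs.1, hs.2.trans_lt hB⟩)
        (fun s hs => hC1 s ⟨hs.1, hs.2.trans_lt hB⟩)
      refine ⟨|C| * B' ^ (1 - α), fun s V hs hsV hV => (hC s V hs hsV hV).trans ?_⟩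
      have e : s ^ (1 - α) * s ^ (α - 1) = 1 := by rw [← Real.rpow_add hs]; simp
      have : s ^ (1 - α) ≤ B' ^ (1 - α) :=
        Real.rpow_le_rpow hs.le (hsV.trans hV) (by linarith [hα.2])
      have p1 := (Real.rpow_pos_of_pos hs (α - 1)).le
      calc C ≤ |C| * (s ^ (1 - α) * s ^ (α - 1)) := by rw [e, mul_one]; exact le_abs_self C
        _ ≤ |C| * (B' ^ (1 - α) * s ^ (α - 1)) := by gcongr
        _ = _ := by ring
    | j + 1, ih =>
      obtain ⟨g, hg, hgd⟩ := exists_source hw hQd hpde j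
      obtain ⟨D, hD⟩ := hg.bound hQb (β := α - 1) (B := B')
        (fun m hm => ih m (by omega) (by omega))
      have hjl : ((j + 1 : ℕ) : ℝ) ≤ l + 1 := by exact_mod_cast hj
      obtain ⟨A, hA⟩ := ((symb_diag hw hQd hQs hpde h0 h1 (j + 1) 0).mono (ν := α - 1)
        (by linarith)).bound
      refine ⟨A + |D| * B', fun s V hs hsV hV => ?_⟩
      have hp := (Real.rpow_pos_of_pos hs (α - 1)).le
      have h := abs_sub_le_of_abs_deriv_le (f := fun V => d1^[j + 1] w (s, V))
        (g := fun V => |D| * s ^ (α - 1) * V) (f' := fun V => g (s, V))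
        (g' := fun V => |D| * s ^ (α - 1)) hsV
        (fun x hx => by
          have hq : ((s, x) : ℝ × ℝ) ∈ Quad := ⟨hs, hs.trans_le hx.1⟩
          rw [← hgd _ hq]
          exact hasDerivAt_snd isOpen_Quad (contDiffOn_iterate_d1 isOpen_Quad hw _) hq)
        (fun x hx => by simpa using (hasDerivAt_id x).const_mul (|D| * s ^ (α - 1)))
        (fun x hx => (hD s x hs hx.1 (hx.2.trans hV)).trans
          (mul_le_mul_of_nonneg_right (le_abs_self D) hp))
      have h2 := hA s ⟨hs, (hsV.trans hV).trans_lt hB⟩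
      have h3 := abs_sub_abs_le_abs_sub (d1^[j + 1] w (s, V)) (d1^[j + 1] w (s, s))
      have h4 : |D| * s ^ (α - 1) * (V - s) ≤ |D| * s ^ (α - 1) * B' := by
        gcongr; linarith
      nlinarith

end

/-! ### Kruskal coordinates -/

/-- `θ(c) = c exp(1/2 + c²/(4M))`; in terms of `c = √(r - 2M)` this is `exp(r_* / (4M))`. -/
noncomputable def theta (M c : ℝ) : ℝ := c * Real.exp (1 / 2 + c ^ 2 / (4 * M))

/-- The inverse of `θ`: on the initial surface `V = s` it gives `√(r - 2M)` as a function of `s`. -/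
noncomputable def chi (M : ℝ) : ℝ → ℝ := invFun (theta M)

/-- `r - 2M` as a function of `z = s V = exp(r_* / (2M))`, for `z > 0`. -/
noncomputable def rad (M z : ℝ) : ℝ := chi M (Real.sqrt z) ^ 2

/-- The derivative of `rad` is `radDeriv ∘ rad`. -/
noncomputable def radDeriv (M y : ℝ) : ℝ := Real.exp (-(1 + y / (2 * M))) * (2 * M / (2 * M + y))

section

variable {M : ℝ}

lemma hasDerivAt_theta (hM : 0 < M) (c : ℝ) : HasDerivAt (theta M)
    (Real.exp (1 / 2 + c ^ 2 / (4 * M)) * (1 + c ^ 2 / (2 * M))) c := by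
  have := (hasDerivAt_id c).mul ((((hasDerivAt_pow 2 c).div_const (4 * M)).const_add (1 / 2)).exp)
  refine this.congr_deriv ?_
  simp only [id]
  field_simp
  push_cast
  ring

lemma theta_deriv_pos (hM : 0 < M) (c : ℝ) :
    0 < Real.exp (1 / 2 + c ^ 2 / (4 * M)) * (1 + c ^ 2 / (2 * M)) := by positivity

lemma contDiff_theta : ContDiff ℝ ∞ (theta M) := by
  unfold theta; fun_prop

lemma strictMono_theta (hM : 0 < M) : StrictMono (theta M) :=
  strictMono_of_deriv_pos fun c => by
    rw [(hasDerivAt_theta hM c).deriv]; exact theta_deriv_pos hM c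

lemma surjective_theta (hM : 0 < M) : Surjective (theta M) := by
  have h1 : ∀ c : ℝ, 1 ≤ Real.exp (1 / 2 + c ^ 2 / (4 * M)) := fun c =>
    Real.one_le_exp (by positivity)
  refine contDiff_theta.continuous.surjective ?_ ?_
  · refine tendsto_atTop_mono' _ ?_ tendsto_id
    filter_upwards [eventually_ge_atTop 0] with c hc
    simpa [theta] using mul_le_mul_of_nonneg_left (h1 c) hc
  · refine tendsto_atBot_mono' _ ?_ tendsto_id
    filter_upwards [eventually_le_atBot 0] with c hc
    simpa [theta] using mul_le_mul_of_nonpos_left (h1 c) hc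

lemma chi_theta (hM : 0 < M) (c : ℝ) : chi M (theta M c) = c :=
  leftInverse_invFun (strictMono_theta hM).injective c

lemma theta_chi (hM : 0 < M) (s : ℝ) : theta M (chi M s) = s :=
  rightInverse_invFun (surjective_theta hM) s

lemma contDiff_chi (hM : 0 < M) : ContDiff ℝ ∞ (chi M) := by
  let e : ℝ ≃ₜ ℝ :=
    ((strictMono_theta hM).orderIsoOfSurjective _ (surjective_theta hM)).toHomeomorph
  have he : ⇑e = theta M := rfl
  have h := e.contDiff_symm_deriv (n := ∞) (fun c => (theta_deriv_pos hM c).ne')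
    (fun c => by rw [he]; exact hasDerivAt_theta hM c) (by rw [he]; exact contDiff_theta)
  have hs : chi M = e.symm := funext fun s => (strictMono_theta hM).injective (by
    rw [theta_chi hM, ← he, e.apply_symm_apply])
  rw [hs]
  exact h

lemma hasDerivAt_chi (hM : 0 < M) (s : ℝ) : HasDerivAt (chi M)
    (Real.exp (1 / 2 + chi M s ^ 2 / (4 * M)) * (1 + chi M s ^ 2 / (2 * M)))⁻¹ s :=
  HasDerivAt.of_local_left_inverse (contDiff_chi hM).continuous.continuousAt
    (hasDerivAt_theta hM _) (theta_deriv_pos hM _).ne' (.of_forall fun s => theta_chi hM s)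

lemma chi_pos (hM : 0 < M) {s : ℝ} (hs : 0 < s) : 0 < chi M s := by
  have h0 : theta M 0 = 0 := by simp [theta]
  rw [← (strictMono_theta hM).lt_iff_lt, h0, theta_chi hM]
  exact hs

lemma rad_pos (hM : 0 < M) {z : ℝ} (hz : 0 < z) : 0 < rad M z :=
  pow_pos (chi_pos hM (Real.sqrt_pos.2 hz)) 2

lemma rad_spec (hM : 0 < M) {z : ℝ} (hz : 0 < z) :
    rad M z * Real.exp (1 + rad M z / (2 * M)) = z := by
  have h := theta_chi hM (Real.sqrt z)
  have h2 : theta M (chi M (Real.sqrt z)) ^ 2 = z := by rw [h, Real.sq_sqrt hz.le]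
  rw [theta, mul_pow, ← Real.exp_nat_mul] at h2
  conv_rhs => rw [← h2]
  unfold rad
  congr 2
  field_simp
  push_cast
  ring

lemma hasDerivAt_rad (hM : 0 < M) {z : ℝ} (hz : 0 < z) :
    HasDerivAt (rad M) (radDeriv M (rad M z)) z := by
  have hs := Real.sqrt_pos.2 hz
  have h := (((hasDerivAt_chi hM (Real.sqrt z)).comp z (Real.hasDerivAt_sqrt hz.ne')).pow 2)
  refine h.congr_deriv ?_
  have h1 := theta_chi hM (Real.sqrt z)
  have hc := chi_pos hM hs
  rw [theta] at h1
  simp only [comp_apply, radDeriv, rad]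
  set c := chi M (Real.sqrt z)
  rw [← h1]
  have e : Real.exp (-(1 + c ^ 2 / (2 * M)))
      = (Real.exp (1 / 2 + c ^ 2 / (4 * M)) * Real.exp (1 / 2 + c ^ 2 / (4 * M)))⁻¹ := by
    rw [← Real.exp_add, ← Real.exp_neg]
    congr 1
    field_simp
    ring
  rw [e]
  have hE := Real.exp_pos (1 / 2 + c ^ 2 / (4 * M))
  set E := Real.exp (1 / 2 + c ^ 2 / (4 * M))
  field_simp
  push_cast
  ring

lemma continuous_rad (hM : 0 < M) : Continuous (rad M) :=
  ((contDiff_chi hM).continuous.comp Real.continuous_sqrt).pow 2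

lemma contDiffOn_rad (hM : 0 < M) : ContDiffOn ℝ ∞ (rad M) (Ioi 0) := fun z hz =>
  (((contDiff_chi hM).contDiffAt.comp z (Real.contDiffAt_sqrt (ne_of_gt hz))).pow 2).contDiffWithinAt

lemma Symb.of_contDiff {B : ℝ} {f : ℝ → ℝ} (hf : ContDiff ℝ ∞ f) (k : ℕ) : Symb B k 0 f := by
  have aux : ∀ f : ℝ → ℝ, ContDiff ℝ ∞ f → ∃ C, ∀ s ∈ Ioo 0 B, |f s| ≤ C * s ^ (0 : ℝ) := by
    intro f hf
    obtain ⟨C, hC⟩ := (isCompact_Icc (a := 0) (b := B)).exists_bound_of_continuousOn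
      hf.continuous.continuousOn
    exact ⟨C, fun s hs => by simpa using hC s (Ioo_subset_Icc_self hs)⟩
  induction k generalizing f with
  | zero => exact aux f hf
  | succ k ih =>
    have hd : ContDiff ℝ ∞ (_root_.deriv f) := (contDiff_infty_iff_deriv.1 hf).2
    exact ⟨aux f hf, _, fun s _ => (hf.differentiable (by simp) s).hasDerivAt,
      (ih hd).mono (by norm_num)⟩

lemma Symb.comp_chi (hM : 0 < M) (B : ℝ) (k : ℕ) {F : ℝ → ℝ} (hF : ContDiffOn ℝ ∞ F (Ici 0)) :
    Symb B k 0 (fun s => F (chi M s)) :=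
  Symb.comp (χ' := _root_.deriv (chi M))
    (fun s => ((contDiff_chi hM).differentiable (by simp) s).hasDerivAt)
    (fun _ hs => chi_pos hM hs)
    (fun k => Symb.of_contDiff (contDiff_infty_iff_deriv.1 (contDiff_chi hM)).2 k) k hF

/-- The derivatives `∂_zᵏ` of the potential of the wave equation in Kruskal coordinates, as
functions of `y = r - 2M ≥ 0`. -/
noncomputable def potY (M lam : ℝ) : ℕ → ℝ → ℝ
  | 0, y => 4 * M ^ 2 * Real.exp (-(1 + y / (2 * M))) *
      (lam ^ 2 / (2 * M + y) ^ 3 + 2 * M / (2 * M + y) ^ 4)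
  | k + 1, y => derivWithin (potY M lam k) (Ici 0) y * radDeriv M y

/-- The derivatives of the potential as functions of `z = s V`. -/
noncomputable def pot (M lam : ℝ) (k : ℕ) (z : ℝ) : ℝ := potY M lam k (rad M z)

lemma contDiffOn_potY (hM : 0 < M) (lam : ℝ) (k : ℕ) :
    ContDiffOn ℝ ∞ (potY M lam k) (Ici 0) := by
  have hne : ∀ y ∈ Ici (0 : ℝ), 2 * M + y ≠ 0 := fun y hy => by
    have : (0 : ℝ) ≤ y := hy
    positivity
  have hl : ContDiffOn ℝ ∞ (fun y : ℝ => 2 * M + y) (Ici 0) := by fun_prop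
  have he : ContDiffOn ℝ ∞ (fun y : ℝ => Real.exp (-(1 + y / (2 * M)))) (Ici 0) := by fun_prop
  induction k with
  | zero =>
    change ContDiffOn ℝ ∞ (fun y => 4 * M ^ 2 * Real.exp (-(1 + y / (2 * M))) *
      (lam ^ 2 / (2 * M + y) ^ 3 + 2 * M / (2 * M + y) ^ 4)) (Ici 0)
    exact (contDiffOn_const.mul he).mul
      ((contDiffOn_const.div (hl.pow 3) fun y hy => pow_ne_zero _ (hne y hy)).add
        (contDiffOn_const.div (hl.pow 4) fun y hy => pow_ne_zero _ (hne y hy)))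
  | succ k ih =>
    exact (ih.derivWithin (uniqueDiffOn_Ici 0) (m := ∞) (by simp)).mul
      (he.mul (contDiffOn_const.div hl hne))

lemma hasDerivAt_pot (hM : 0 < M) (lam : ℝ) (k : ℕ) {z : ℝ} (hz : 0 < z) :
    HasDerivAt (pot M lam k) (pot M lam (k + 1) z) z := by
  have hm : Ici (0 : ℝ) ∈ nhds (rad M z) := Ici_mem_nhds (rad_pos hM hz)
  have h2 := (((contDiffOn_potY hM lam k).contDiffAt hm).differentiableAt (by simp)).hasDerivAt
  rw [← derivWithin_of_mem_nhds hm] at h2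
  exact h2.comp z (hasDerivAt_rad hM hz)

lemma pot_bound (hM : 0 < M) (lam : ℝ) (k : ℕ) (Z : ℝ) :
    ∃ C, ∀ z ∈ Ioc 0 Z, |pot M lam k z| ≤ C := by
  have hK : IsCompact (rad M '' Icc 0 Z) := isCompact_Icc.image (continuous_rad hM)
  obtain ⟨C, hC⟩ := (hK.inter_right isClosed_Ici).exists_bound_of_continuousOn
    ((contDiffOn_potY hM lam k).continuousOn.mono (inter_subset_right (s := rad M '' Icc 0 Z)))
  exact ⟨C, fun z hz => hC _ ⟨⟨z, Ioc_subset_Icc_self hz, rfl⟩, (rad_pos hM hz.1).le⟩⟩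

lemma pot_symb (hM : 0 < M) (lam B : ℝ) (k m : ℕ) :
    Symb B m 0 (fun s => pot M lam k (s * s)) := by
  have hF : ContDiffOn ℝ ∞ (fun c => potY M lam k (c ^ 2)) (Ici 0) :=
    (contDiffOn_potY hM lam k).comp (by fun_prop) fun c _ => sq_nonneg c
  refine (Symb.comp_chi hM B m hF).congr fun s hs => ?_
  simp [pot, rad, Real.sqrt_mul_self hs.1.le]

/-! ### The mode equation in Kruskal coordinates -/

/-- The exterior region `ℝ × (2M, ∞)` in the coordinates `(t, r)`. -/
def Exterior (M : ℝ) : Set (ℝ × ℝ) := univ ×ˢ Ioi (2 * M)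

lemma isOpen_Exterior : IsOpen (Exterior M) := isOpen_univ.prod isOpen_Ioi

/-- The function `r u` in the coordinates `(t, r)`. -/
def rmul (u : ℝ → ℝ → ℝ) (p : ℝ × ℝ) : ℝ := p.2 * uncurry u p

/-- The point `(t, r)` with Kruskal coordinates `U = -s` and `V`. -/
noncomputable def fromKruskal (M : ℝ) (p : ℝ × ℝ) : ℝ × ℝ :=
  (2 * M * (Real.log p.2 - Real.log p.1), 2 * M + rad M (p.1 * p.2))

/-- The function `r u` in the Kruskal coordinates `(s, V)`, `s = -U`. -/
noncomputable def kru (M : ℝ) (u : ℝ → ℝ → ℝ) (p : ℝ × ℝ) : ℝ := rmul u (fromKruskal M p)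

lemma fromKruskal_mem (hM : 0 < M) {p : ℝ × ℝ} (hp : p ∈ Quad) : fromKruskal M p ∈ Exterior M := by
  refine ⟨mem_univ _, ?_⟩
  have := rad_pos hM (mul_pos hp.1 hp.2)
  simp only [fromKruskal, mem_Ioi]
  linarith

variable {lam : ℝ} {u : ℝ → ℝ → ℝ}

lemma contDiffOn_rmul (hu : IsModeSolution M lam u) : ContDiffOn ℝ ∞ (rmul u) (Exterior M) :=
  contDiff_snd.contDiffOn.mul hu.1

lemma contDiffOn_kru (hM : 0 < M) (hu : IsModeSolution M lam u) :
    ContDiffOn ℝ ∞ (kru M u) Quad := by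
  refine (contDiffOn_rmul hu).comp (ContDiffOn.prodMk ?_ ?_) fun p hp => fromKruskal_mem hM hp
  · exact contDiffOn_const.mul
      ((contDiff_snd.contDiffOn.log fun p hp => ne_of_gt hp.2).sub
        (contDiff_fst.contDiffOn.log fun p hp => ne_of_gt hp.1))
  · exact contDiffOn_const.add ((contDiffOn_rad hM).comp (by fun_prop)
      fun p hp => mem_Ioi.2 (mul_pos hp.1 hp.2))

lemma d1_rmul (hu : IsModeSolution M lam u) {p : ℝ × ℝ} (hp : p ∈ Exterior M) :
    d1 (rmul u) p = p.2 * pdt u p.1 p.2 := by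
  have h := hasDerivAt_fst isOpen_Exterior hu.1 hp
  refine d1_eq_of_hasDerivAt isOpen_Exterior (contDiffOn_rmul hu) (fun _ _ => rfl) hp ?_
  have e : pdt u p.1 p.2 = d1 (uncurry u) p := h.deriv
  rw [e]
  exact h.const_mul p.2

lemma d2_rmul (hu : IsModeSolution M lam u) {p : ℝ × ℝ} (hp : p ∈ Exterior M) :
    d2 (rmul u) p = u p.1 p.2 + p.2 * pdr u p.1 p.2 := by
  have h := hasDerivAt_snd isOpen_Exterior hu.1 hp
  refine d2_eq_of_hasDerivAt isOpen_Exterior (contDiffOn_rmul hu) (fun _ _ => rfl) hp ?_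
  have e : pdr u p.1 p.2 = d2 (uncurry u) p := h.deriv
  rw [e]
  refine ((hasDerivAt_id p.2).mul h).congr_deriv ?_
  simp [uncurry]

lemma d1_d1_rmul (hu : IsModeSolution M lam u) {p : ℝ × ℝ} (hp : p ∈ Exterior M) :
    d1 (d1 (rmul u)) p = p.2 * pdtt u p.1 p.2 := by
  have hd := contDiffOn_d1 isOpen_Exterior hu.1
  have h := hasDerivAt_fst isOpen_Exterior hd hp
  have hpd : ∀ q ∈ Exterior M, pdt u q.1 q.2 = d1 (uncurry u) q := fun q hq =>
    (hasDerivAt_fst isOpen_Exterior hu.1 hq).deriv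
  have e : pdtt u p.1 p.2 = d1 (d1 (uncurry u)) p := by
    have : (fun s => pdt u s p.2) = fun s => d1 (uncurry u) (s, p.2) :=
      funext fun s => hpd (s, p.2) ⟨mem_univ _, hp.2⟩
    rw [pdtt, this]
    exact h.deriv
  refine d1_eq_of_hasDerivAt isOpen_Exterior (contDiffOn_d1 isOpen_Exterior (contDiffOn_rmul hu))
    (g := fun q => q.2 * d1 (uncurry u) q)
    (fun q hq => by simp only [d1_rmul hu hq, hpd q hq]) hp ?_
  rw [e]
  exact h.const_mul p.2

lemma d2_d2_rmul (hu : IsModeSolution M lam u) {p : ℝ × ℝ} (hp : p ∈ Exterior M) :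
    d2 (d2 (rmul u)) p = 2 * pdr u p.1 p.2 + p.2 * pdrr u p.1 p.2 := by
  have hd := contDiffOn_d2 isOpen_Exterior hu.1
  have h := hasDerivAt_snd isOpen_Exterior hd hp
  have h0 := hasDerivAt_snd isOpen_Exterior hu.1 hp
  have hpd : ∀ q ∈ Exterior M, pdr u q.1 q.2 = d2 (uncurry u) q := fun q hq =>
    (hasDerivAt_snd isOpen_Exterior hu.1 hq).deriv
  have e : pdrr u p.1 p.2 = d2 (d2 (uncurry u)) p := by
    refine (h.congr_of_eventuallyEq ?_).deriv
    filter_upwards [Ioi_mem_nhds hp.2] with s hs using hpd (p.1, s) ⟨mem_univ _, hs⟩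
  refine d2_eq_of_hasDerivAt isOpen_Exterior (contDiffOn_d2 isOpen_Exterior (contDiffOn_rmul hu))
    (g := fun q => uncurry u q + q.2 * d2 (uncurry u) q)
    (fun q hq => by simp only [d2_rmul hu hq, hpd q hq, uncurry]) hp ?_
  rw [e, hpd p hp]
  refine (h0.add ((hasDerivAt_id p.2).mul h)).congr_deriv ?_
  simp only [id]
  ring

/-- The equation for `v = r u` in the coordinates `(t, r)`. -/
lemma wave_rmul (hM : 0 < M) (hu : IsModeSolution M lam u) {p : ℝ × ℝ} (hp : p ∈ Exterior M) :
    -d1 (d1 (rmul u)) p + ((p.2 - 2 * M) / p.2) ^ 2 * d2 (d2 (rmul u)) p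
      + 2 * M * (p.2 - 2 * M) / p.2 ^ 3 * d2 (rmul u) p
      = (p.2 - 2 * M) * (lam ^ 2 / p.2 ^ 3 + 2 * M / p.2 ^ 4) * rmul u p := by
  rw [d1_d1_rmul hu hp, d2_d2_rmul hu hp, d2_rmul hu hp, rmul]
  have h := hu.2 p.1 p.2 hp.2
  have hp2 : 2 * M < p.2 := hp.2
  have hr : 0 < p.2 := by linarith
  have hy : 0 < p.2 - 2 * M := by linarith
  simp only [uncurry]
  generalize pdtt u p.1 p.2 = utt at *
  generalize pdrr u p.1 p.2 = urr at *
  generalize pdr u p.1 p.2 = ur at *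
  generalize u p.1 p.2 = u0 at *
  generalize p.2 = r at *
  rw [← sub_eq_zero]
  have e : -(r * utt) + ((r - 2 * M) / r) ^ 2 * (2 * ur + r * urr)
      + 2 * M * (r - 2 * M) / r ^ 3 * (u0 + r * ur)
      - (r - 2 * M) * (lam ^ 2 / r ^ 3 + 2 * M / r ^ 4) * (r * u0)
      = (r - 2 * M) * (-(r / (r - 2 * M)) * utt + (r - 2 * M) / r * urr
        + 2 * (r - M) / r ^ 2 * ur - lam ^ 2 / r ^ 2 * u0) := by
    field_simp
    ring
  rw [e, h, mul_zero]

lemma hasDerivAt_kru_fst (hM : 0 < M) {f : ℝ × ℝ → ℝ} (hf : ContDiffOn ℝ ∞ f (Exterior M))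
    {p : ℝ × ℝ} (hp : p ∈ Quad) :
    HasDerivAt (fun s => f (fromKruskal M (s, p.2)))
      (d1 f (fromKruskal M p) * (-(2 * M) / p.1)
        + d2 f (fromKruskal M p) * (p.2 * radDeriv M (rad M (p.1 * p.2)))) p.1 := by
  have hp1 : 0 < p.1 := hp.1
  have hx : HasDerivAt (fun s => 2 * M * (Real.log p.2 - Real.log s)) (-(2 * M) / p.1) p.1 := by
    refine (((Real.hasDerivAt_log hp1.ne').const_sub (Real.log p.2)).const_mul (2 * M)).congr_deriv
      ?_
    field_simp
  have hy : HasDerivAt (fun s => 2 * M + rad M (s * p.2))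
      (p.2 * radDeriv M (rad M (p.1 * p.2))) p.1 := by
    refine (((hasDerivAt_rad hM (mul_pos hp.1 hp.2)).comp p.1
      ((hasDerivAt_id p.1).mul_const p.2)).const_add (2 * M)).congr_deriv ?_
    ring
  exact hasDerivAt_comp_pair isOpen_Exterior hf hx hy (fromKruskal_mem hM hp)

lemma hasDerivAt_kru_snd (hM : 0 < M) {f : ℝ × ℝ → ℝ} (hf : ContDiffOn ℝ ∞ f (Exterior M))
    {p : ℝ × ℝ} (hp : p ∈ Quad) :
    HasDerivAt (fun V => f (fromKruskal M (p.1, V)))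
      (d1 f (fromKruskal M p) * (2 * M / p.2)
        + d2 f (fromKruskal M p) * (p.1 * radDeriv M (rad M (p.1 * p.2)))) p.2 := by
  have hp2 : 0 < p.2 := hp.2
  have hx : HasDerivAt (fun V => 2 * M * (Real.log V - Real.log p.1)) (2 * M / p.2) p.2 := by
    refine (((Real.hasDerivAt_log hp2.ne').sub_const (Real.log p.1)).const_mul (2 * M)).congr_deriv
      ?_
    field_simp
  have hy : HasDerivAt (fun V => 2 * M + rad M (p.1 * V))
      (p.1 * radDeriv M (rad M (p.1 * p.2))) p.2 := by
    refine (((hasDerivAt_rad hM (mul_pos hp.1 hp.2)).comp p.2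
      ((hasDerivAt_id p.2).const_mul p.1)).const_add (2 * M)).congr_deriv ?_
    ring
  exact hasDerivAt_comp_pair isOpen_Exterior hf hx hy (fromKruskal_mem hM hp)

lemma d1_kru (hM : 0 < M) (hu : IsModeSolution M lam u) {p : ℝ × ℝ} (hp : p ∈ Quad) :
    d1 (kru M u) p = d1 (rmul u) (fromKruskal M p) * (-(2 * M) / p.1)
        + d2 (rmul u) (fromKruskal M p) * (p.2 * radDeriv M (rad M (p.1 * p.2))) :=
  d1_eq_of_hasDerivAt isOpen_Quad (contDiffOn_kru hM hu) (fun _ _ => rfl) hp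
    (hasDerivAt_kru_fst hM (contDiffOn_rmul hu) hp)

lemma d2_kru (hM : 0 < M) (hu : IsModeSolution M lam u) {p : ℝ × ℝ} (hp : p ∈ Quad) :
    d2 (kru M u) p = d1 (rmul u) (fromKruskal M p) * (2 * M / p.2)
        + d2 (rmul u) (fromKruskal M p) * (p.1 * radDeriv M (rad M (p.1 * p.2))) :=
  d2_eq_of_hasDerivAt isOpen_Quad (contDiffOn_kru hM hu) (fun _ _ => rfl) hp
    (hasDerivAt_kru_snd hM (contDiffOn_rmul hu) hp)

lemma hasDerivAt_radDeriv (hM : 0 < M) {y : ℝ} (hy : 0 < y) :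
    HasDerivAt (radDeriv M)
      (-(Real.exp (-(1 + y / (2 * M))) * (1 / (2 * M + y) + 2 * M / (2 * M + y) ^ 2))) y := by
  have hne : 2 * M + y ≠ 0 := by positivity
  have h1 : HasDerivAt (fun y => Real.exp (-(1 + y / (2 * M))))
      (Real.exp (-(1 + y / (2 * M))) * -(1 / (2 * M))) y :=
    (((hasDerivAt_id y).div_const (2 * M)).const_add 1).neg.exp
  have h2 : HasDerivAt (fun y => 2 * M / (2 * M + y))
      ((0 * (2 * M + y) - 2 * M * 1) / (2 * M + y) ^ 2) y :=
    (hasDerivAt_const y (2 * M)).div ((hasDerivAt_id y).const_add (2 * M)) hne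
  refine (h1.mul h2).congr_deriv ?_
  field_simp
  ring

/-- In Kruskal coordinates the mode equation is `∂ₛ∂_V w = Q(sV) w` with `Q` regular up to the
horizon. -/
lemma wave_kru (hM : 0 < M) (hu : IsModeSolution M lam u) {p : ℝ × ℝ} (hp : p ∈ Quad) :
    d2 (d1 (kru M u)) p = pot M lam 0 (p.1 * p.2) * kru M u p := by
  have hv := contDiffOn_rmul hu
  have hz : 0 < p.1 * p.2 := mul_pos hp.1 hp.2
  have hp1 : 0 < p.1 := hp.1
  have hp2 : 0 < p.2 := hp.2
  have hy := rad_pos hM hz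
  have hE := fromKruskal_mem hM hp
  have h1 := hasDerivAt_kru_snd hM (contDiffOn_d1 isOpen_Exterior hv) hp
  have h2 := hasDerivAt_kru_snd hM (contDiffOn_d2 isOpen_Exterior hv) hp
  have h3 : HasDerivAt (fun V => rad M (p.1 * V)) (p.1 * radDeriv M (rad M (p.1 * p.2))) p.2 := by
    refine ((hasDerivAt_rad hM hz).comp p.2 ((hasDerivAt_id p.2).const_mul p.1)).congr_deriv ?_
    ring
  have h4' := (hasDerivAt_radDeriv hM hy).comp p.2 h3
  have h4 : HasDerivAt (fun V => V * radDeriv M (rad M (p.1 * V)))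
      (1 * radDeriv M (rad M (p.1 * p.2)) + p.2 * _) p.2 := (hasDerivAt_id p.2).mul h4'
  have h5 := (h1.mul_const (-(2 * M) / p.1)).add (h2.mul h4)
  rw [d2_eq_of_hasDerivAt isOpen_Quad (contDiffOn_d1 isOpen_Quad (contDiffOn_kru hM hu))
    (fun q hq => d1_kru hM hu hq) hp h5]
  have hw := wave_rmul hM hu hE
  rw [← d1_d2_comm isOpen_Exterior hv hE]
  have hspec := rad_spec hM hz
  have hr : (fromKruskal M p).2 = 2 * M + rad M (p.1 * p.2) := rfl
  rw [hr] at hw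
  simp only [pot, potY, kru, Prod.mk.eta]
  clear h1 h2 h3 h4 h4' h5
  generalize d1 (d1 (rmul u)) (fromKruskal M p) = vtt at *
  generalize d2 (d2 (rmul u)) (fromKruskal M p) = vrr at *
  generalize d1 (d2 (rmul u)) (fromKruskal M p) = vtr at *
  generalize d2 (rmul u) (fromKruskal M p) = vr at *
  generalize rmul u (fromKruskal M p) = v at *
  generalize rad M (p.1 * p.2) = y at *
  generalize p.1 = s at *
  generalize p.2 = V at *
  rw [radDeriv, Real.exp_neg]
  have he := Real.exp_pos (1 + y / (2 * M))
  generalize Real.exp (1 + y / (2 * M)) = e at *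
  have hV : V = y * e / s := by field_simp; linarith
  subst hV
  have hr0 : 2 * M + y ≠ 0 := by positivity
  have hvtt : vtt = ((2 * M + y - 2 * M) / (2 * M + y)) ^ 2 * vrr
      + 2 * M * (2 * M + y - 2 * M) / (2 * M + y) ^ 3 * vr
      - (2 * M + y - 2 * M) * (lam ^ 2 / (2 * M + y) ^ 3 + 2 * M / (2 * M + y) ^ 4) * v := by
    linarith
  rw [hvtt]
  field_simp
  ring

/-- On the initial surface, data of the form `(r-2M)^{κ/2} F(√(r-2M))` are symbols of order `κ`. -/
lemma data_symb (hM : 0 < M) {κ : ℝ} {F : ℝ → ℝ} (hF : ContDiffOn ℝ ∞ F (Ici 0)) (B : ℝ) (m : ℕ) :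
    Symb B m κ (fun s => (2 * M + rad M (s * s)) *
      (rad M (s * s) ^ (κ / 2) * F (Real.sqrt (rad M (s * s))))) := by
  have hG : ContDiffOn ℝ ∞ (fun c => (2 * M + c ^ 2) *
      (Real.exp (-((1 / 2 + c ^ 2 / (4 * M)) * κ)) * F c)) (Ici 0) :=
    ContDiffOn.mul (by fun_prop) (ContDiffOn.mul (by fun_prop) hF)
  refine (((Symb.rpow m κ).mul (Symb.comp_chi hM B m hG)).mono (by simp)).congr fun s hs => ?_
  have hc := chi_pos hM hs.1
  have h := theta_chi hM s
  simp only [rad, Real.sqrt_mul_self hs.1.le, Real.sqrt_sq hc.le]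
  have e1 : (chi M s ^ 2) ^ (κ / 2) = chi M s ^ κ := by
    rw [← Real.rpow_natCast, ← Real.rpow_mul hc.le]
    congr 1
    push_cast
    ring
  have e2 : s ^ κ = chi M s ^ κ * Real.exp ((1 / 2 + chi M s ^ 2 / (4 * M)) * κ) := by
    conv_lhs => rw [← h, theta]
    rw [Real.mul_rpow hc.le (Real.exp_pos _).le, ← Real.exp_mul]
  rw [e1, e2, Real.exp_neg]
  have := Real.exp_pos ((1 / 2 + chi M s ^ 2 / (4 * M)) * κ)
  field_simp

end

/-! ### The rescaled solution in blown-up coordinates -/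

section

variable {M lam κ α : ℝ} {l : ℕ} {u : ℝ → ℝ → ℝ}

lemma fromKruskal_diag (M s : ℝ) : fromKruskal M (s, s) = (0, 2 * M + rad M (s * s)) := by
  simp [fromKruskal]

/-- `wave_bound` for `w = r u`, uniformly for `V` in a compact subset of `(0, ∞)`. For `s ≥ b₁`, in
particular outside the triangle `s ≤ V`, compactness suffices. -/
lemma kru_bound (hM : 0 < M) (hκ : κ = l + α) (hα : α ∈ Ioc (0 : ℝ) 1)
    (hu : IsModeSolution M lam u) {φt ψt : ℝ → ℝ}
    (hφt : ContDiffOn ℝ ∞ φt (Ici 0)) (hψt : ContDiffOn ℝ ∞ ψt (Ici 0))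
    (hφ : ∀ r : ℝ, 2 * M < r → u 0 r = (r - 2 * M) ^ (κ / 2) * φt (Real.sqrt (r - 2 * M)))
    (hψ : ∀ r : ℝ, 2 * M < r → pdt u 0 r = (r - 2 * M) ^ (κ / 2) * ψt (Real.sqrt (r - 2 * M)))
    {b₁ b₂ : ℝ} (S : ℝ) (hb₁ : 0 < b₁) (j : ℕ) (hj : j ≤ l + 1) :
    ∃ C, ∀ s ∈ Ioc 0 S, ∀ V ∈ Icc b₁ b₂, |d1^[j] (kru M u) (s, V)| ≤ C * s ^ (α - 1) := by
  have hw := contDiffOn_kru hM hu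
  have h0 : ∀ B m, Symb B m κ (fun s => kru M u (s, s)) := fun B m =>
    (data_symb hM hφt B m).congr fun s hs => by
      have := rad_pos hM (mul_pos hs.1 hs.1)
      simp only [kru, fromKruskal_diag, rmul, uncurry]
      rw [hφ _ (by linarith), add_sub_cancel_left]
  have h1 : ∀ B m, Symb B m (κ - 1) (fun s => d1 (kru M u) (s, s)) := by
    intro B m
    have hd := (h0 B (m + 1)).deriv (g := fun s => d1 (kru M u) (s, s) + d2 (kru M u) (s, s))
      fun s hs => by
        have hp : ((s, s) : ℝ × ℝ) ∈ Quad := ⟨hs.1, hs.1⟩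
        simpa using hasDerivAt_comp_pair isOpen_Quad hw (hasDerivAt_id s) (hasDerivAt_id s) hp
    have ht := (((Symb.rpow m (-1)).mul (data_symb hM hψt B m (κ := κ))).mono
      (ν := κ - 1) (by linarith)).const_mul (4 * M)
    refine ((hd.sub ht).const_mul (1 / 2)).congr fun s hs => ?_
    have hp : ((s, s) : ℝ × ℝ) ∈ Quad := ⟨hs.1, hs.1⟩
    have hy := rad_pos hM (mul_pos hs.1 hs.1)
    have e : d1 (rmul u) (fromKruskal M (s, s)) = (2 * M + rad M (s * s)) *
        (rad M (s * s) ^ (κ / 2) * ψt (Real.sqrt (rad M (s * s)))) := by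
      rw [d1_rmul hu (fromKruskal_mem hM hp), fromKruskal_diag, hψ _ (by simpa using hy)]
      simp only [add_sub_cancel_left]
    simp only [d1_kru hM hu hp, d2_kru hM hu hp, e, Real.rpow_neg_one]
    ring
  obtain ⟨C1, hC1⟩ := wave_bound hw (fun k z hz => hasDerivAt_pot hM lam k hz) (pot_bound hM lam)
    (pot_symb hM lam (b₂ + 1)) (fun p hp => wave_kru hM hu hp) (h0 _) (h1 _) (lt_add_one b₂) hκ hα
    j hj
  obtain ⟨C2, hC2⟩ := (isCompact_Icc.prod isCompact_Icc).exists_bound_of_continuousOn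
    ((contDiffOn_iterate_d1 isOpen_Quad hw j).continuousOn.mono
      (fun p (hp : p ∈ Icc b₁ S ×ˢ Icc b₁ b₂) => ⟨hb₁.trans_le hp.1.1, hb₁.trans_le hp.2.1⟩))
  refine ⟨|C1| + |C2| * S ^ (1 - α), fun s hs V hV => ?_⟩
  have hp := (Real.rpow_pos_of_pos hs.1 (α - 1)).le
  have hS := (Real.rpow_pos_of_pos (hs.1.trans_le hs.2) (1 - α)).le
  rcases le_total s b₁ with h | h
  · refine (hC1 s V hs.1 (h.trans hV.1) hV.2).trans ?_
    have h3 := le_abs_self C1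
    gcongr
    nlinarith [mul_nonneg (abs_nonneg C2) hS]
  · have h2 : |d1^[j] (kru M u) (s, V)| ≤ C2 := hC2 (s, V) ⟨⟨h, hs.2⟩, hV⟩
    have h3 : s ^ (1 - α) ≤ S ^ (1 - α) := Real.rpow_le_rpow hs.1.le hs.2 (by linarith [hα.2])
    have h4 : s ^ (1 - α) * s ^ (α - 1) = 1 := by rw [← Real.rpow_add hs.1]; simp
    have h5 : 1 ≤ S ^ (1 - α) * s ^ (α - 1) := by
      exact h4.ge.trans (mul_le_mul_of_nonneg_right h3 hp)
    have h6 := mul_le_mul_of_nonneg_left h5 (abs_nonneg C2)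
    nlinarith [le_abs_self C2, mul_nonneg (abs_nonneg C1) hp]

/-- The Kruskal coordinate `s = -U` of the point with blown-up coordinates `(a, b)`; the other
Kruskal coordinate is `V = b`. -/
noncomputable def blowS (M : ℝ) (p : ℝ × ℝ) : ℝ :=
  p.1 * p.2 * Real.exp (1 + p.1 * p.2 ^ 2 / (2 * M))

/-- The points `(a, b)` where `r = 2M + a b²` is positive; a neighbourhood of `a = 0`. -/
def PosRad (M : ℝ) : Set (ℝ × ℝ) := {p | 0 < 2 * M + p.1 * p.2 ^ 2}

lemma isOpen_PosRad : IsOpen (PosRad M) := isOpen_lt continuous_const (by fun_prop)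

lemma mem_PosRad (hM : 0 < M) {p : ℝ × ℝ} (hp : 0 ≤ p.1) : p ∈ PosRad M := by
  change 0 < 2 * M + p.1 * p.2 ^ 2
  positivity

lemma contDiff_blowS : ContDiff ℝ ∞ (blowS M) := by unfold blowS; fun_prop

lemma blowS_mem {p : ℝ × ℝ} (hp : p ∈ Quad) : (blowS M p, p.2) ∈ Quad :=
  ⟨mul_pos (mul_pos hp.1 hp.2) (Real.exp_pos _), hp.2⟩

lemma fromKruskal_blowS (hM : 0 < M) {p : ℝ × ℝ} (hp : p ∈ Quad) :
    fromKruskal M (blowS M p, p.2)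
      = (-(2 * M) * Real.log p.1 - 2 * M - p.1 * p.2 ^ 2, 2 * M + p.1 * p.2 ^ 2) := by
  have h1 : 0 < p.1 := hp.1
  have h2 : 0 < p.2 := hp.2
  have e1 : Real.log (blowS M p) = Real.log p.1 + Real.log p.2 + (1 + p.1 * p.2 ^ 2 / (2 * M)) := by
    rw [blowS, Real.log_mul (by positivity) (Real.exp_pos _).ne', Real.log_mul h1.ne' h2.ne',
      Real.log_exp]
  have e2 : blowS M p * p.2 = theta M (Real.sqrt p.1 * p.2) ^ 2 := by
    rw [blowS, theta, mul_pow, mul_pow, ← Real.exp_nat_mul, Real.sq_sqrt h1.le]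
    have : (2 : ℕ) * (1 / 2 + p.1 * p.2 ^ 2 / (4 * M)) = 1 + p.1 * p.2 ^ 2 / (2 * M) := by
      push_cast; field_simp; ring
    rw [this]
    ring
  have e3 : 0 ≤ theta M (Real.sqrt p.1 * p.2) := by unfold theta; positivity
  simp only [fromKruskal, rad]
  rw [e1, e2, Real.sqrt_sq e3, chi_theta hM, mul_pow, Real.sq_sqrt h1.le]
  ext
  · field_simp
    ring
  · rfl

lemma Utilde_eq (hM : 0 < M) {p : ℝ × ℝ} (hp : p ∈ Quad) :
    Utilde M u p.1 p.2
      = 2 * Real.sqrt M * p.2 / (2 * M + p.1 * p.2 ^ 2) * kru M u (blowS M p, p.2) := by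
  have h : 0 < 2 * M + p.1 * p.2 ^ 2 := mem_PosRad hM (le_of_lt hp.1)
  rw [kru, fromKruskal_blowS hM hp, rmul, Utilde]
  simp only [uncurry]
  rw [← mul_assoc, div_mul_cancel₀ _ (ne_of_gt h)]

/-- `HorComb M W n f`: `f(a, b)` is a finite sum of terms `m(a, b) * W j (s, b)` with `j ≤ n`,
`s = blowS M (a, b)`, and `m` smooth across `a = 0`. With `W j = ∂ₛʲ w` the derivatives `∂ₐⁿ Ũ` have this form. -/
inductive HorComb (M : ℝ) (W : ℕ → ℝ × ℝ → ℝ) : ℕ → (ℝ × ℝ → ℝ) → Prop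
  | term (m : ℝ × ℝ → ℝ) (hm : ContDiffOn ℝ ∞ m (PosRad M)) (j n : ℕ) (h : j ≤ n) :
      HorComb M W n (fun p => m p * W j (blowS M p, p.2))
  | add {n : ℕ} {f g : ℝ × ℝ → ℝ} (hf : HorComb M W n f) (hg : HorComb M W n g) :
      HorComb M W n (fun p => f p + g p)

lemma HorComb.exists_deriv (hM : 0 < M) {w : ℝ × ℝ → ℝ} (hw : ContDiffOn ℝ ∞ w Quad) {n : ℕ}
    {f : ℝ × ℝ → ℝ} (hf : HorComb M (fun j => d1^[j] w) n f) :
    ∃ g, HorComb M (fun j => d1^[j] w) (n + 1) g ∧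
      ∀ p ∈ Quad, HasDerivAt (fun a => f (a, p.2)) (g p) p.1 := by
  induction hf with
  | term m hm j n h =>
    have hs : ContDiffOn ℝ ∞ (blowS M) (PosRad M) := contDiff_blowS.contDiffOn
    refine ⟨_, .add (.term _ (contDiffOn_d1 isOpen_PosRad hm) j (n + 1) (by omega))
      (.term _ (hm.mul (contDiffOn_d1 isOpen_PosRad hs)) (j + 1) (n + 1) (by omega)),
      fun p hp => ?_⟩
    have hp' : p ∈ PosRad M := mem_PosRad hM (le_of_lt hp.1)
    have h1 := hasDerivAt_fst isOpen_PosRad hm hp'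
    have h2 := hasDerivAt_fst isOpen_PosRad hs hp'
    have h3 := hasDerivAt_comp_pair isOpen_Quad (contDiffOn_iterate_d1 isOpen_Quad hw j) h2
      (hasDerivAt_const p.1 p.2) (blowS_mem hp)
    refine (h1.mul h3).congr_deriv ?_
    simp only [iterate_succ_apply', Prod.mk.eta]
    ring
  | add hf hg ihf ihg =>
    obtain ⟨f', hf', hfd⟩ := ihf
    obtain ⟨g', hg', hgd⟩ := ihg
    exact ⟨_, .add hf' hg', fun p hp => (hfd p hp).add (hgd p hp)⟩

lemma HorComb.continuousOn (hM : 0 < M) {w : ℝ × ℝ → ℝ} (hw : ContDiffOn ℝ ∞ w Quad) {n : ℕ}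
    {f : ℝ × ℝ → ℝ} (hf : HorComb M (fun j => d1^[j] w) n f) : ContinuousOn f Quad := by
  induction hf with
  | term m hm j n h =>
    refine (hm.continuousOn.mono fun p hp => mem_PosRad hM (le_of_lt hp.1)).mul ?_
    exact (contDiffOn_iterate_d1 isOpen_Quad hw j).continuousOn.comp
      (contDiff_blowS.continuous.prodMk continuous_snd).continuousOn fun p hp => blowS_mem hp
  | add hf hg ihf ihg => exact ihf.add ihg

lemma HorComb.bound (hM : 0 < M) (hα : α ≤ 1) {W : ℕ → ℝ × ℝ → ℝ} {n : ℕ} {a₀ b₁ b₂ : ℝ}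
    (hb₁ : 0 < b₁)
    (hW : ∀ S, ∀ j ≤ n, ∃ C, ∀ s ∈ Ioc 0 S, ∀ V ∈ Icc b₁ b₂, |W j (s, V)| ≤ C * s ^ (α - 1))
    {f : ℝ × ℝ → ℝ} (hf : HorComb M W n f) :
    ∃ C, ∀ a ∈ Ioc 0 a₀, ∀ b ∈ Icc b₁ b₂, |f (a, b)| ≤ C * a ^ (α - 1) := by
  induction hf with
  | term m hm j n h =>
    obtain ⟨C1, hC1⟩ := (isCompact_Icc.prod isCompact_Icc).exists_bound_of_continuousOn
      (hm.continuousOn.mono (fun p (hp : p ∈ Icc 0 a₀ ×ˢ Icc b₁ b₂) => mem_PosRad hM hp.1.1))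
    obtain ⟨C2, hC2⟩ := hW (a₀ * b₂ * Real.exp (1 + a₀ * b₂ ^ 2 / (2 * M))) j h
    refine ⟨C1 * (|C2| * b₁ ^ (α - 1)), fun a ha b hb => ?_⟩
    have ha1 : 0 < a := ha.1
    have hb0 : 0 < b := hb₁.trans_le hb.1
    have ha2 := ha.2
    have hb2 := hb.2
    have hmb : |m (a, b)| ≤ C1 := hC1 (a, b) ⟨Ioc_subset_Icc_self ha, hb⟩
    have hs1 : a * b₁ ≤ blowS M (a, b) := by
      have h1 : a * b₁ ≤ a * b := mul_le_mul_of_nonneg_left hb.1 ha1.le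
      have h2 : 1 ≤ Real.exp (1 + a * b ^ 2 / (2 * M)) := Real.one_le_exp (by positivity)
      exact h1.trans (le_mul_of_one_le_right (by positivity) h2)
    have ha₀ : 0 ≤ a₀ := ha1.le.trans ha.2
    have hb₂ : 0 ≤ b₂ := hb0.le.trans hb.2
    have hs2 : blowS M (a, b) ≤ a₀ * b₂ * Real.exp (1 + a₀ * b₂ ^ 2 / (2 * M)) := by
      simp only [blowS]
      gcongr
    have hs0 : 0 < a * b₁ := by positivity
    have h4 := hC2 _ ⟨hs0.trans_le hs1, hs2⟩ b hb
    have h5 : blowS M (a, b) ^ (α - 1) ≤ (a * b₁) ^ (α - 1) :=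
      Real.rpow_le_rpow_of_nonpos hs0 hs1 (by linarith)
    have h6 := (Real.rpow_pos_of_pos (hs0.trans_le hs1) (α - 1)).le
    rw [abs_mul]
    calc |m (a, b)| * |W j (blowS M (a, b), b)|
        ≤ C1 * (|C2| * (a * b₁) ^ (α - 1)) := by
          refine mul_le_mul hmb (h4.trans ?_) (abs_nonneg _) ((abs_nonneg _).trans hmb)
          exact (mul_le_mul_of_nonneg_right (le_abs_self C2) h6).trans
            (mul_le_mul_of_nonneg_left h5 (abs_nonneg C2))
      _ = _ := by rw [Real.mul_rpow ha1.le hb₁.le]; ring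
  | add hf hg ihf ihg =>
    obtain ⟨C, hC⟩ := ihf hW
    obtain ⟨D, hD⟩ := ihg hW
    exact ⟨C + D, fun a ha b hb => (abs_add_le _ _).trans
      (by linarith [hC a ha b hb, hD a ha b hb])⟩

lemma exists_iteratedDeriv (hM : 0 < M) (hu : IsModeSolution M lam u) (n : ℕ) :
    ∃ g, HorComb M (fun j => d1^[j] (kru M u)) n g ∧
      ∀ p ∈ Quad, iteratedDeriv n (fun s => Utilde M u s p.2) p.1 = g p := by
  induction n with
  | zero =>
    refine ⟨_, .term (fun p => 2 * Real.sqrt M * p.2 / (2 * M + p.1 * p.2 ^ 2)) ?_ 0 0 le_rfl,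
      fun p hp => by simpa using Utilde_eq hM hp⟩
    exact ContDiffOn.div (by fun_prop) (by fun_prop) fun p hp => ne_of_gt hp
  | succ n ih =>
    obtain ⟨g, hg, hgd⟩ := ih
    obtain ⟨g', hg', hgd'⟩ := hg.exists_deriv hM (contDiffOn_kru hM hu)
    refine ⟨g', hg', fun p hp => ?_⟩
    rw [iteratedDeriv_succ]
    refine ((hgd' p hp).congr_of_eventuallyEq ?_).deriv
    filter_upwards [Ioi_mem_nhds hp.1] with a ha using hgd (a, p.2) ⟨ha, hp.2⟩

end

/-! ### From bounds on derivatives to Hölder regularity -/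

lemma rpow_sub_rpow_le {δ x y : ℝ} (hδ : 0 ≤ δ) (hδ1 : δ ≤ 1) (hx : 0 ≤ x) (hxy : x ≤ y) :
    y ^ δ - x ^ δ ≤ (y - x) ^ δ := by
  have h := Real.rpow_add_le_add_rpow hx (sub_nonneg.2 hxy) hδ hδ1
  rw [add_sub_cancel] at h
  linarith

/-- If `|∂ₐ g| ≤ C a^(α-1)` then `g` is `δ`-Hölder continuous in `a` for every `δ ≤ α`. -/
lemma holder_of_deriv_bound {g g' : ℝ × ℝ → ℝ} {a₀ b₁ b₂ α δ C : ℝ} (ha₀ : a₀ ≤ 1) (hb₁ : 0 < b₁)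
    (hδ : 0 < δ) (hδ1 : δ ≤ 1) (hδα : δ ≤ α)
    (hg : ∀ p ∈ Quad, HasDerivAt (fun a => g (a, p.2)) (g' p) p.1)
    (hC : ∀ a ∈ Ioc 0 a₀, ∀ b ∈ Icc b₁ b₂, |g' (a, b)| ≤ C * a ^ (α - 1)) :
    ∀ a ∈ Ioc 0 a₀, ∀ a' ∈ Ioc 0 a₀, ∀ b ∈ Icc b₁ b₂,
      |g (a, b) - g (a', b)| ≤ |C| / δ * |a - a'| ^ δ := by
  have key : ∀ a ∈ Ioc 0 a₀, ∀ a' ∈ Ioc 0 a₀, ∀ b ∈ Icc b₁ b₂, a ≤ a' →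
      |g (a', b) - g (a, b)| ≤ |C| / δ * (a' - a) ^ δ := by
    intro a ha a' ha' b hb hle
    have h := abs_sub_le_of_abs_deriv_le (f := fun a => g (a, b)) (f' := fun a => g' (a, b))
      (g := fun a => |C| / δ * a ^ δ) (g' := fun a => |C| * a ^ (δ - 1)) hle
      (fun x hx => hg (x, b) ⟨ha.1.trans_le hx.1, hb₁.trans_le hb.1⟩)
      (fun x hx => by
        refine ((Real.hasDerivAt_rpow_const (p := δ)
          (Or.inl (ha.1.trans_le hx.1).ne')).const_mul (|C| / δ)).congr_deriv ?_
        field_simp)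
      (fun x hx => by
        have hx0 := ha.1.trans_le hx.1
        have hx1 := hx.2.trans ha'.2
        have h1 : x ^ (α - 1) ≤ x ^ (δ - 1) :=
          Real.rpow_le_rpow_of_exponent_ge hx0 (hx1.trans ha₀) (by linarith)
        have h2 := (Real.rpow_pos_of_pos hx0 (α - 1)).le
        exact (hC x ⟨hx0, hx1⟩ b hb).trans ((mul_le_mul_of_nonneg_right (le_abs_self C) h2).trans
          (mul_le_mul_of_nonneg_left h1 (abs_nonneg C))))
    refine h.trans ?_
    rw [← mul_sub]
    exact mul_le_mul_of_nonneg_left (rpow_sub_rpow_le hδ.le hδ1 ha.1.le hle) (by positivity)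
  intro a ha a' ha' b hb
  rcases le_total a a' with h | h
  · rw [abs_sub_comm, abs_sub_comm a, abs_of_nonneg (sub_nonneg.2 h)]
    exact key a ha a' ha' b hb h
  · rw [abs_of_nonneg (sub_nonneg.2 h)]
    exact key a' ha' a ha b hb h

/-- A continuous function that is Hölder continuous in `a ∈ (0, a₀]`, uniformly in `b`, extends
continuously to `a = 0`: it is the uniform limit of `g (max a aₙ, b)` as `aₙ → 0`. -/
lemma exists_continuous_extension {g : ℝ × ℝ → ℝ} {a₀ b₁ b₂ δ C : ℝ} (ha₀ : 0 < a₀) (hb₁ : 0 < b₁)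
    (hδ : 0 < δ) (hC0 : 0 ≤ C) (hg : ContinuousOn g Quad)
    (hC : ∀ a ∈ Ioc 0 a₀, ∀ a' ∈ Ioc 0 a₀, ∀ b ∈ Icc b₁ b₂,
      |g (a, b) - g (a', b)| ≤ C * |a - a'| ^ δ) :
    ∃ F : ℝ → ℝ → ℝ, ContinuousOn (uncurry F) (Icc 0 a₀ ×ˢ Icc b₁ b₂) ∧
      ∀ a ∈ Ioc 0 a₀, ∀ b ∈ Icc b₁ b₂, F a b = g (a, b) := by
  let s : ℕ → ℝ := fun n => a₀ * (1 / (n + 1))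
  have hs : ∀ n, s n ∈ Ioc 0 a₀ := fun n => by
    refine ⟨by positivity, mul_le_of_le_one_right ha₀.le ?_⟩
    rw [div_le_one (by positivity)]
    have : (0 : ℝ) ≤ n := Nat.cast_nonneg n
    linarith
  have hs0 : Tendsto s atTop (nhds 0) := by
    have := (tendsto_one_div_add_atTop_nhds_zero_nat (𝕜 := ℝ)).const_mul a₀
    rwa [mul_zero] at this
  have hanti : Antitone s := fun n m h => by
    have : (n : ℝ) ≤ m := by exact_mod_cast h
    simp only [s]
    gcongr
  have hlim0 : Tendsto (fun n => C * s n ^ δ) atTop (nhds 0) := by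
    have := ((Real.continuous_rpow_const hδ.le).tendsto 0).comp hs0
    rw [Real.zero_rpow hδ.ne'] at this
    simpa using this.const_mul C
  have hsmall : ∀ x ∈ Ioc 0 a₀, ∀ y ∈ Ioc 0 a₀, ∀ z, x ≤ z → y ≤ z → ∀ b ∈ Icc b₁ b₂,
      |g (x, b) - g (y, b)| ≤ C * z ^ δ := by
    intro x hx y hy z hxz hyz b hb
    refine (hC x hx y hy b hb).trans (mul_le_mul_of_nonneg_left ?_ hC0)
    refine Real.rpow_le_rpow (abs_nonneg _) ?_ hδ.le
    rw [abs_le]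
    constructor <;> linarith [hx.1, hy.1]
  have hL : ∀ b, ∃ L, b ∈ Icc b₁ b₂ → Tendsto (fun n => g (s n, b)) atTop (nhds L) := by
    intro b
    by_cases hb : b ∈ Icc b₁ b₂
    · obtain ⟨L, hL⟩ := cauchySeq_tendsto_of_complete
        (cauchySeq_of_le_tendsto_0 (s := fun n => g (s n, b)) (fun n => C * s n ^ δ)
          (fun n m N hn hm => hsmall _ (hs n) _ (hs m) _ (hanti hn) (hanti hm) b hb) hlim0)
      exact ⟨L, fun _ => hL⟩
    · exact ⟨0, fun h => absurd h hb⟩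
  choose L hL using hL
  let F : ℝ → ℝ → ℝ := fun a b => if 0 < a then g (a, b) else L b
  refine ⟨F, ?_, fun a ha b hb => if_pos ha.1⟩
  have hunif : TendstoUniformlyOn (fun n (p : ℝ × ℝ) => g (max p.1 (s n), p.2)) (uncurry F) atTop
      (Icc 0 a₀ ×ˢ Icc b₁ b₂) := by
    have hle : ∀ n, ∀ p ∈ Icc 0 a₀ ×ˢ Icc b₁ b₂,
        |uncurry F p - g (max p.1 (s n), p.2)| ≤ C * s n ^ δ := by
      rintro n ⟨a, b⟩ ⟨ha, hb⟩
      simp only at ha hb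
      have hpos : 0 ≤ C * s n ^ δ := mul_nonneg hC0 (Real.rpow_nonneg (hs n).1.le _)
      rcases lt_or_ge 0 a with h | h
      · simp only [uncurry, F, if_pos h]
        rcases le_total a (s n) with h2 | h2
        · rw [max_eq_right h2]
          exact hsmall a ⟨h, ha.2⟩ _ (hs n) _ h2 le_rfl b hb
        · rw [max_eq_left h2]
          simpa using hpos
      · simp only [uncurry, F, if_neg h.not_gt]
        rw [max_eq_right (h.trans (hs n).1.le)]
        refine le_of_tendsto (((hL b hb).sub_const _).abs) ?_
        filter_upwards [eventually_ge_atTop n] with m hm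
        exact hsmall _ (hs m) _ (hs n) _ (hanti hm) le_rfl b hb
    rw [Metric.tendstoUniformlyOn_iff]
    intro e he
    filter_upwards [hlim0.eventually_lt_const he] with n hn p hp
    exact (hle n p hp).trans_lt hn
  refine hunif.continuousOn (Frequently.of_forall fun n => ?_)
  refine hg.comp (by fun_prop) fun p hp => ?_
  exact ⟨lt_max_of_lt_right (hs n).1, hb₁.trans_le hp.2.1⟩

/-- Event-horizon half of Theorem 1.1 for `k = 0` (single mode): if the initial data
decay like `(r−2M)^{κ/2}` at the horizon, with `κ = l + α`, then the rescaled solution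
`Ũ` is `C^{l,δ}` up to the event horizon `{a = 0}`, where `δ = min(α−ε, 1/2)`. -/
theorem horizon_regularity_from_decay
    (M lam κ α : ℝ) (l : ℕ) (hM : 0 < M) (hlam : 0 ≤ lam)
    (hκ : 0 < κ) (hκdec : κ = l + α) (hα : α ∈ Set.Ioc (0:ℝ) 1)
    (u : ℝ → ℝ → ℝ) (hu : IsModeSolution M lam u)
    (R₀ : ℝ) (hR₀ : 2*M < R₀)
    (φt ψt : ℝ → ℝ)
    (hφt : ContDiffOn ℝ ∞ φt (Set.Ici (0:ℝ))) (hψt : ContDiffOn ℝ ∞ ψt (Set.Ici (0:ℝ)))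
    (hφ : ∀ r : ℝ, 2*M < r → u 0 r = (r - 2*M) ^ (κ/2) * φt (Real.sqrt (r - 2*M)))
    (hψ : ∀ r : ℝ, 2*M < r → pdt u 0 r = (r - 2*M) ^ (κ/2) * ψt (Real.sqrt (r - 2*M)))
    (hφ0 : ∀ r : ℝ, R₀ ≤ r → u 0 r = 0) (hψ0 : ∀ r : ℝ, R₀ ≤ r → pdt u 0 r = 0)
    (ε δ : ℝ) (hε : 0 < ε) (hδ : δ = min (α - ε) (1/2)) (hδpos : 0 < δ)
    (a₀ b₁ b₂ : ℝ) (ha₀ : 0 < a₀) (ha₀' : a₀ < Real.exp (-1)) (hb₁ : 0 < b₁) (hb₂ : b₁ < b₂) :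
    (∀ i : ℕ, i ≤ l → ∃ F : ℝ → ℝ → ℝ,
      ContinuousOn (Function.uncurry F) (Set.Icc 0 a₀ ×ˢ Set.Icc b₁ b₂) ∧
      ∀ a ∈ Set.Ioc (0:ℝ) a₀, ∀ b ∈ Set.Icc b₁ b₂,
        F a b = iteratedDeriv i (fun s => Utilde M u s b) a) ∧
    (∃ C : ℝ, ∀ a ∈ Set.Ioc (0:ℝ) a₀, ∀ a' ∈ Set.Ioc (0:ℝ) a₀, ∀ b ∈ Set.Icc b₁ b₂,
      |iteratedDeriv l (fun s => Utilde M u s b) a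
        - iteratedDeriv l (fun s => Utilde M u s b) a'| ≤ C * |a - a'| ^ δ) := by
  have hw := contDiffOn_kru hM hu
  have ha1 : a₀ ≤ 1 := ha₀'.le.trans (Real.exp_le_one_iff.2 (by norm_num))
  have hδα : δ ≤ α := hδ ▸ (min_le_left _ _).trans (by linarith)
  have key : ∀ i ≤ l, ∃ g : ℝ × ℝ → ℝ, ∃ C, 0 ≤ C ∧ ContinuousOn g Quad ∧
      (∀ a ∈ Ioc (0 : ℝ) a₀, ∀ b ∈ Icc b₁ b₂,
        g (a, b) = iteratedDeriv i (fun s => Utilde M u s b) a) ∧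
      ∀ a ∈ Ioc 0 a₀, ∀ a' ∈ Ioc 0 a₀, ∀ b ∈ Icc b₁ b₂,
        |g (a, b) - g (a', b)| ≤ C * |a - a'| ^ δ := by
    intro i hi
    obtain ⟨g, hg, hgd⟩ := exists_iteratedDeriv hM hu i
    -- the regularity of `∂ₐⁱ Ũ` comes from the bound on `∂ₐⁱ⁺¹ Ũ`, singular but integrable at `a = 0`
    obtain ⟨g', hg', hgd'⟩ := hg.exists_deriv hM hw
    obtain ⟨C, hC⟩ := hg'.bound hM hα.2 hb₁ (a₀ := a₀) (b₂ := b₂) fun S j hj =>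
      kru_bound hM hκdec hα hu hφt hψt hφ hψ S hb₁ j (by omega)
    exact ⟨g, |C| / δ, by positivity, hg.continuousOn hM hw,
      fun a ha b hb => (hgd (a, b) ⟨ha.1, hb₁.trans_le hb.1⟩).symm,
      holder_of_deriv_bound ha1 hb₁ hδpos (hδα.trans hα.2) hδα hgd' hC⟩
  constructor
  · intro i hi
    obtain ⟨g, C, hC0, hg, hgd, hH⟩ := key i hi
    obtain ⟨F, hF, hFg⟩ := exists_continuous_extension ha₀ hb₁ hδpos hC0 hg hH
    exact ⟨F, hF, fun a ha b hb => (hFg a ha b hb).trans (hgd a ha b hb)⟩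
  · obtain ⟨g, C, hC0, hg, hgd, hH⟩ := key l le_rfl
    refine ⟨C, fun a ha a' ha' b hb => ?_⟩
    rw [← hgd a ha b hb, ← hgd a' ha' b hb]
    exact hH a ha a' ha' b hb
end

section
/- Let κ > 0 and write κ = l + α with l ∈ ℕ and α ∈ (0,1]. Let u be a λ-mode solution whose initial data (φ,ψ) have the form φ(r) = r^{−κ−1}·φ̃(1/r) and ψ(r) = r^{−κ−2}·ψ̃(1/r) for some smooth functions φ̃, ψ̃ : [0, 1/(2M)) → ℝ. Let ε > 0 be such that δ := min(α − ε, 1/2) > 0. Then for all real T₁ < T₂ and all 0 < ρ₀ < 1/(2M): (a) for each i ≤ l, the function ∂_ρ̄^i V on [T₁,T₂] × (0,ρ₀] extends continuously to [T₁,T₂] × [0,ρ₀]; and (b) there is a constant C such that |∂_ρ̄^l V(τ̄,ρ̄) − ∂_ρ̄^l V(τ̄,ρ̄′)| ≤ C·|ρ̄ − ρ̄′|^δ for all τ̄ ∈ [T₁,T₂] and all ρ̄, ρ̄′ ∈ (0,ρ₀]. (Null-infinity half of Theorem 1.1 in the case k = 0, for a single spherical-harmonic mode: the Hölder regularity of the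 rescaled solution up to null infinity {ρ̄ = 0} is determined by the decay rate κ of the initial data at r = ∞.) -/
/-!
The regularity of `V` at null infinity follows from decay estimates in the region `{t ≥ 0}` near
spatial infinity, which contains `[T₁,T₂] × (0,m₁]` for small `m₁`.

In the coordinates `(τ̄, ρ̄)`, with `q = ρ̄²(1 - 2Mρ̄)`, the equation reads
`2 ∂_τ̄ ∂_ρ̄ V + ∂_ρ̄ (q ∂_ρ̄ V) = (λ² + 2Mρ̄) V` (`null_wave`). After differentiating it `j` times,
it says that `q^{j+1} ∂_ρ̄^{j+1} V` has, along incoming null lines, a derivative controlled by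
`∂_ρ̄^j V` and `∂_ρ̄^{j-1} V` (`transport`). On `{t = 0}` the equation determines all the
`∂_ρ̄^j V` from the initial data, and they are `ρ̄^{κ-j}` times smooth functions (`initial_data`).

Write `σ = A - τ̄` and `v = A + t + r_*`, which on `{t ≥ 0}` satisfy `1 ≤ σ ≤ v` and `v ∼ 1/ρ̄`.
Integrating the transport equation for `∂_ρ̄ V` along incoming lines and then `∂_ρ̄ V` along
outgoing lines expresses `V` through the data and itself. In the weighted norm
`sup σ^{κ+b} v^{-b} |V|` with `b` large this is a contraction, which gives a decay estimate with
the loss `v^b` (`lossy_decay`). Running the two integrations again on this estimate lowers `b` by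
one (`improve_loss`), and removes the loss once `b < 1` (`remove_loss`), so that
`|V| ≲ σ^{-κ}` (`decay_zero`). The transport equations then give, inductively,
`|∂_ρ̄^j V| ≲ σ^{j-κ}` for `j ≤ l` (`decay_nullD`) and `|∂_ρ̄^{l+1} V| ≲ σ^{-ε} v^{1+ε-α}`
(`decay_top`).

For bounded `τ̄` all this implies `|∂_ρ̄^{i+1} V| ≲ ρ̄^{δ-1}` for `i ≤ l` (`near_infinity`, and
compactness away from null infinity). Integrating in `ρ̄` yields Hölder continuity of `∂_ρ̄^i V`
with exponent `δ`, uniformly in `τ̄` (`holder_of_deriv_bound`), and hence the continuous extension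
(`exists_extension`).
-/

open MeasureTheory Filter Set Function
open scoped ContDiff

/-- The rescaled solution near null infinity in the outgoing Eddington–Finkelstein
coordinates `τ̄ = t − r_*(r)`, `ρ̄ = 1/r`: `V(τ̄,ρ̄) = (1/ρ̄)·u(τ̄ + r_*(1/ρ̄), 1/ρ̄)`. -/
noncomputable def nullV (M : ℝ) (u : ℝ → ℝ → ℝ) (τ ρ : ℝ) : ℝ :=
  (1/ρ) * u (τ + rstar M (1/ρ)) (1/ρ)

/-! ### Calculus of partial derivatives -/

theorem hasFDerivAt_of_smooth_s15 {H : ℝ → ℝ → ℝ} {U : Set (ℝ × ℝ)} (hU : IsOpen U)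
    (hH : ContDiffOn ℝ ∞ (uncurry H) U) {x y : ℝ} (hp : (x, y) ∈ U) :
    HasFDerivAt (uncurry H) (fderiv ℝ (uncurry H) (x, y)) (x, y) :=
  ((hH.contDiffAt (hU.mem_nhds hp)).differentiableAt (by simp)).hasFDerivAt

theorem pdr_eq_fderiv {H : ℝ → ℝ → ℝ} {U : Set (ℝ × ℝ)} (hU : IsOpen U)
    (hH : ContDiffOn ℝ ∞ (uncurry H) U) {x y : ℝ} (hp : (x, y) ∈ U) :
    pdr H x y = fderiv ℝ (uncurry H) (x, y) (0, 1) := by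
  have h := (hasFDerivAt_of_smooth_s15 hU hH hp).comp_hasDerivAt y
    ((hasDerivAt_const y x).prodMk (hasDerivAt_id y))
  exact h.deriv

theorem pdt_eq_fderiv {H : ℝ → ℝ → ℝ} {U : Set (ℝ × ℝ)} (hU : IsOpen U)
    (hH : ContDiffOn ℝ ∞ (uncurry H) U) {x y : ℝ} (hp : (x, y) ∈ U) :
    pdt H x y = fderiv ℝ (uncurry H) (x, y) (1, 0) := by
  have h := (hasFDerivAt_of_smooth_s15 hU hH hp).comp_hasDerivAt x
    ((hasDerivAt_id x).prodMk (hasDerivAt_const x y))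
  exact h.deriv

theorem smooth_fderiv_apply {H : ℝ → ℝ → ℝ} {U : Set (ℝ × ℝ)} (hU : IsOpen U)
    (hH : ContDiffOn ℝ ∞ (uncurry H) U) (w : ℝ × ℝ) :
    ContDiffOn ℝ ∞ (fun p => fderiv ℝ (uncurry H) p w) U :=
  (hH.fderiv_of_isOpen hU (by simp)).clm_apply contDiffOn_const

theorem smooth_pdr {H : ℝ → ℝ → ℝ} {U : Set (ℝ × ℝ)} (hU : IsOpen U)
    (hH : ContDiffOn ℝ ∞ (uncurry H) U) : ContDiffOn ℝ ∞ (uncurry (pdr H)) U :=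
  (smooth_fderiv_apply hU hH (0, 1)).congr fun ⟨_, _⟩ hp => pdr_eq_fderiv hU hH hp

theorem smooth_pdt {H : ℝ → ℝ → ℝ} {U : Set (ℝ × ℝ)} (hU : IsOpen U)
    (hH : ContDiffOn ℝ ∞ (uncurry H) U) : ContDiffOn ℝ ∞ (uncurry (pdt H)) U :=
  (smooth_fderiv_apply hU hH (1, 0)).congr fun ⟨_, _⟩ hp => pdt_eq_fderiv hU hH hp

theorem hasDerivAt_curve {H : ℝ → ℝ → ℝ} {U : Set (ℝ × ℝ)} (hU : IsOpen U)
    (hH : ContDiffOn ℝ ∞ (uncurry H) U) {a b : ℝ → ℝ} {a' b' s : ℝ}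
    (ha : HasDerivAt a a' s) (hb : HasDerivAt b b' s) (hp : (a s, b s) ∈ U) :
    HasDerivAt (fun s => H (a s) (b s)) (pdt H (a s) (b s) * a' + pdr H (a s) (b s) * b') s := by
  have h := (hasFDerivAt_of_smooth_s15 hU hH hp).comp_hasDerivAt s (ha.prodMk hb)
  refine h.congr_deriv ?_
  rw [pdt_eq_fderiv hU hH hp, pdr_eq_fderiv hU hH hp]
  have : ((a', b') : ℝ × ℝ) = a' • (1, 0) + b' • (0, 1) := by ext <;> simp
  rw [this, map_add, map_smul, map_smul, smul_eq_mul, smul_eq_mul]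
  ring

theorem pdt_pdr_comm {H : ℝ → ℝ → ℝ} {U : Set (ℝ × ℝ)} (hU : IsOpen U)
    (hH : ContDiffOn ℝ ∞ (uncurry H) U) {x y : ℝ} (hp : (x, y) ∈ U) :
    pdt (pdr H) x y = pdr (pdt H) x y := by
  have hd : DifferentiableAt ℝ (fderiv ℝ (uncurry H)) (x, y) :=
    ((hH.fderiv_of_isOpen hU (m := ∞) (by simp)).contDiffAt (hU.mem_nhds hp)).differentiableAt
      (by simp)
  have key : ∀ w z : ℝ × ℝ, fderiv ℝ (fun p => fderiv ℝ (uncurry H) p w) (x, y) z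
      = fderiv ℝ (fderiv ℝ (uncurry H)) (x, y) z w := by
    intro w z
    rw [fderiv_clm_apply hd (differentiableAt_const w)]
    simp
  have e1 : uncurry (pdr H) =ᶠ[nhds (x, y)] fun p => fderiv ℝ (uncurry H) p (0, 1) := by
    filter_upwards [hU.mem_nhds hp] with p hp
    exact pdr_eq_fderiv hU hH hp
  have e2 : uncurry (pdt H) =ᶠ[nhds (x, y)] fun p => fderiv ℝ (uncurry H) p (1, 0) := by
    filter_upwards [hU.mem_nhds hp] with p hp
    exact pdt_eq_fderiv hU hH hp
  rw [pdt_eq_fderiv hU (smooth_pdr hU hH) hp, pdr_eq_fderiv hU (smooth_pdt hU hH) hp,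
    e1.fderiv_eq, e2.fderiv_eq, key, key]
  have hs : IsSymmSndFDerivAt ℝ (uncurry H) (x, y) :=
    (hH.contDiffAt (hU.mem_nhds hp)).isSymmSndFDerivAt
      (by simpa using WithTop.coe_le_coe.mpr (le_top : (2 : ℕ∞) ≤ ⊤))
  exact hs _ _

/-! ### Geometry of the null coordinates -/

/-- The domain `ℝ × (0, 1/(2M))` of the coordinates `(τ̄, ρ̄)`. -/
def extDom (M : ℝ) : Set (ℝ × ℝ) := univ ×ˢ Ioo 0 (1 / (2 * M))

/-- The tortoise coordinate as a function of `ρ̄ = 1/r`. -/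
noncomputable def tort (M ρ : ℝ) : ℝ := rstar M (1 / ρ)

/-- The coefficient `q(ρ̄) = ρ̄²(1 - 2Mρ̄)`, so that `∂_{r_*} = -q ∂_ρ̄` at fixed `t`. -/
def qc (M ρ : ℝ) : ℝ := ρ ^ 2 * (1 - 2 * M * ρ)

theorem isOpen_extDom (M : ℝ) : IsOpen (extDom M) := isOpen_univ.prod isOpen_Ioo

theorem one_sub_pos {M ρ : ℝ} (hM : 0 < M) (h : ρ < 1 / (2 * M)) : 0 < 1 - 2 * M * ρ := by
  rw [lt_div_iff₀ (by positivity)] at h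
  linarith

theorem qc_pos {M ρ : ℝ} (hM : 0 < M) (h0 : 0 < ρ) (h : ρ < 1 / (2 * M)) : 0 < qc M ρ :=
  mul_pos (by positivity) (one_sub_pos hM h)

theorem lt_one_div' {M ρ : ℝ} (hM : 0 < M) (h0 : 0 < ρ) (h : ρ < 1 / (2 * M)) :
    2 * M < 1 / ρ := by
  rw [lt_div_iff₀ h0]
  linarith [one_sub_pos hM h]

theorem hasDerivAt_qc (M ρ : ℝ) : HasDerivAt (qc M) (2 * ρ - 6 * M * ρ ^ 2) ρ := by
  have h := ((hasDerivAt_id ρ).pow 2).mul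
    (((hasDerivAt_id ρ).const_mul (2 * M)).const_sub 1)
  refine HasDerivAt.congr_deriv h ?_
  simp
  ring

theorem hasDerivAt_tort {M ρ : ℝ} (hM : 0 < M) (h0 : 0 < ρ) (h : ρ < 1 / (2 * M)) :
    HasDerivAt (tort M) (-1 / qc M ρ) ρ := by
  have h1 : HasDerivAt (fun p : ℝ => 1 / p) (-1 / ρ ^ 2) ρ := by
    simpa [neg_div] using hasDerivAt_inv h0.ne'
  have h2 := lt_one_div' hM h0 h
  have h3 := h1.add (((h1.sub_const (2 * M)).log (by linarith)).const_mul (2 * M))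
  refine HasDerivAt.congr_deriv h3 ?_
  have h4 := one_sub_pos hM h
  have h5 : 1 / ρ - 2 * M = (1 - 2 * M * ρ) / ρ := by field_simp
  rw [h5, qc]
  generalize he : 1 - 2 * M * ρ = e at h4
  have h6 : 2 * M = (1 - e) / ρ := by field_simp; linarith
  rw [h6]
  field_simp
  ring

theorem tort_lt {M a b : ℝ} (hM : 0 < M) (ha : 0 < a) (hab : a < b) (hb : b < 1 / (2 * M)) :
    tort M b < tort M a := by
  have h1 : 1 / b < 1 / a := one_div_lt_one_div_of_lt ha hab
  have h2 := lt_one_div' hM (ha.trans hab) hb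
  have h3 : Real.log (1 / b - 2 * M) < Real.log (1 / a - 2 * M) :=
    Real.log_lt_log (by linarith) (by linarith)
  unfold tort rstar
  nlinarith

theorem tort_le {M a b : ℝ} (hM : 0 < M) (ha : 0 < a) (hab : a ≤ b) (hb : b < 1 / (2 * M)) :
    tort M b ≤ tort M a := by
  rcases hab.eq_or_lt with rfl | h
  · exact le_rfl
  · exact (tort_lt hM ha h hb).le

theorem le_of_tort_le {M a b : ℝ} (hM : 0 < M) (hb : 0 < b)
    (ha' : a < 1 / (2 * M)) (h : tort M b ≤ tort M a) : a ≤ b := by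
  by_contra! hc
  exact absurd (tort_lt hM hb hc ha') (not_lt.mpr h)

theorem exists_tort_eq {M a b x : ℝ} (hM : 0 < M) (ha : 0 < a) (hab : a ≤ b)
    (hb : b < 1 / (2 * M)) (h1 : tort M b ≤ x) (h2 : x ≤ tort M a) :
    ∃ ρ ∈ Icc a b, tort M ρ = x := by
  have hc : ContinuousOn (tort M) (Icc a b) := fun p hp =>
    (hasDerivAt_tort hM (ha.trans_le hp.1) (hp.2.trans_lt hb)).continuousAt.continuousWithinAt
  exact intermediate_value_Icc' hab hc ⟨h1, h2⟩

/-! ### The equation satisfied by the rescaled solution and its derivatives -/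

theorem isOpen_ext (M : ℝ) : IsOpen ((univ : Set ℝ) ×ˢ Ioi (2 * M)) := isOpen_univ.prod isOpen_Ioi

theorem contDiffOn_nullV {M : ℝ} (hM : 0 < M) {u : ℝ → ℝ → ℝ}
    (hu : ContDiffOn ℝ ∞ (uncurry u) ((univ : Set ℝ) ×ˢ Ioi (2 * M))) :
    ContDiffOn ℝ ∞ (uncurry (nullV M u)) (extDom M) := by
  have h1 : ContDiffOn ℝ ∞ (fun p : ℝ × ℝ => 1 / p.2) (extDom M) :=
    contDiffOn_const.div contDiffOn_snd fun p hp => hp.2.1.ne'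
  have h2 : ContDiffOn ℝ ∞ (fun p : ℝ × ℝ => Real.log (1 / p.2 - 2 * M)) (extDom M) :=
    (h1.sub contDiffOn_const).log fun p hp => by
      have := lt_one_div' hM hp.2.1 hp.2.2
      exact (sub_pos.mpr this).ne'
  have h3 : ContDiffOn ℝ ∞ (fun p : ℝ × ℝ => (p.1 + rstar M (1 / p.2), 1 / p.2)) (extDom M) :=
    (contDiffOn_fst.add (h1.add (contDiffOn_const.mul h2))).prodMk h1
  exact h1.mul (hu.comp h3 fun p hp => ⟨mem_univ _, lt_one_div' hM hp.2.1 hp.2.2⟩)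

theorem pdt_nullV (M : ℝ) (u : ℝ → ℝ → ℝ) : pdt (nullV M u) = nullV M (pdt u) := by
  ext τ ρ
  simp only [pdt, nullV]
  rw [deriv_const_mul_field]
  congr 1
  exact deriv_comp_add_const (fun s => u s (1 / ρ)) _ _

theorem hasDerivAt_nullV {M : ℝ} (hM : 0 < M) {u : ℝ → ℝ → ℝ}
    (hu : ContDiffOn ℝ ∞ (uncurry u) ((univ : Set ℝ) ×ˢ Ioi (2 * M))) (τ : ℝ) {ρ : ℝ}
    (h0 : 0 < ρ) (h : ρ < 1 / (2 * M)) :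
    HasDerivAt (fun p => nullV M u τ p) (-(1 / ρ) * nullV M u τ ρ
      - 1 / qc M ρ * nullV M (pdt u) τ ρ - 1 / ρ ^ 2 * nullV M (pdr u) τ ρ) ρ := by
  have h1 : HasDerivAt (fun p : ℝ => 1 / p) (-1 / ρ ^ 2) ρ := by
    simpa [neg_div] using hasDerivAt_inv h0.ne'
  have h2 := h1.mul (hasDerivAt_curve (isOpen_ext M) hu ((hasDerivAt_tort hM h0 h).const_add τ) h1
    ⟨mem_univ _, lt_one_div' hM h0 h⟩)
  refine HasDerivAt.congr_deriv h2 ?_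
  simp only [nullV, tort]
  ring

theorem pdr_nullV {M : ℝ} (hM : 0 < M) {u : ℝ → ℝ → ℝ}
    (hu : ContDiffOn ℝ ∞ (uncurry u) ((univ : Set ℝ) ×ˢ Ioi (2 * M))) (τ : ℝ) {ρ : ℝ}
    (h0 : 0 < ρ) (h : ρ < 1 / (2 * M)) :
    pdr (nullV M u) τ ρ = -(1 / ρ) * nullV M u τ ρ
      - 1 / qc M ρ * nullV M (pdt u) τ ρ - 1 / ρ ^ 2 * nullV M (pdr u) τ ρ :=
  (hasDerivAt_nullV hM hu τ h0 h).deriv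

/-- The wave equation in outgoing Eddington–Finkelstein coordinates. -/
theorem null_wave {M lam : ℝ} (hM : 0 < M) {u : ℝ → ℝ → ℝ} (hu : IsModeSolution M lam u)
    (τ : ℝ) {ρ : ℝ} (h0 : 0 < ρ) (h : ρ < 1 / (2 * M)) :
    2 * pdt (pdr (nullV M u)) τ ρ + qc M ρ * pdr (pdr (nullV M u)) τ ρ
      + (2 * ρ - 6 * M * ρ ^ 2) * pdr (nullV M u) τ ρ
      = (lam ^ 2 + 2 * M * ρ) * nullV M u τ ρ := by
  obtain ⟨hs, hw⟩ := hu
  have hU := isOpen_ext M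
  have ht := smooth_pdt hU hs
  have hr := smooth_pdr hU hs
  have hr0 := lt_one_div' hM h0 h
  have hf := one_sub_pos hM h
  have hq := qc_pos hM h0 h
  have hmem : (τ, ρ) ∈ extDom M := ⟨mem_univ _, h0, h⟩
  -- the second radial derivative
  have h1 : HasDerivAt (fun p : ℝ => 1 / p) (-1 / ρ ^ 2) ρ := by
    simpa [neg_div] using hasDerivAt_inv h0.ne'
  have hq1 : HasDerivAt (fun p => 1 / qc M p) (-(2 * ρ - 6 * M * ρ ^ 2) / qc M ρ ^ 2) ρ := by
    simp only [one_div]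
    exact (hasDerivAt_qc M ρ).inv hq.ne'
  have h2 : HasDerivAt (fun p : ℝ => 1 / p ^ 2) (-2 / ρ ^ 3) ρ := by
    have := (h1.pow 2)
    refine (this.congr_deriv ?_).congr_of_eventuallyEq (Filter.Eventually.of_forall fun p => ?_)
    · norm_num
      field_simp
    · simp
  have hrr := ((h1.neg.mul (hasDerivAt_nullV hM hs τ h0 h)).sub
    (hq1.mul (hasDerivAt_nullV hM ht τ h0 h))).sub (h2.mul (hasDerivAt_nullV hM hr τ h0 h))
  have hrr' := (hrr.congr_of_eventuallyEq (f₁ := fun p => pdr (nullV M u) τ p) (by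
    filter_upwards [Ioo_mem_nhds h0 h] with p hp
    exact pdr_nullV hM hs τ hp.1 hp.2)).deriv
  change pdr (pdr (nullV M u)) τ ρ = _ at hrr'
  have hcomm : nullV M (pdr (pdt u)) τ ρ = nullV M (pdt (pdr u)) τ ρ := by
    unfold nullV
    rw [pdt_pdr_comm hU hs ⟨mem_univ _, hr0⟩]
  have hw' := hw (τ + rstar M (1 / ρ)) (1 / ρ) hr0
  have hN : -(1 / (1 - 2 * M * ρ)) * nullV M (pdt (pdt u)) τ ρ
      + (1 - 2 * M * ρ) * nullV M (pdr (pdr u)) τ ρ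
      + 2 * ρ * (1 - M * ρ) * nullV M (pdr u) τ ρ - lam ^ 2 * ρ ^ 2 * nullV M u τ ρ = 0 := by
    have e1 : 1 / ρ / (1 / ρ - 2 * M) = 1 / (1 - 2 * M * ρ) := by
      have : 1 / ρ - 2 * M = (1 - 2 * M * ρ) / ρ := by field_simp
      rw [this]
      field_simp
    have e2 : (1 / ρ - 2 * M) / (1 / ρ) = 1 - 2 * M * ρ := by field_simp
    have e3 : 2 * (1 / ρ - M) / (1 / ρ) ^ 2 = 2 * ρ * (1 - M * ρ) := by field_simp
    have e4 : lam ^ 2 / (1 / ρ) ^ 2 = lam ^ 2 * ρ ^ 2 := by field_simp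
    rw [e1, e2, e3, e4] at hw'
    change -(1 / (1 - 2 * M * ρ)) * (1 / ρ * pdtt u _ _) + _ * (1 / ρ * pdrr u _ _)
      + _ * (1 / ρ * _) - _ * (1 / ρ * _) = 0
    linear_combination (1 / ρ) * hw'
  rw [hrr', pdt_pdr_comm (isOpen_extDom M) (contDiffOn_nullV hM hs) hmem, pdt_nullV,
    pdr_nullV hM hs τ h0 h, pdr_nullV hM ht τ h0 h, hcomm]
  simp only [qc, Pi.neg_apply]
  generalize nullV M u τ ρ = a at *
  generalize nullV M (pdt u) τ ρ = b at *
  generalize nullV M (pdr u) τ ρ = c at *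
  generalize nullV M (pdt (pdt u)) τ ρ = d at *
  generalize nullV M (pdr (pdr u)) τ ρ = e at *
  generalize nullV M (pdt (pdr u)) τ ρ = g at *
  have hfe : ∃ f, f = 1 - 2 * M * ρ := ⟨_, rfl⟩
  obtain ⟨f, hfe⟩ := hfe
  have hMe : M = (1 - f) / (2 * ρ) := by field_simp; linarith
  rw [← hfe] at hf hN ⊢
  subst hMe
  have hf' := hf.ne'
  have hN2 : d = f * (f * e + 2 * ρ * (1 - (1 - f) / (2 * ρ) * ρ) * c - lam ^ 2 * ρ ^ 2 * a) := by
    field_simp at hN ⊢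
    linarith
  rw [hN2]
  field_simp
  ring

/-- The `j`-th `ρ̄`-derivative of the rescaled solution. -/
noncomputable def nullD (M : ℝ) (u : ℝ → ℝ → ℝ) (j : ℕ) (τ ρ : ℝ) : ℝ :=
  iteratedDeriv j (fun p => nullV M u τ p) ρ

theorem nullD_zero (M : ℝ) (u : ℝ → ℝ → ℝ) : nullD M u 0 = nullV M u := by
  ext τ ρ
  simp [nullD]

theorem nullD_succ (M : ℝ) (u : ℝ → ℝ → ℝ) (j : ℕ) : nullD M u (j + 1) = pdr (nullD M u j) := by
  ext τ ρ
  simp only [nullD, pdr, iteratedDeriv_succ]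

theorem contDiffOn_nullD {M : ℝ} (hM : 0 < M) {u : ℝ → ℝ → ℝ}
    (hu : ContDiffOn ℝ ∞ (uncurry u) ((univ : Set ℝ) ×ˢ Ioi (2 * M))) (j : ℕ) :
    ContDiffOn ℝ ∞ (uncurry (nullD M u j)) (extDom M) := by
  induction j with
  | zero => rw [nullD_zero]; exact contDiffOn_nullV hM hu
  | succ j ih => rw [nullD_succ]; exact smooth_pdr (isOpen_extDom M) ih

theorem hasDerivAt_nullD {M : ℝ} (hM : 0 < M) {u : ℝ → ℝ → ℝ}
    (hu : ContDiffOn ℝ ∞ (uncurry u) ((univ : Set ℝ) ×ˢ Ioi (2 * M))) (j : ℕ) (τ : ℝ) {ρ : ℝ}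
    (h0 : 0 < ρ) (h : ρ < 1 / (2 * M)) :
    HasDerivAt (fun p => nullD M u j τ p) (nullD M u (j + 1) τ ρ) ρ := by
  have := hasDerivAt_curve (isOpen_extDom M) (contDiffOn_nullD hM hu j)
    (hasDerivAt_const ρ τ) (hasDerivAt_id ρ) ⟨mem_univ _, h0, h⟩
  rw [nullD_succ]
  simpa using this

/-- The wave equation commuted with `∂_ρ̄^j`. The coefficients on the right are those produced by
the Leibniz rule; only their form (affine in `ρ̄`, respectively constant) is needed. For `j = 0`
the truncated index `j - 1` is harmless, as then `b = 0`. -/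
theorem null_wave_commuted {M lam : ℝ} (hM : 0 < M) {u : ℝ → ℝ → ℝ}
    (hu : IsModeSolution M lam u) (j : ℕ) :
    ∃ a c b : ℝ, (j = 0 → a = lam ^ 2 ∧ c = 2 * M ∧ b = 0) ∧
      ∀ τ ρ : ℝ, 0 < ρ → ρ < 1 / (2 * M) →
      2 * pdt (nullD M u (j + 1)) τ ρ + qc M ρ * nullD M u (j + 2) τ ρ
        + (j + 1) * (2 * ρ - 6 * M * ρ ^ 2) * nullD M u (j + 1) τ ρ
        = (a + c * ρ) * nullD M u j τ ρ + b * nullD M u (j - 1) τ ρ := by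
  induction j with
  | zero =>
    refine ⟨lam ^ 2, 2 * M, 0, by simp, fun τ ρ h0 h => ?_⟩
    have := null_wave hM hu τ h0 h
    simp only [nullD_succ, nullD_zero]
    push_cast
    linarith
  | succ j ih =>
    obtain ⟨a, c, b, hb, hj⟩ := ih
    refine ⟨a - (j + 1) * 2, c + 12 * (j + 1) * M, c + b, by simp, fun τ ρ h0 h => ?_⟩
    have hU := isOpen_extDom M
    have hs := hu.1
    have hp : (τ, ρ) ∈ extDom M := ⟨mem_univ _, h0, h⟩
    have d1 := hasDerivAt_nullD hM hs (j + 1) τ h0 h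
    have d2 := hasDerivAt_nullD hM hs (j + 2) τ h0 h
    have d0 := hasDerivAt_nullD hM hs j τ h0 h
    have dt : HasDerivAt (fun p => pdt (nullD M u (j + 1)) τ p)
        (pdt (nullD M u (j + 2)) τ ρ) ρ := by
      have := hasDerivAt_curve hU (smooth_pdt hU (contDiffOn_nullD hM hs (j + 1)))
        (hasDerivAt_const ρ τ) (hasDerivAt_id ρ) hp
      rw [nullD_succ M u (j + 1), pdt_pdr_comm hU (contDiffOn_nullD hM hs (j + 1)) hp]
      simpa using this
    have dq' : HasDerivAt (fun p : ℝ => ((j : ℝ) + 1) * (2 * p - 6 * M * p ^ 2))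
        ((j + 1) * (2 - 12 * M * ρ)) ρ := by
      refine HasDerivAt.congr_deriv ((((hasDerivAt_id ρ).const_mul 2).sub
        (((hasDerivAt_id ρ).pow 2).const_mul (6 * M))).const_mul ((j : ℝ) + 1)) ?_
      simp only [id]
      push_cast
      ring
    have da : HasDerivAt (fun p : ℝ => a + c * p) c ρ := by
      simpa using ((hasDerivAt_id ρ).const_mul c).const_add a
    have db : HasDerivAt (fun p => b * nullD M u (j - 1) τ p) (b * nullD M u j τ ρ) ρ := by
      rcases Nat.eq_zero_or_pos j with rfl | hj0
      · simpa [(hb rfl).2.2] using hasDerivAt_const ρ (0 : ℝ)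
      · have := (hasDerivAt_nullD hM hs (j - 1) τ h0 h).const_mul b
        rwa [Nat.sub_add_cancel hj0] at this
    have hL := ((dt.const_mul 2).add ((hasDerivAt_qc M ρ).mul d2)).add (dq'.mul d1)
    have hR := (da.mul d0).add db
    have heq := hL.unique (hR.congr_of_eventuallyEq (by
      filter_upwards [Ioo_mem_nhds h0 h] with p hp
      exact hj τ p hp.1 hp.2))
    simp only [Nat.add_sub_cancel]
    push_cast
    linear_combination heq

/-- Along the incoming characteristic `τ̄ + 2 r_* = v`, parametrized by `ρ̄`, the wave equation
for `∂_ρ̄^{j+1} V` is a transport equation with integrating factor `q^{j+1}`. -/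
theorem transport {M lam : ℝ} (hM : 0 < M) {u : ℝ → ℝ → ℝ} (hu : IsModeSolution M lam u)
    (j : ℕ) : ∃ a c b : ℝ, (j = 0 → a = lam ^ 2 ∧ c = 2 * M ∧ b = 0) ∧
      ∀ v ρ : ℝ, 0 < ρ → ρ < 1 / (2 * M) →
      HasDerivAt (fun p => qc M p ^ (j + 1) * nullD M u (j + 1) (v - 2 * tort M p) p)
        (qc M ρ ^ j * ((a + c * ρ) * nullD M u j (v - 2 * tort M ρ) ρ
          + b * nullD M u (j - 1) (v - 2 * tort M ρ) ρ)) ρ := by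
  obtain ⟨a, c, b, hb, hj⟩ := null_wave_commuted hM hu j
  refine ⟨a, c, b, hb, fun v ρ h0 h => ?_⟩
  have hq := qc_pos hM h0 h
  have h1 := hasDerivAt_curve (isOpen_extDom M) (contDiffOn_nullD hM hu.1 (j + 1))
    (((hasDerivAt_tort hM h0 h).const_mul 2).const_sub v) (hasDerivAt_id ρ) ⟨mem_univ _, h0, h⟩
  have h2 := ((hasDerivAt_qc M ρ).pow (j + 1)).mul h1
  refine HasDerivAt.congr_deriv h2 ?_
  rw [← hj _ _ h0 h, nullD_succ M u (j + 1)]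
  simp only [id, Pi.pow_apply, Nat.add_sub_cancel]
  push_cast
  field_simp
  ring

/-! ### Initial data -/

/-- `h` has the form `ρ̄^μ g(ρ̄)` on `(0, 1/(2M))` with `g` smooth on `[0, 1/(2M))`. -/
def PowSmooth (M μ : ℝ) (h : ℝ → ℝ) : Prop :=
  ∃ g : ℝ → ℝ, ContDiffOn ℝ ∞ g (Ico 0 (1 / (2 * M))) ∧
    ∀ ρ ∈ Ioo 0 (1 / (2 * M)), h ρ = ρ ^ μ * g ρ

namespace PowSmooth

variable {M μ : ℝ} {h k : ℝ → ℝ}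

theorem congr (hh : PowSmooth M μ h) (hk : ∀ ρ ∈ Ioo 0 (1 / (2 * M)), k ρ = h ρ) :
    PowSmooth M μ k := by
  obtain ⟨g, hg, he⟩ := hh
  exact ⟨g, hg, fun ρ hρ => (hk ρ hρ).trans (he ρ hρ)⟩

theorem add (hh : PowSmooth M μ h) (hk : PowSmooth M μ k) :
    PowSmooth M μ (fun ρ => h ρ + k ρ) := by
  obtain ⟨g, hg, he⟩ := hh
  obtain ⟨g', hg', he'⟩ := hk
  exact ⟨fun ρ => g ρ + g' ρ, hg.add hg', fun ρ hρ => by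
    change h ρ + k ρ = _
    rw [he ρ hρ, he' ρ hρ]; ring⟩

theorem smooth_mul {f : ℝ → ℝ} (hf : ContDiffOn ℝ ∞ f (Ico 0 (1 / (2 * M))))
    (hh : PowSmooth M μ h) : PowSmooth M μ (fun ρ => f ρ * h ρ) := by
  obtain ⟨g, hg, he⟩ := hh
  exact ⟨fun ρ => f ρ * g ρ, hf.mul hg, fun ρ hρ => by
    change f ρ * h ρ = _
    rw [he ρ hρ]; ring⟩

theorem id_mul (hh : PowSmooth M μ h) : PowSmooth M (μ + 1) (fun ρ => ρ * h ρ) := by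
  obtain ⟨g, hg, he⟩ := hh
  exact ⟨g, hg, fun ρ hρ => by
    change ρ * h ρ = _
    rw [he ρ hρ, Real.rpow_add hρ.1, Real.rpow_one]; ring⟩

theorem weaken (hh : PowSmooth M μ h) : PowSmooth M (μ - 1) h := by
  obtain ⟨g, hg, he⟩ := hh
  exact ⟨fun ρ => ρ * g ρ, contDiffOn_id.mul hg, fun ρ hρ => by
    rw [he ρ hρ, Real.rpow_sub hρ.1, Real.rpow_one]
    have := hρ.1.ne'
    field_simp⟩

theorem div_qc (hM : 0 < M) (hh : PowSmooth M μ h) :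
    PowSmooth M (μ - 2) (fun ρ => h ρ / qc M ρ) := by
  obtain ⟨g, hg, he⟩ := hh
  refine ⟨fun ρ => g ρ / (1 - 2 * M * ρ), hg.div ?_ ?_, fun ρ hρ => ?_⟩
  · exact contDiffOn_const.sub (contDiffOn_const.mul contDiffOn_id)
  · exact fun ρ hρ => (one_sub_pos hM hρ.2).ne'
  · change h ρ / qc M ρ = _
    rw [he ρ hρ, Real.rpow_sub hρ.1, Real.rpow_two, qc]
    have := hρ.1.ne'
    have := (one_sub_pos hM hρ.2).ne'
    field_simp

theorem deriv (hM : 0 < M) {h' : ℝ → ℝ} (hh : PowSmooth M μ h)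
    (hd : ∀ ρ ∈ Ioo 0 (1 / (2 * M)), HasDerivAt h (h' ρ) ρ) : PowSmooth M (μ - 1) h' := by
  obtain ⟨g, hg, he⟩ := hh
  have hb : 0 < 1 / (2 * M) := by positivity
  have hun : UniqueDiffOn ℝ (Ico 0 (1 / (2 * M))) := uniqueDiffOn_Ico _ _
  refine ⟨fun ρ => μ * g ρ + ρ * derivWithin g (Ico 0 (1 / (2 * M))) ρ, ?_, fun ρ hρ => ?_⟩
  · exact (contDiffOn_const.mul hg).add
      (contDiffOn_id.mul (hg.derivWithin hun (by simp)))
  · have h1 : HasDerivAt g (derivWithin g (Ico 0 (1 / (2 * M))) ρ) ρ :=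
      ((hg.differentiableOn (by simp)) ρ (Ioo_subset_Ico_self hρ)).hasDerivWithinAt.hasDerivAt
        (Ico_mem_nhds hρ.1 hρ.2)
    have h2 := (Real.hasDerivAt_rpow_const (p := μ) (Or.inl hρ.1.ne')).mul h1
    have h3 := (hd ρ hρ).unique (h2.congr_of_eventuallyEq (by
      filter_upwards [Ioo_mem_nhds hρ.1 hρ.2] with p hp
      exact he p hp))
    rw [h3, Real.rpow_sub hρ.1, Real.rpow_one]
    have := hρ.1.ne'
    field_simp

theorem bound {m : ℝ} (hm' : m < 1 / (2 * M)) (hh : PowSmooth M μ h) :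
    ∃ C, 0 ≤ C ∧ ∀ ρ, 0 < ρ → ρ ≤ m → |h ρ| ≤ C * ρ ^ μ := by
  obtain ⟨g, hg, he⟩ := hh
  obtain ⟨C, hC⟩ := isCompact_Icc.exists_bound_of_continuousOn
    (hg.continuousOn.mono (Icc_subset_Ico_right hm') : ContinuousOn g (Icc 0 m))
  refine ⟨max C 0, le_max_right _ _, fun ρ h0 h1 => ?_⟩
  rw [he ρ ⟨h0, h1.trans_lt hm'⟩, abs_mul, abs_of_nonneg (Real.rpow_nonneg h0.le _), mul_comm]
  gcongr
  exact (hC ρ ⟨h0.le, h1⟩).trans (le_max_left _ _)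

end PowSmooth

/-- Restricted to `{t = 0}`, the derivatives `∂_ρ̄^j V` are `ρ̄^{κ-j}` times a smooth function:
the wave equation expresses the restriction of `∂_ρ̄^{j+2} V` through those of lower order. -/
theorem initial_data {M lam κ : ℝ} (hM : 0 < M) {u : ℝ → ℝ → ℝ} (hu : IsModeSolution M lam u)
    {φt ψt : ℝ → ℝ}
    (hφt : ContDiffOn ℝ ∞ φt (Set.Ico 0 (1/(2*M))))
    (hψt : ContDiffOn ℝ ∞ ψt (Set.Ico 0 (1/(2*M))))
    (hφ : ∀ r : ℝ, 2*M < r → u 0 r = r ^ (-κ-1) * φt (1/r))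
    (hψ : ∀ r : ℝ, 2*M < r → pdt u 0 r = r ^ (-κ-2) * ψt (1/r)) (j : ℕ) :
    PowSmooth M (κ - j) (fun ρ => nullD M u j (-tort M ρ) ρ) := by
  have hder : ∀ j : ℕ, ∀ ρ ∈ Ioo 0 (1 / (2 * M)),
      HasDerivAt (fun p => nullD M u j (-tort M p) p)
        (pdt (nullD M u j) (-tort M ρ) ρ / qc M ρ + nullD M u (j + 1) (-tort M ρ) ρ) ρ := by
    intro j ρ hρ
    have := hasDerivAt_curve (isOpen_extDom M) (contDiffOn_nullD hM hu.1 j)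
      (hasDerivAt_tort hM hρ.1 hρ.2).neg (hasDerivAt_id ρ) ⟨mem_univ _, hρ.1, hρ.2⟩
    refine HasDerivAt.congr_deriv this ?_
    rw [nullD_succ]
    simp only [id, Pi.neg_apply]
    ring
  have hconst : ∀ x : ℝ, ContDiffOn ℝ ∞ (fun _ : ℝ => x) (Ico 0 (1 / (2 * M))) :=
    fun x => contDiffOn_const
  have hpow : ∀ (s : ℝ) (ρ : ℝ), 0 < ρ → 1 / ρ * (1 / ρ) ^ (-s - 1) = ρ ^ s := by
    intro s ρ h0
    rw [one_div, Real.inv_rpow h0.le, ← Real.rpow_neg h0.le, ← Real.rpow_neg_one,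
      ← Real.rpow_add h0]
    congr 1
    ring
  have H0 : PowSmooth M κ (fun ρ => nullD M u 0 (-tort M ρ) ρ) := by
    refine ⟨φt, hφt, fun ρ hρ => ?_⟩
    simp only [nullD_zero, nullV, tort, neg_add_cancel]
    rw [hφ _ (lt_one_div' hM hρ.1 hρ.2), ← hpow κ ρ hρ.1, one_div_one_div, mul_assoc]
  have K0 : PowSmooth M (κ + 1) (fun ρ => pdt (nullD M u 0) (-tort M ρ) ρ) := by
    refine ⟨ψt, hψt, fun ρ hρ => ?_⟩
    simp only [nullD_zero, pdt_nullV]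
    simp only [nullV, tort, neg_add_cancel]
    rw [hψ _ (lt_one_div' hM hρ.1 hρ.2), ← hpow (κ + 1) ρ hρ.1, one_div_one_div, mul_assoc]
    ring_nf
  have H1 : PowSmooth M (κ - (1 : ℕ)) (fun ρ => nullD M u 1 (-tort M ρ) ρ) := by
    have h1 := (K0.div_qc hM).smooth_mul (hconst (-1))
    rw [show κ + 1 - 2 = κ - 1 by ring] at h1
    have h2 := (H0.deriv hM (hder 0)).add h1
    rw [Nat.cast_one]
    exact h2.congr fun ρ _ => by simp only [zero_add]; ring
  have main : ∀ j : ℕ, ∀ i ≤ j + 1,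
      PowSmooth M (κ - i) (fun ρ => nullD M u i (-tort M ρ) ρ) := by
    intro j
    induction j with
    | zero =>
      intro i hi
      interval_cases i
      · simpa using H0
      · exact H1
    | succ j ih =>
      intro i hi
      rcases Nat.lt_or_ge i (j + 2) with hlt | hge
      · exact ih i (by omega)
      obtain rfl : i = j + 2 := by omega
      obtain ⟨a, c, b, -, heq⟩ := null_wave_commuted hM hu j
      have h1 := ih (j + 1) le_rfl
      have h0 := ih j (by omega)
      have hm : PowSmooth M (κ - j) (fun ρ => nullD M u (j - 1) (-tort M ρ) ρ) := by
        rcases Nat.eq_zero_or_pos j with rfl | hj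
        · exact h0
        · have := (ih (j - 1) (by omega)).weaken
          rwa [Nat.cast_sub hj, show κ - ((j : ℝ) - (1 : ℕ)) - 1 = κ - j by push_cast; ring]
            at this
      have t1 := (h1.deriv hM (hder (j + 1))).smooth_mul (hconst 2)
      have t2 := (h1.id_mul.smooth_mul (f := fun ρ => ((j : ℝ) + 1) * (2 - 6 * M * ρ))
        (contDiffOn_const.mul (contDiffOn_const.sub (contDiffOn_const.mul contDiffOn_id))))
      have t3 := h0.smooth_mul (f := fun ρ => -(a + c * ρ))
        (contDiffOn_const.add (contDiffOn_const.mul contDiffOn_id)).neg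
      have t4 := hm.smooth_mul (hconst (-b))
      rw [show κ - ((j + 1 : ℕ) : ℝ) + 1 = κ - j by push_cast; ring] at t2
      have t5 := ((t2.add t3).add t4).div_qc hM
      rw [show κ - ((j + 1 : ℕ) : ℝ) - 1 = κ - ((j + 2 : ℕ) : ℝ) by push_cast; ring] at t1
      rw [show κ - (j : ℝ) - 2 = κ - ((j + 2 : ℕ) : ℝ) by push_cast; ring] at t5
      refine (t1.add t5).congr fun ρ hρ => ?_
      have hq := (qc_pos hM hρ.1 hρ.2).ne'
      have := heq (-tort M ρ) ρ hρ.1 hρ.2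
      field_simp
      linear_combination -this
  exact main j j (by omega)

/-! ### Weighted estimates along characteristics -/

/-- Comparison of increments: `|f'| ≤ g'` bounds the variation of `f` by that of `g`. All the
integrations along characteristics below are of this form, with an explicit `g`. -/
theorem abs_sub_le_of_deriv {f g f' g' : ℝ → ℝ} {a b : ℝ} (hab : a ≤ b)
    (hf : ∀ x ∈ Icc a b, HasDerivAt f (f' x) x) (hg : ∀ x ∈ Icc a b, HasDerivAt g (g' x) x)
    (h : ∀ x ∈ Icc a b, |f' x| ≤ g' x) : |f b - f a| ≤ g b - g a := by
  have m1 : MonotoneOn (fun x => g x - f x) (Icc a b) :=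
    monotoneOn_of_hasDerivWithinAt_nonneg (convex_Icc a b)
      (fun x hx => ((hg x hx).sub (hf x hx)).continuousAt.continuousWithinAt)
      (fun x hx => ((hg x (interior_subset hx)).sub (hf x (interior_subset hx))).hasDerivWithinAt)
      (fun x hx => by linarith [le_abs_self (f' x), h x (interior_subset hx)])
  have m2 : MonotoneOn (fun x => g x + f x) (Icc a b) :=
    monotoneOn_of_hasDerivWithinAt_nonneg (convex_Icc a b)
      (fun x hx => ((hg x hx).add (hf x hx)).continuousAt.continuousWithinAt)
      (fun x hx => ((hg x (interior_subset hx)).add (hf x (interior_subset hx))).hasDerivWithinAt)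
      (fun x hx => by linarith [neg_abs_le (f' x), h x (interior_subset hx)])
  have h1 := m1 (left_mem_Icc.mpr hab) (right_mem_Icc.mpr hab) hab
  have h2 := m2 (left_mem_Icc.mpr hab) (right_mem_Icc.mpr hab) hab
  simp only at h1 h2
  rw [abs_le]
  constructor <;> linarith

/-- Constants adapted to the region `{τ̄ ≤ T, t ≥ 0}`. By `hmT`, and because `r_*` decreases in
`ρ̄`, the region lies in `{ρ̄ ≤ m}`, away from the horizon `ρ̄ = 1/(2M)`. The shift `A` makes
`A - τ̄ ≥ 1`, and there `A + r_*` is comparable to `r = 1/ρ̄` with constant `B`. -/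
structure Frame (M T A B m : ℝ) : Prop where
  hM : 0 < M
  hm : 0 < m
  hm' : m < 1 / (2 * M)
  hB : 1 ≤ B
  hAT : 1 ≤ A - T
  hmT : tort M m ≤ -T
  lo : ∀ ρ, 0 < ρ → ρ ≤ m → 1 / ρ ≤ A + tort M ρ
  hi : ∀ ρ, 0 < ρ → ρ ≤ m → A + tort M ρ ≤ B / ρ

theorem exists_frame {M : ℝ} (hM : 0 < M) (T : ℝ) : ∃ A B m, Frame M T A B m := by
  -- `m = 1/r` with `r = 2M + exp (-X)`, so that `r_* = 2M + exp (-X) - 2MX ≤ -T`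
  set X := max 0 ((2 * M + 1 + T) / (2 * M)) with hX
  have hX0 : 0 ≤ X := le_max_left _ _
  have hX1 : 2 * M + 1 + T ≤ 2 * M * X := by
    have := le_max_right 0 ((2 * M + 1 + T) / (2 * M))
    rw [div_le_iff₀ (by positivity)] at this
    linarith
  have he : 0 < Real.exp (-X) := Real.exp_pos _
  have he1 : Real.exp (-X) ≤ 1 := Real.exp_le_one_iff.mpr (by linarith)
  set m := 1 / (2 * M + Real.exp (-X)) with hm
  have hm0 : 0 < m := by positivity
  set A := max (T + 1) (2 * M * X)
  have hA0 : 0 ≤ A := le_trans (by positivity) (le_max_right _ _)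
  have hm1 : 1 / m = 2 * M + Real.exp (-X) := by rw [hm, one_div_one_div]
  have hm' : m < 1 / (2 * M) := one_div_lt_one_div_of_lt (by positivity) (by linarith)
  refine ⟨A, A * m + 1 + 2 * M, m, hM, hm0, hm', ?_, ?_, ?_, fun ρ h0 h1 => ?_, fun ρ h0 h1 => ?_⟩
  · nlinarith [mul_nonneg hA0 hm0.le]
  · linarith [le_max_left (T + 1) (2 * M * X)]
  · rw [tort, rstar, hm1, add_sub_cancel_left, Real.log_exp]
    linarith
  · have h2 : 1 / m ≤ 1 / ρ := one_div_le_one_div_of_le h0 h1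
    have h3 : -X ≤ Real.log (1 / ρ - 2 * M) := by
      rw [Real.le_log_iff_exp_le (by linarith)]
      linarith
    have h4 := le_max_right (T + 1) (2 * M * X)
    rw [tort, rstar]
    nlinarith
  · have h2 : 1 / m ≤ 1 / ρ := one_div_le_one_div_of_le h0 h1
    have h3 := Real.log_le_sub_one_of_pos (x := 1 / ρ - 2 * M) (by linarith)
    have h4 : A ≤ A * m / ρ := by
      rw [le_div_iff₀ h0]
      exact mul_le_mul_of_nonneg_left h1 hA0
    rw [tort, rstar, add_div, add_div]
    have h5 : 2 * M * Real.log (1 / ρ - 2 * M) ≤ 2 * M / ρ := by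
      rw [← mul_one_div (2 * M)]
      exact mul_le_mul_of_nonneg_left (by linarith) (by linarith)
    linarith

/-- The region `τ̄ ≤ T`, `t ≥ 0`, with the shifted advanced time `A + t + r_*` restricted to `S`. -/
def Dom (M T A : ℝ) (S : Set ℝ) (τ ρ : ℝ) : Prop :=
  0 < ρ ∧ ρ < 1 / (2 * M) ∧ τ ≤ T ∧ 0 ≤ τ + tort M ρ ∧ A + τ + 2 * tort M ρ ∈ S

/-- The shifted advanced time `A + t + r_* = A + τ̄ + 2 r_*`. -/
noncomputable def vh (M A τ ρ : ℝ) : ℝ := A + τ + 2 * tort M ρ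

section
variable {M T A B m : ℝ} {S : Set ℝ} {τ ρ : ℝ}

theorem Dom.le_m (F : Frame M T A B m) (h : Dom M T A S τ ρ) : ρ ≤ m := by
  obtain ⟨h0, h1, h2, h3, -⟩ := h
  exact le_of_tort_le F.hM F.hm h1 (by linarith [F.hmT])

theorem Dom.one_le_sg (F : Frame M T A B m) (h : Dom M T A S τ ρ) : 1 ≤ A - τ := by
  linarith [F.hAT, h.2.2.1]

theorem Dom.sg_le (F : Frame M T A B m) (h : Dom M T A S τ ρ) : A - τ ≤ B / ρ := by
  linarith [F.hi ρ h.1 (h.le_m F), h.2.2.2.1]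

theorem Dom.le_vh (F : Frame M T A B m) (h : Dom M T A S τ ρ) : 1 / ρ ≤ vh M A τ ρ := by
  unfold vh
  linarith [F.lo ρ h.1 (h.le_m F), h.2.2.2.1]

theorem Dom.vh_le (F : Frame M T A B m) (h : Dom M T A S τ ρ) : vh M A τ ρ ≤ 2 * B / ρ := by
  have := F.hi ρ h.1 (h.le_m F)
  have := h.one_le_sg F
  rw [mul_div_assoc]
  unfold vh
  linarith

theorem Dom.sg_le_vh (h : Dom M T A S τ ρ) : A - τ ≤ vh M A τ ρ := by
  unfold vh
  linarith [h.2.2.2.1]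

theorem Dom.vh_pos (F : Frame M T A B m) (h : Dom M T A S τ ρ) : 0 < vh M A τ ρ :=
  lt_of_lt_of_le (one_div_pos.mpr h.1) (h.le_vh F)

theorem Dom.qc_pos (F : Frame M T A B m) (h : Dom M T A S τ ρ) : 0 < qc M ρ :=
  _root_.qc_pos F.hM h.1 h.2.1

theorem Dom.qc_le (F : Frame M T A B m) (h : Dom M T A S τ ρ) : qc M ρ ≤ ρ ^ 2 := by
  unfold qc
  have := mul_pos F.hM h.1
  nlinarith [sq_nonneg ρ]

/-- Integration along an incoming characteristic, on which `vh` is constant: the weight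
`(A - τ̄)^{-p}` is, up to a constant, a primitive of `(A - τ̄)^{-(p+1)} / q`. -/
theorem incoming (F : Frame M T A B m) {G G' : ℝ → ℝ → ℝ} {p k C C₂ : ℝ} (hp : 0 < p)
    (hC : 0 ≤ C) (hC₂ : 0 ≤ C₂)
    (hG : ∀ v ρ, 0 < ρ → ρ < 1 / (2 * M) → HasDerivAt (fun x => G (v - 2 * tort M x) x)
      (G' (v - 2 * tort M ρ) ρ) ρ)
    (hG' : ∀ τ ρ, Dom M T A S τ ρ →
      |G' τ ρ| ≤ C * (A - τ) ^ (-(p + 1)) * vh M A τ ρ ^ k / qc M ρ)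
    (hin : ∀ ρ, 0 < ρ → ρ ≤ m → |G (-tort M ρ) ρ| ≤ C₂ * (A + tort M ρ) ^ (k - p))
    {τ ρ : ℝ} (h : Dom M T A S τ ρ) :
    |G τ ρ| ≤ (C₂ + C / (2 * p)) * (A - τ) ^ (-p) * vh M A τ ρ ^ k := by
  have hM := F.hM
  set v := τ + 2 * tort M ρ with hv
  have hw : vh M A τ ρ = A + v := by rw [vh, hv]; ring
  have hw0 : 0 < A + v := hw ▸ h.vh_pos F
  have hρw : 1 / (A + v) ≤ ρ := by
    have := h.le_vh F
    rw [hw] at this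
    rwa [one_div_le hw0 h.1]
  have hy := F.lo (1 / (A + v)) (by positivity) (hρw.trans (h.le_m F))
  rw [one_div_one_div] at hy
  obtain ⟨ρi, hρi, hti⟩ := exists_tort_eq (x := v) hM (by positivity) hρw h.2.1
    (by linarith [h.2.2.2.1]) (by linarith)
  have hi0 : 0 < ρi := lt_of_lt_of_le (by positivity) hρi.1
  have hdom : ∀ x ∈ Icc ρi ρ, Dom M T A S (v - 2 * tort M x) x := by
    intro x hx
    have hx0 := hi0.trans_le hx.1
    have hx1 := hx.2.trans_lt h.2.1
    refine ⟨hx0, hx1, ?_, ?_, ?_⟩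
    · linarith [tort_le hM hx0 hx.2 h.2.1, h.2.2.1]
    · linarith [tort_le hM hi0 hx.1 hx1]
    · have := h.2.2.2.2
      rwa [show A + (v - 2 * tort M x) + 2 * tort M x = A + τ + 2 * tort M ρ by rw [hv]; ring]
  have hvx : ∀ x, vh M A (v - 2 * tort M x) x = A + v := fun x => by unfold vh; ring
  have key := abs_sub_le_of_deriv hρi.2
    (f := fun x => G (v - 2 * tort M x) x) (f' := fun x => G' (v - 2 * tort M x) x)
    (g := fun x => C / (2 * p) * (A - (v - 2 * tort M x)) ^ (-p) * (A + v) ^ k)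
    (g' := fun x => C * (A - (v - 2 * tort M x)) ^ (-(p + 1)) * (A + v) ^ k / qc M x)
    (fun x hx => hG v x (hdom x hx).1 (hdom x hx).2.1) ?_ ?_
  · simp only [hti] at key
    have e1 : v - 2 * tort M ρ = τ := by rw [hv]; ring
    have e2 : v - 2 * v = -v := by ring
    have h2 := hin ρi hi0 (hρi.2.trans (h.le_m F))
    rw [hti] at h2
    rw [e1, e2] at key
    have hs := h.one_le_sg F
    have h3 : (A + v) ^ (k - p) ≤ (A - τ) ^ (-p) * (A + v) ^ k := by
      rw [sub_eq_add_neg, Real.rpow_add hw0, mul_comm]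
      gcongr ?_ * _
      exact Real.rpow_le_rpow_of_nonpos (by linarith) (by linarith [h.2.2.2.1]) (by linarith)
    have h4 : 0 ≤ C / (2 * p) * (A - -v) ^ (-p) * (A + v) ^ k := by
      rw [sub_neg_eq_add]
      positivity
    rw [hw]
    have h5 := mul_le_mul_of_nonneg_left h3 hC₂
    have h6 := abs_sub_abs_le_abs_sub (G τ ρ) (G (-v) ρi)
    nlinarith
  · intro x hx
    have hd := hdom x hx
    have hs := hd.one_le_sg F
    have h1 := (((hasDerivAt_tort hM hd.1 hd.2.1).const_mul 2).const_sub v).const_sub A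
    have h2 := ((h1.rpow_const (p := -p) (Or.inl (by linarith))).const_mul
      (C / (2 * p))).mul_const ((A + v) ^ k)
    refine HasDerivAt.congr_deriv h2 ?_
    rw [show -(p + 1) = -p - 1 by ring]
    have := (hd.qc_pos F).ne'
    field_simp
  · intro x hx
    have := hG' _ _ (hdom x hx)
    rwa [hvx] at this

/-- Integration along an outgoing characteristic `τ̄ = const`, from `{t = 0}`, where
`vh = A - τ̄`. The primitive of `vh^{k-1} / q` is, up to sign and a constant, `vh^k`. As `S` is a
lower set and `vh` decreases in `ρ̄`, the characteristic stays in the region. -/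
theorem outgoing (F : Frame M T A B m) (hS : IsLowerSet S) {V V1 : ℝ → ℝ → ℝ}
    {a k C C₂ : ℝ} (hk : k ≠ 0)
    (hV : ∀ τ ρ, 0 < ρ → ρ < 1 / (2 * M) → HasDerivAt (fun x => V τ x) (V1 τ ρ) ρ)
    (hV1 : ∀ τ ρ, Dom M T A S τ ρ →
      |V1 τ ρ| ≤ C * (A - τ) ^ (-a) * vh M A τ ρ ^ (k - 1) / qc M ρ)
    (hin : ∀ ρ, 0 < ρ → ρ ≤ m → |V (-tort M ρ) ρ| ≤ C₂ * (A + tort M ρ) ^ (k - a))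
    {τ ρ : ℝ} (h : Dom M T A S τ ρ) :
    |V τ ρ| ≤ C₂ * (A - τ) ^ (k - a)
      + C / (2 * k) * (A - τ) ^ (-a) * (vh M A τ ρ ^ k - (A - τ) ^ k) := by
  have hM := F.hM
  obtain ⟨ρs, hρs, hts⟩ := exists_tort_eq (x := -τ) hM h.1 (h.le_m F) F.hm'
    (by linarith [F.hmT, h.2.2.1]) (by linarith [h.2.2.2.1])
  have hs0 : 0 < ρs := h.1.trans_le hρs.1
  have hs1 : ρs < 1 / (2 * M) := hρs.2.trans_lt F.hm'
  have hdom : ∀ x ∈ Icc ρ ρs, Dom M T A S τ x := by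
    intro x hx
    have hx0 := h.1.trans_le hx.1
    have hx1 := hx.2.trans_lt hs1
    refine ⟨hx0, hx1, h.2.2.1, ?_, hS ?_ h.2.2.2.2⟩
    · linarith [tort_le hM hx0 hx.2 hs1]
    · linarith [tort_le hM h.1 hx.1 hx1]
  have key := abs_sub_le_of_deriv hρs.1
    (f := fun x => V τ x) (f' := fun x => V1 τ x)
    (g := fun x => -(C / (2 * k) * (A - τ) ^ (-a)) * (vh M A τ x) ^ k)
    (g' := fun x => C * (A - τ) ^ (-a) * vh M A τ x ^ (k - 1) / qc M x)
    (fun x hx => hV τ x (hdom x hx).1 (hdom x hx).2.1) ?_ (fun x hx => hV1 _ _ (hdom x hx))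
  · have e1 : vh M A τ ρs = A - τ := by unfold vh; rw [hts]; ring
    have h2 := hin ρs hs0 hρs.2
    rw [hts, neg_neg, ← sub_eq_add_neg] at h2
    simp only [e1] at key
    have h6 := abs_sub_abs_le_abs_sub (V τ ρ) (V τ ρs)
    rw [abs_sub_comm] at h6
    linarith
  · intro x hx
    have hd := hdom x hx
    have h1 := ((hasDerivAt_tort hM hd.1 hd.2.1).const_mul 2).const_add (A + τ)
    have h2 := ((h1.rpow_const (p := k) (Or.inl (hd.vh_pos F).ne')).const_mul
      (-(C / (2 * k) * (A - τ) ^ (-a))))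
    refine HasDerivAt.congr_deriv h2 ?_
    have := (hd.qc_pos F).ne'
    rw [vh]
    field_simp

/-- For `k > 0` the integral is dominated by its end point, where `vh` is largest. -/
theorem outgoing_pos (F : Frame M T A B m) (hS : IsLowerSet S) {V V1 : ℝ → ℝ → ℝ}
    {a k C C₂ : ℝ} (hk : 0 < k) (hC : 0 ≤ C) (hC₂ : 0 ≤ C₂)
    (hV : ∀ τ ρ, 0 < ρ → ρ < 1 / (2 * M) → HasDerivAt (fun x => V τ x) (V1 τ ρ) ρ)
    (hV1 : ∀ τ ρ, Dom M T A S τ ρ →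
      |V1 τ ρ| ≤ C * (A - τ) ^ (-a) * vh M A τ ρ ^ (k - 1) / qc M ρ)
    (hin : ∀ ρ, 0 < ρ → ρ ≤ m → |V (-tort M ρ) ρ| ≤ C₂ * (A + tort M ρ) ^ (k - a))
    {τ ρ : ℝ} (h : Dom M T A S τ ρ) :
    |V τ ρ| ≤ (C₂ + C / (2 * k)) * (A - τ) ^ (-a) * vh M A τ ρ ^ k := by
  have h1 := outgoing F hS hk.ne' hV hV1 hin h
  have hs := h.one_le_sg F
  have hs0 : 0 < A - τ := by linarith
  have h2 : (A - τ) ^ (k - a) ≤ (A - τ) ^ (-a) * vh M A τ ρ ^ k := by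
    rw [sub_eq_neg_add k a, Real.rpow_add hs0]
    gcongr
    exact h.sg_le_vh
  have h3 : 0 ≤ C / (2 * k) * (A - τ) ^ (-a) * (A - τ) ^ k := by positivity
  have h4 := mul_le_mul_of_nonneg_left h2 hC₂
  nlinarith

/-- For `k < 0` the integral converges at null infinity and no growth in `vh` is left. -/
theorem outgoing_neg (F : Frame M T A B m) (hS : IsLowerSet S) {V V1 : ℝ → ℝ → ℝ}
    {a k C C₂ : ℝ} (hk : k < 0) (hC : 0 ≤ C)
    (hV : ∀ τ ρ, 0 < ρ → ρ < 1 / (2 * M) → HasDerivAt (fun x => V τ x) (V1 τ ρ) ρ)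
    (hV1 : ∀ τ ρ, Dom M T A S τ ρ →
      |V1 τ ρ| ≤ C * (A - τ) ^ (-a) * vh M A τ ρ ^ (k - 1) / qc M ρ)
    (hin : ∀ ρ, 0 < ρ → ρ ≤ m → |V (-tort M ρ) ρ| ≤ C₂ * (A + tort M ρ) ^ (k - a))
    {τ ρ : ℝ} (h : Dom M T A S τ ρ) :
    |V τ ρ| ≤ (C₂ + C / (2 * -k)) * (A - τ) ^ (k - a) := by
  have h1 := outgoing F hS hk.ne hV hV1 hin h
  have hs := h.one_le_sg F
  have hs0 : 0 < A - τ := by linarith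
  have hk' : 0 < -k := by linarith
  have hv := h.vh_pos F
  have h2 : (A - τ) ^ (k - a) = (A - τ) ^ (-a) * (A - τ) ^ k := by
    rw [sub_eq_neg_add k a, Real.rpow_add hs0]
  have h3 : 0 ≤ C / (2 * -k) * (A - τ) ^ (-a) * vh M A τ ρ ^ k := by positivity
  have h4 : C / (2 * k) = -(C / (2 * -k)) := by
    rw [mul_neg, div_neg, neg_neg]
  rw [h4] at h1
  rw [h2] at h1 ⊢
  nlinarith

end

/-! ### Decay estimates in the region `t ≥ 0` -/

/-- Powers, of any sign, of comparable quantities are comparable. -/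
theorem rpow_comp {B x s : ℝ} (e : ℝ) (hB : 1 ≤ B) (hx : 0 < x) (h1 : x ≤ s) (h2 : s ≤ B * x) :
    x ^ e ≤ B ^ |e| * s ^ e := by
  have hs : 0 < s := hx.trans_le h1
  rcases le_or_gt 0 e with he | he
  · have h3 : 1 ≤ B ^ |e| := Real.one_le_rpow hB (abs_nonneg e)
    have h4 : x ^ e ≤ s ^ e := Real.rpow_le_rpow hx.le h1 he
    nlinarith [Real.rpow_nonneg hs.le e]
  · have hB0 : 0 < B := by linarith
    have h3 : (B * x) ^ e ≤ s ^ e := Real.rpow_le_rpow_of_nonpos hs h2 he.le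
    rw [Real.mul_rpow hB0.le hx.le] at h3
    rw [abs_of_neg he, Real.rpow_neg hB0.le, ← div_eq_inv_mul, le_div_iff₀ (by positivity)]
    linarith

/-- A bound by a power of `ρ̄` is a bound by the opposite power of `A + r_*`. -/
theorem init_conv {M T A B m μ C : ℝ} (F : Frame M T A B m) (hC : 0 ≤ C) {ρ y : ℝ}
    (h0 : 0 < ρ) (h1 : ρ ≤ m) (hy : y ≤ C * ρ ^ μ) :
    y ≤ C * B ^ |μ| * (A + tort M ρ) ^ (-μ) := by
  have h2 := rpow_comp (-μ) F.hB (one_div_pos.mpr h0) (F.lo ρ h0 h1)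
    (by rw [mul_one_div]; exact F.hi ρ h0 h1)
  rw [one_div, Real.inv_rpow h0.le, Real.rpow_neg h0.le, inv_inv, abs_neg] at h2
  calc y ≤ C * ρ ^ μ := hy
    _ ≤ C * (B ^ |μ| * (A + tort M ρ) ^ (-μ)) := mul_le_mul_of_nonneg_left h2 hC
    _ = _ := by ring

section
variable {M T A B m lam κ : ℝ} {u : ℝ → ℝ → ℝ}

/-- `q ≤ (2B)² / vh²`. -/
theorem Dom.qc_vh {S : Set ℝ} (F : Frame M T A B m) {τ ρ : ℝ} (h : Dom M T A S τ ρ) :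
    qc M ρ * vh M A τ ρ ^ 2 ≤ (2 * B) ^ 2 := by
  have h1 := h.vh_le F
  rw [le_div_iff₀ h.1] at h1
  have hv := h.vh_pos F
  have h3 : (vh M A τ ρ * ρ) ^ 2 ≤ (2 * B) ^ 2 :=
    pow_le_pow_left₀ (mul_pos hv h.1).le h1 2
  calc qc M ρ * vh M A τ ρ ^ 2 ≤ ρ ^ 2 * vh M A τ ρ ^ 2 := by
        gcongr
        exact h.qc_le F
    _ = (vh M A τ ρ * ρ) ^ 2 := by ring
    _ ≤ _ := h3

theorem Dom.vh_qc {S : Set ℝ} (F : Frame M T A B m) {τ ρ : ℝ} (h : Dom M T A S τ ρ) :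
    1 - 2 * M * m ≤ qc M ρ * vh M A τ ρ ^ 2 := by
  have h1 := h.le_vh F
  rw [div_le_iff₀ h.1] at h1
  have h2 : 1 ≤ (vh M A τ ρ * ρ) ^ 2 := one_le_pow₀ h1
  have h3 := one_sub_pos F.hM F.hm'
  have h4 : 1 - 2 * M * m ≤ 1 - 2 * M * ρ := by
    have := mul_le_mul_of_nonneg_left (h.le_m F) (by linarith [F.hM] : 0 ≤ 2 * M)
    linarith
  calc 1 - 2 * M * m ≤ (1 - 2 * M * ρ) * 1 := by linarith
    _ ≤ (1 - 2 * M * ρ) * (vh M A τ ρ * ρ) ^ 2 := by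
        apply mul_le_mul_of_nonneg_left h2
        linarith
    _ = _ := by unfold qc; ring

/-- Bound for the transported quantity `q^{n} ∂_ρ̄^n V` on `{t = 0}`. -/
theorem init_transported (F : Frame M T A B m)
    (hdata : ∀ j : ℕ, PowSmooth M (κ - j) (fun ρ => nullD M u j (-tort M ρ) ρ)) (n : ℕ) :
    ∃ C, 0 ≤ C ∧ ∀ ρ, 0 < ρ → ρ ≤ m →
      |qc M ρ ^ n * nullD M u n (-tort M ρ) ρ| ≤ C * (A + tort M ρ) ^ (-(κ + n)) := by
  obtain ⟨C, hC, hb⟩ := (hdata n).bound F.hm'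
  have hB := F.hB
  refine ⟨C * B ^ |κ + n|, by positivity, fun ρ h0 h1 => init_conv F hC h0 h1 ?_⟩
  have hq := qc_pos F.hM h0 (h1.trans_lt F.hm')
  have hq1 : qc M ρ ≤ ρ ^ 2 := by
    unfold qc
    have := mul_pos F.hM h0
    nlinarith [sq_nonneg ρ]
  rw [abs_mul, abs_of_pos (pow_pos hq n)]
  calc qc M ρ ^ n * |nullD M u n (-tort M ρ) ρ| ≤ (ρ ^ 2) ^ n * (C * ρ ^ (κ - n)) := by
        gcongr
        exact hb ρ h0 h1
    _ = C * (ρ ^ (κ - n) * ρ ^ (2 * n)) := by ring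
    _ = C * ρ ^ (κ + n) := by
        rw [← Real.rpow_add_natCast h0.ne']
        congr 2
        push_cast
        ring

/-- Decay of `∂_ρ̄^{j+1} V` from decay of `∂_ρ̄^j V` and `∂_ρ̄^{j-1} V`, by integrating the
transport equation; the exponents are tied together by the homogeneity of the initial data. -/
theorem transport_step (F : Frame M T A B m) (hu : IsModeSolution M lam u)
    (hdata : ∀ j : ℕ, PowSmooth M (κ - j) (fun ρ => nullD M u j (-tort M ρ) ρ)) (j : ℕ)
    {p k C : ℝ} (hp : 0 < p) (hk : k = p + 1 + j - κ) (hC : 0 ≤ C)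
    (h0 : ∀ τ ρ, Dom M T A univ τ ρ →
      |nullD M u j τ ρ| ≤ C * ((A - τ) ^ (-(p + 1)) * vh M A τ ρ ^ k))
    (h1 : ∀ τ ρ, Dom M T A univ τ ρ →
      |nullD M u (j - 1) τ ρ| ≤ C * ((A - τ) ^ (-(p + 1)) * vh M A τ ρ ^ k)) :
    ∃ C', 0 ≤ C' ∧ ∀ τ ρ, Dom M T A univ τ ρ →
      |nullD M u (j + 1) τ ρ| ≤ C' * ((A - τ) ^ (-p) * vh M A τ ρ ^ k) := by
  obtain ⟨a, c, b, -, htr⟩ := transport F.hM hu j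
  obtain ⟨C₂, hC₂, hin⟩ := init_transported F hdata (j + 1)
  have hB0 : 0 < B := by linarith [F.hB]
  have hm := F.hm
  set K := |a| + |c| * m + |b| with hK
  have hK0 : 0 ≤ K := by positivity
  set n : ℕ := j + 1 with hn
  set C₁ := K * C * ((2 * B) ^ 2) ^ n with hC₁
  have hC₁0 : 0 ≤ C₁ := by positivity
  set c0 := 1 - 2 * M * m with hc0
  have hc0p : 0 < c0 := one_sub_pos F.hM F.hm'
  refine ⟨(C₂ + C₁ / (2 * p)) / c0 ^ n, by positivity, fun τ ρ h => ?_⟩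
  have hsplit : ∀ {τ ρ : ℝ}, Dom M T A univ τ ρ →
      vh M A τ ρ ^ (k - (2 * n : ℕ)) * (vh M A τ ρ ^ 2) ^ n = vh M A τ ρ ^ k := by
    intro τ ρ h
    have hv := h.vh_pos F
    rw [← pow_mul, Real.rpow_sub_natCast hv.ne']
    field_simp
  have key := incoming F (S := univ) (G := fun τ ρ => qc M ρ ^ n * nullD M u n τ ρ)
    (G' := fun τ ρ => qc M ρ ^ j * ((a + c * ρ) * nullD M u j τ ρ + b * nullD M u (j - 1) τ ρ))
    (k := k - (2 * n : ℕ)) (C := C₁) hp hC₁0 hC₂ (fun v ρ hp0 hp1 => htr v ρ hp0 hp1) ?_ ?_ h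
  · have hv := h.vh_pos F
    have hs := h.one_le_sg F
    have hq := h.qc_pos F
    rw [abs_mul, abs_of_pos (pow_pos hq n)] at key
    have e1 : c0 ^ n ≤ qc M ρ ^ n * (vh M A τ ρ ^ 2) ^ n := by
      rw [← mul_pow]
      exact pow_le_pow_left₀ hc0p.le (h.vh_qc F) n
    rw [div_mul_eq_mul_div, le_div_iff₀ (by positivity), ← hsplit h]
    calc |nullD M u n τ ρ| * c0 ^ n
        ≤ |nullD M u n τ ρ| * (qc M ρ ^ n * (vh M A τ ρ ^ 2) ^ n) := by gcongr
      _ = (qc M ρ ^ n * |nullD M u n τ ρ|) * (vh M A τ ρ ^ 2) ^ n := by ring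
      _ ≤ _ := mul_le_mul_of_nonneg_right key (by positivity)
      _ = _ := by ring
  · intro τ ρ h
    have hv := h.vh_pos F
    have hs := h.one_le_sg F
    have hq := h.qc_pos F
    set W := (A - τ) ^ (-(p + 1)) * vh M A τ ρ ^ k with hW
    have hW0 : 0 ≤ W := by
      have : 0 ≤ A - τ := by linarith
      positivity
    have e1 : |(a + c * ρ) * nullD M u j τ ρ + b * nullD M u (j - 1) τ ρ| ≤ K * (C * W) := by
      refine (abs_add_le _ _).trans ?_
      rw [abs_mul, abs_mul]
      have e2 : |a + c * ρ| ≤ |a| + |c| * m := by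
        refine (abs_add_le _ _).trans ?_
        rw [abs_mul, abs_of_pos h.1]
        gcongr
        exact h.le_m F
      have e3 := mul_le_mul e2 (h0 τ ρ h) (abs_nonneg _) (by positivity)
      have e4 := mul_le_mul_of_nonneg_left (h1 τ ρ h) (abs_nonneg b)
      calc _ ≤ (|a| + |c| * m) * (C * W) + |b| * (C * W) := add_le_add e3 e4
        _ = _ := by rw [hK]; ring
    rw [abs_mul, abs_of_pos (pow_pos hq j), le_div_iff₀ hq]
    have e5 : qc M ρ ^ n * (vh M A τ ρ ^ 2) ^ n ≤ ((2 * B) ^ 2) ^ n := by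
      rw [← mul_pow]
      exact pow_le_pow_left₀ (by positivity) (h.qc_vh F) n
    have hvk : 0 ≤ vh M A τ ρ ^ (k - (2 * n : ℕ)) := Real.rpow_nonneg hv.le _
    have hsk : 0 ≤ (A - τ) ^ (-(p + 1)) := Real.rpow_nonneg (by linarith) _
    calc qc M ρ ^ j * |(a + c * ρ) * nullD M u j τ ρ + b * nullD M u (j - 1) τ ρ| * qc M ρ
        ≤ qc M ρ ^ j * (K * (C * W)) * qc M ρ := by gcongr
      _ = K * C * (A - τ) ^ (-(p + 1)) * vh M A τ ρ ^ (k - (2 * n : ℕ))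
          * (qc M ρ ^ n * (vh M A τ ρ ^ 2) ^ n) := by rw [hW, ← hsplit h, hn]; ring
      _ ≤ K * C * (A - τ) ^ (-(p + 1)) * vh M A τ ρ ^ (k - (2 * n : ℕ))
          * ((2 * B) ^ 2) ^ n := by gcongr
      _ = _ := by rw [hC₁]; ring
  · intro ρ hρ0 hρ1
    have := hin ρ hρ0 hρ1
    rwa [show k - ((2 * n : ℕ) : ℝ) - p = -(κ + n) by rw [hk, hn]; push_cast; ring]

theorem init_zero (F : Frame M T A B m)
    (hdata : ∀ j : ℕ, PowSmooth M (κ - j) (fun ρ => nullD M u j (-tort M ρ) ρ)) :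
    ∃ C, 0 ≤ C ∧ ∀ ρ, 0 < ρ → ρ ≤ m →
      |nullD M u 0 (-tort M ρ) ρ| ≤ C * (A + tort M ρ) ^ (-κ) := by
  simpa using init_transported F hdata 0

/-- `V` is bounded on compact parts of the region, hence by a multiple of any of the weights. -/
theorem bounded_on_compact (F : Frame M T A B m) (hu : IsModeSolution M lam u) {a b : ℝ}
    (ha : 0 ≤ a) (hb : 0 ≤ b) (X : ℝ) :
    ∃ N, 0 ≤ N ∧ ∀ τ ρ, Dom M T A (Iic X) τ ρ →
      |nullD M u 0 τ ρ| ≤ N * ((A - τ) ^ (-a) * vh M A τ ρ ^ b) := by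
  set Y := max X 1
  have hY : 0 < Y := lt_of_lt_of_le one_pos (le_max_right _ _)
  have hcomp : IsCompact (Icc (A - Y) T ×ˢ Icc (1 / Y) m) := isCompact_Icc.prod isCompact_Icc
  have hcont : ContinuousOn (uncurry (nullD M u 0)) (Icc (A - Y) T ×ˢ Icc (1 / Y) m) :=
    (contDiffOn_nullD F.hM hu.1 0).continuousOn.mono fun p hp =>
      ⟨mem_univ _, lt_of_lt_of_le (by positivity) hp.2.1, hp.2.2.trans_lt F.hm'⟩
  obtain ⟨N, hN⟩ := hcomp.exists_bound_of_continuousOn hcont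
  have hm := F.hm
  refine ⟨max N 0 * (Y ^ a * m ^ b), by positivity, fun τ ρ h => ?_⟩
  have hv := h.vh_pos F
  have hs := h.one_le_sg F
  have hvY : vh M A τ ρ ≤ Y := le_trans h.2.2.2.2 (le_max_left _ _)
  have h1 : |nullD M u 0 τ ρ| ≤ max N 0 := by
    refine (hN (τ, ρ) ⟨⟨?_, h.2.2.1⟩, ?_, h.le_m F⟩).trans (le_max_left _ _)
    · linarith [h.sg_le_vh]
    · rw [one_div_le hY h.1]
      exact (h.le_vh F).trans hvY
  have h2 : 1 ≤ Y ^ a * (A - τ) ^ (-a) := by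
    rw [Real.rpow_neg (by linarith), ← div_eq_mul_inv, one_le_div (by positivity)]
    exact Real.rpow_le_rpow (by linarith) (h.sg_le_vh.trans hvY) ha
  have h3 : 1 ≤ m ^ b * vh M A τ ρ ^ b := by
    rw [← Real.mul_rpow hm.le hv.le]
    refine Real.one_le_rpow ?_ hb
    have := h.le_vh F
    rw [div_le_iff₀ h.1] at this
    nlinarith [h.le_m F]
  calc |nullD M u 0 τ ρ| ≤ max N 0 * (1 * 1) := by linarith
    _ ≤ max N 0 * ((Y ^ a * (A - τ) ^ (-a)) * (m ^ b * vh M A τ ρ ^ b)) := by gcongr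
    _ = _ := by ring

/-- A first decay estimate with a loss of `vh^b`. For large `b`, solving the wave equation with
the potential term as a source is a contraction in the norm with weight
`(A - τ̄)^{-κ-b} vh^b`. -/
theorem lossy_decay (F : Frame M T A B m) (hκ : 0 < κ) (hu : IsModeSolution M lam u)
    (hdata : ∀ j : ℕ, PowSmooth M (κ - j) (fun ρ => nullD M u j (-tort M ρ) ρ)) {b : ℝ}
    (hb : 1 ≤ b) (hb' : B ^ 2 * (lam ^ 2 + 1) ≤ b) :
    ∃ C, 0 ≤ C ∧ ∀ τ ρ, Dom M T A univ τ ρ →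
      |nullD M u 0 τ ρ| ≤ C * ((A - τ) ^ (-(κ + b)) * vh M A τ ρ ^ b) := by
  have hM := F.hM
  have hB := F.hB
  obtain ⟨C₀, hC₀, hin0⟩ := init_zero F hdata
  obtain ⟨C₁, hC₁, hin1⟩ := init_transported F hdata 1
  obtain ⟨a0, c0, b0, h000, htr⟩ := transport hM hu 0
  obtain ⟨rfl, rfl, rfl⟩ := h000 rfl
  set K := lam ^ 2 + 1 with hK
  have hK0 : 0 < K := by positivity
  set a := κ + b with ha
  have ha1 : 1 ≤ a := by linarith
  set D := C₀ + C₁ with hD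
  have hcontr : ∀ X N, 0 ≤ N → (∀ τ ρ, Dom M T A (Iic X) τ ρ →
      |nullD M u 0 τ ρ| ≤ N * ((A - τ) ^ (-a) * vh M A τ ρ ^ b)) →
      ∀ τ ρ, Dom M T A (Iic X) τ ρ →
      |nullD M u 0 τ ρ| ≤ (D + N / 2) * ((A - τ) ^ (-a) * vh M A τ ρ ^ b) := by
    intro X N hN hbd τ ρ h
    set E := 2 * B ^ 2 * K * N with hE
    have hE0 : 0 ≤ E := by positivity
    have key1 : ∀ τ ρ, Dom M T A (Iic X) τ ρ → |qc M ρ ^ 1 * nullD M u 1 τ ρ|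
        ≤ (C₁ + E / (2 * a)) * (A - τ) ^ (-a) * vh M A τ ρ ^ (b - 1) := by
      intro τ ρ h
      refine incoming F (S := Iic X) (G := fun τ ρ => qc M ρ ^ (0 + 1) * nullD M u (0 + 1) τ ρ)
        (G' := fun τ ρ => qc M ρ ^ 0 * ((lam ^ 2 + 2 * M * ρ) * nullD M u 0 τ ρ
          + 0 * nullD M u (0 - 1) τ ρ)) (C := E) (C₂ := C₁)
        (by linarith) hE0 hC₁ htr ?_ ?_ h
      · intro τ ρ h
        have hv := h.vh_pos F
        have hs := h.one_le_sg F
        have hs0 : 0 < A - τ := by linarith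
        have hq := h.qc_pos F
        have e1 : |lam ^ 2 + 2 * M * ρ| ≤ K := by
          have := mul_pos hM h.1
          rw [abs_of_nonneg (by nlinarith [sq_nonneg lam]), hK]
          linarith [one_sub_pos hM h.2.1]
        have e2 : qc M ρ * ((A - τ) * vh M A τ ρ) ≤ 2 * B ^ 2 := by
          have f1 := h.sg_le F
          have f2 := h.vh_le F
          rw [le_div_iff₀ h.1] at f1 f2
          calc qc M ρ * ((A - τ) * vh M A τ ρ) ≤ ρ ^ 2 * ((A - τ) * vh M A τ ρ) := by
                gcongr
                exact h.qc_le F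
            _ = ((A - τ) * ρ) * (vh M A τ ρ * ρ) := by ring
            _ ≤ B * (2 * B) := by
                gcongr
                exact (mul_pos hv h.1).le
            _ = _ := by ring
        have e3 : (A - τ) ^ (-a) = (A - τ) ^ (-(a + 1)) * (A - τ) := by
          rw [← Real.rpow_add_one hs0.ne']
          congr 1
          ring
        have e4 : vh M A τ ρ ^ b = vh M A τ ρ ^ (b - 1) * vh M A τ ρ := by
          rw [← Real.rpow_add_one hv.ne']
          congr 1
          ring
        have e5 : 0 ≤ (A - τ) ^ (-(a + 1)) * vh M A τ ρ ^ (b - 1) := by positivity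
        rw [pow_zero, one_mul, zero_mul, add_zero, abs_mul, le_div_iff₀ hq]
        calc |lam ^ 2 + 2 * M * ρ| * |nullD M u 0 τ ρ| * qc M ρ
            ≤ K * (N * ((A - τ) ^ (-a) * vh M A τ ρ ^ b)) * qc M ρ := by
              gcongr
              exact hbd τ ρ h
          _ = K * N * ((A - τ) ^ (-(a + 1)) * vh M A τ ρ ^ (b - 1))
              * (qc M ρ * ((A - τ) * vh M A τ ρ)) := by rw [e3, e4]; ring
          _ ≤ K * N * ((A - τ) ^ (-(a + 1)) * vh M A τ ρ ^ (b - 1)) * (2 * B ^ 2) := by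
              gcongr
          _ = _ := by rw [hE]; ring
      · intro ρ hρ0 hρ1
        have := hin1 ρ hρ0 hρ1
        rw [show b - 1 - a = -(κ + (1 : ℕ)) by rw [ha]; push_cast; ring]
        simpa using this
    have key2 := outgoing_pos F (isLowerSet_Iic X) (V := nullD M u 0) (V1 := nullD M u 1)
      (a := a) (k := b) (C := C₁ + E / (2 * a)) (C₂ := C₀) (by linarith) (by positivity) hC₀
      (fun τ ρ p0 p1 => hasDerivAt_nullD hM hu.1 0 τ p0 p1) ?_ ?_ h
    · have hv := h.vh_pos F
      have hs := h.one_le_sg F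
      have hs0 : 0 < A - τ := by linarith
      rw [mul_assoc] at key2
      refine key2.trans (mul_le_mul_of_nonneg_right ?_ (by positivity))
      have e1 : C₁ / (2 * b) ≤ C₁ := div_le_self hC₁ (by linarith)
      have e2 : E / (2 * a) / (2 * b) ≤ N / 2 := by
        rw [div_div, div_le_iff₀ (by positivity), hE]
        have : B ^ 2 * K * N ≤ b * N := by gcongr
        nlinarith [mul_nonneg (mul_nonneg (sub_nonneg.mpr ha1) (by linarith : 0 ≤ b)) hN]
      rw [add_div, hD]
      linarith
    · intro τ ρ h
      have hq := h.qc_pos F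
      have := key1 τ ρ h
      rw [le_div_iff₀ hq]
      rw [pow_one, abs_mul, abs_of_pos hq] at this
      linarith
    · intro ρ hρ0 hρ1
      rw [show b - a = -κ by rw [ha]; ring]
      exact hin0 ρ hρ0 hρ1
  have hD0 : 0 ≤ D := by positivity
  refine ⟨2 * D, by positivity, fun τ ρ h => ?_⟩
  -- the contraction, applied on a compact region, bounds the best constant by `2 D`
  obtain ⟨N, hN, hbd⟩ := bounded_on_compact F hu (a := a) (b := b) (by linarith) (by linarith)
    (vh M A τ ρ)
  have hiter : ∀ n : ℕ, ∀ τ' ρ', Dom M T A (Iic (vh M A τ ρ)) τ' ρ' →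
      |nullD M u 0 τ' ρ'| ≤ (2 * D + N * (1 / 2) ^ n) * ((A - τ') ^ (-a) * vh M A τ' ρ' ^ b) := by
    intro n
    induction n with
    | zero =>
      intro τ' ρ' h'
      have hv := h'.vh_pos F
      have hs0 : 0 < A - τ' := by linarith [h'.one_le_sg F]
      refine (hbd τ' ρ' h').trans (mul_le_mul_of_nonneg_right ?_ (by positivity))
      rw [pow_zero]
      linarith
    | succ n ih =>
      intro τ' ρ' h'
      have := hcontr _ _ (by positivity) ih τ' ρ' h'
      rw [show D + (2 * D + N * (1 / 2) ^ n) / 2 = 2 * D + N * (1 / 2) ^ (n + 1) by ring] at this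
      exact this
  have hlim : Tendsto (fun n : ℕ => (2 * D + N * (1 / 2 : ℝ) ^ n)
      * ((A - τ) ^ (-a) * vh M A τ ρ ^ b)) atTop
      (nhds ((2 * D + N * 0) * ((A - τ) ^ (-a) * vh M A τ ρ ^ b))) :=
    (((tendsto_pow_atTop_nhds_zero_of_lt_one (by norm_num) (by norm_num)).const_mul N).const_add
      (2 * D)).mul_const _
  rw [mul_zero, add_zero] at hlim
  exact ge_of_tendsto' hlim fun n => hiter n τ ρ ⟨h.1, h.2.1, h.2.2.1, h.2.2.2.1,
    (le_refl (vh M A τ ρ) :)⟩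

/-- The preparation common to both improvement lemmas: a decay estimate for `V` gives one for
`∂_ρ̄ V` by integration along incoming characteristics. -/
theorem first_deriv_bound (F : Frame M T A B m) (hu : IsModeSolution M lam u)
    (hdata : ∀ j : ℕ, PowSmooth M (κ - j) (fun ρ => nullD M u j (-tort M ρ) ρ)) {b C : ℝ}
    (hb : 1 < κ + b) (hC : 0 ≤ C)
    (h : ∀ τ ρ, Dom M T A univ τ ρ →
      |nullD M u 0 τ ρ| ≤ C * ((A - τ) ^ (-(κ + b)) * vh M A τ ρ ^ b)) :
    ∃ C', 0 ≤ C' ∧ ∀ τ ρ, Dom M T A univ τ ρ → |nullD M u 1 τ ρ|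
      ≤ C' * (A - τ) ^ (-(κ + b - 1)) * vh M A τ ρ ^ (b - 1 - 1) / qc M ρ := by
  obtain ⟨C', hC', h'⟩ := transport_step F hu hdata 0 (p := κ + b - 1) (k := b) (by linarith)
    (by push_cast; ring) hC (by simpa using h) (by simpa using h)
  have hB0 : 0 < B := by linarith [F.hB]
  refine ⟨C' * (2 * B) ^ 2, by positivity, fun τ ρ hd => ?_⟩
  have hv := hd.vh_pos F
  have hs0 : 0 < A - τ := by linarith [hd.one_le_sg F]
  have hq := hd.qc_pos F
  have e1 : vh M A τ ρ ^ b = vh M A τ ρ ^ (b - 1 - 1) * vh M A τ ρ ^ 2 := by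
    rw [← Real.rpow_add_natCast hv.ne']
    congr 1
    push_cast
    ring
  have e2 := h' τ ρ hd
  rw [le_div_iff₀ hq]
  rw [e1] at e2
  calc |nullD M u 1 τ ρ| * qc M ρ
      ≤ C' * ((A - τ) ^ (-(κ + b - 1)) * (vh M A τ ρ ^ (b - 1 - 1) * vh M A τ ρ ^ 2))
        * qc M ρ := mul_le_mul_of_nonneg_right e2 hq.le
    _ = C' * ((A - τ) ^ (-(κ + b - 1)) * vh M A τ ρ ^ (b - 1 - 1))
        * (qc M ρ * vh M A τ ρ ^ 2) := by ring
    _ ≤ C' * ((A - τ) ^ (-(κ + b - 1)) * vh M A τ ρ ^ (b - 1 - 1)) * (2 * B) ^ 2 :=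
        mul_le_mul_of_nonneg_left (hd.qc_vh F) (by positivity)
    _ = _ := by ring

/-- As long as `b > 1`, integrating twice improves the loss `vh^b` by a full power. -/
theorem improve_loss (F : Frame M T A B m) (hκ : 0 < κ) (hu : IsModeSolution M lam u)
    (hdata : ∀ j : ℕ, PowSmooth M (κ - j) (fun ρ => nullD M u j (-tort M ρ) ρ)) {b C : ℝ}
    (hb : 1 < b) (hC : 0 ≤ C)
    (h : ∀ τ ρ, Dom M T A univ τ ρ →
      |nullD M u 0 τ ρ| ≤ C * ((A - τ) ^ (-(κ + b)) * vh M A τ ρ ^ b)) :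
    ∃ C', 0 ≤ C' ∧ ∀ τ ρ, Dom M T A univ τ ρ →
      |nullD M u 0 τ ρ| ≤ C' * ((A - τ) ^ (-(κ + (b - 1))) * vh M A τ ρ ^ (b - 1)) := by
  obtain ⟨C', hC', h'⟩ := first_deriv_bound F hu hdata (by linarith) hC h
  obtain ⟨C₀, hC₀, hin0⟩ := init_zero F hdata
  have hb1 : 0 < b - 1 := by linarith
  refine ⟨C₀ + C' / (2 * (b - 1)), by positivity, fun τ ρ hd => ?_⟩
  rw [← mul_assoc, ← add_sub_assoc]
  refine outgoing_pos F isLowerSet_univ (V := nullD M u 0) (V1 := nullD M u 1) hb1 hC' hC₀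
    (fun τ ρ p0 p1 => hasDerivAt_nullD F.hM hu.1 0 τ p0 p1) h' ?_ hd
  intro ρ hρ0 hρ1
  rw [show b - 1 - (κ + b - 1) = -κ by ring]
  exact hin0 ρ hρ0 hρ1

/-- Once `b < 1`, the loss disappears altogether. -/
theorem remove_loss (F : Frame M T A B m) (hu : IsModeSolution M lam u)
    (hdata : ∀ j : ℕ, PowSmooth M (κ - j) (fun ρ => nullD M u j (-tort M ρ) ρ)) {b C : ℝ}
    (hb : b < 1) (hb' : 1 < κ + b) (hC : 0 ≤ C)
    (h : ∀ τ ρ, Dom M T A univ τ ρ →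
      |nullD M u 0 τ ρ| ≤ C * ((A - τ) ^ (-(κ + b)) * vh M A τ ρ ^ b)) :
    ∃ C', 0 ≤ C' ∧ ∀ τ ρ, Dom M T A univ τ ρ → |nullD M u 0 τ ρ| ≤ C' * (A - τ) ^ (-κ) := by
  obtain ⟨C', hC', h'⟩ := first_deriv_bound F hu hdata hb' hC h
  obtain ⟨C₀, hC₀, hin0⟩ := init_zero F hdata
  have hb1 : 0 < -(b - 1) := by linarith
  refine ⟨C₀ + C' / (2 * -(b - 1)), by positivity, fun τ ρ hd => ?_⟩
  rw [show -κ = b - 1 - (κ + b - 1) by ring]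
  refine outgoing_neg F isLowerSet_univ (V := nullD M u 0) (V1 := nullD M u 1) (by linarith) hC'
    (fun τ ρ p0 p1 => hasDerivAt_nullD F.hM hu.1 0 τ p0 p1) h' ?_ hd
  intro ρ hρ0 hρ1
  rw [show b - 1 - (κ + b - 1) = -κ by ring]
  exact hin0 ρ hρ0 hρ1

/-- The sharp decay of `V`: starting from a large loss, lower it by steps of `1` to an exponent
in `(0,1)`, and then remove it. -/
theorem decay_zero (F : Frame M T A B m) (hκ : 0 < κ) (hu : IsModeSolution M lam u)
    (hdata : ∀ j : ℕ, PowSmooth M (κ - j) (fun ρ => nullD M u j (-tort M ρ) ρ)) :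
    ∃ C, 0 ≤ C ∧ ∀ τ ρ, Dom M T A univ τ ρ → |nullD M u 0 τ ρ| ≤ C * (A - τ) ^ (-κ) := by
  -- a non-integer base exponent, so that the descent by steps of `1` skips `b = 1`
  obtain ⟨β, hβ0, hβ1, hβκ⟩ : ∃ β : ℝ, 0 < β ∧ β < 1 ∧ 1 < κ + β := by
    refine ⟨1 - min κ 1 / 2, ?_, ?_, ?_⟩
    · linarith [min_le_right κ 1]
    · linarith [lt_min hκ one_pos]
    · linarith [min_le_left κ 1, lt_min hκ one_pos]
  have hdesc : ∀ n : ℕ, (∃ C, 0 ≤ C ∧ ∀ τ ρ, Dom M T A univ τ ρ → |nullD M u 0 τ ρ|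
      ≤ C * ((A - τ) ^ (-(κ + (β + n))) * vh M A τ ρ ^ (β + n))) →
      ∃ C, 0 ≤ C ∧ ∀ τ ρ, Dom M T A univ τ ρ → |nullD M u 0 τ ρ| ≤ C * (A - τ) ^ (-κ) := by
    intro n
    induction n with
    | zero =>
      rintro ⟨C, hC, h⟩
      simp only [Nat.cast_zero, add_zero] at h
      exact remove_loss F hu hdata hβ1 hβκ hC h
    | succ n ih =>
      rintro ⟨C, hC, h⟩
      refine ih ?_
      have := improve_loss F hκ hu hdata (b := β + (n + 1 : ℕ))
        (by push_cast; linarith [n.cast_nonneg (α := ℝ)]) hC h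
      rwa [show β + ((n + 1 : ℕ) : ℝ) - 1 = β + n by push_cast; ring] at this
  obtain ⟨n, hn⟩ := exists_nat_ge (max 1 (B ^ 2 * (lam ^ 2 + 1)))
  refine hdesc n (lossy_decay F hκ hu hdata ?_ ?_)
  · linarith [le_max_left 1 (B ^ 2 * (lam ^ 2 + 1))]
  · linarith [le_max_right 1 (B ^ 2 * (lam ^ 2 + 1))]

/-- Each `ρ̄`-derivative of order below `κ` costs one power of `A - τ̄`, and stays bounded at null
infinity. -/
theorem decay_nullD (F : Frame M T A B m) (hκ : 0 < κ) (hu : IsModeSolution M lam u)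
    (hdata : ∀ j : ℕ, PowSmooth M (κ - j) (fun ρ => nullD M u j (-tort M ρ) ρ)) (j : ℕ) :
    (j : ℝ) < κ → ∀ i ≤ j, ∃ C, 0 ≤ C ∧ ∀ τ ρ, Dom M T A univ τ ρ →
      |nullD M u i τ ρ| ≤ C * (A - τ) ^ ((i : ℝ) - κ) := by
  induction j with
  | zero =>
    intro _ i hi
    obtain rfl : i = 0 := by omega
    simpa using decay_zero F hκ hu hdata
  | succ j ih =>
    intro hj i hi
    push_cast at hj
    have ih' := ih (by linarith)
    rcases Nat.lt_or_ge i (j + 1) with hlt | hge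
    · exact ih' i (by omega)
    obtain rfl : i = j + 1 := by omega
    obtain ⟨C, hC, h⟩ := ih' j le_rfl
    obtain ⟨C', hC', h'⟩ := ih' (j - 1) (by omega)
    have e1 : ∀ τ ρ, Dom M T A univ τ ρ → |nullD M u j τ ρ|
        ≤ max C C' * ((A - τ) ^ (-(κ - j - 1 + 1)) * vh M A τ ρ ^ (0 : ℝ)) := by
      intro τ ρ hd
      have hs := hd.one_le_sg F
      rw [Real.rpow_zero, mul_one, show -(κ - j - 1 + 1) = (j : ℝ) - κ by ring]
      refine (h τ ρ hd).trans (mul_le_mul_of_nonneg_right (le_max_left _ _) ?_)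
      exact Real.rpow_nonneg (by linarith) _
    have e2 : ∀ τ ρ, Dom M T A univ τ ρ → |nullD M u (j - 1) τ ρ|
        ≤ max C C' * ((A - τ) ^ (-(κ - j - 1 + 1)) * vh M A τ ρ ^ (0 : ℝ)) := by
      intro τ ρ hd
      have hs := hd.one_le_sg F
      rw [Real.rpow_zero, mul_one, show -(κ - j - 1 + 1) = (j : ℝ) - κ by ring]
      refine (h' τ ρ hd).trans (mul_le_mul (le_max_right _ _) ?_
        (Real.rpow_nonneg (by linarith) _) (le_max_of_le_left hC))
      refine Real.rpow_le_rpow_of_exponent_le hs ?_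
      have : ((j - 1 : ℕ) : ℝ) ≤ j := by exact_mod_cast Nat.sub_le j 1
      linarith
    obtain ⟨E, hE, hE'⟩ := transport_step F hu hdata j (p := κ - j - 1) (k := 0)
      (C := max C C') (by linarith) (by ring) (le_max_of_le_left hC) e1 e2
    refine ⟨E, hE, fun τ ρ hd => ?_⟩
    have := hE' τ ρ hd
    rw [Real.rpow_zero, mul_one, show -(κ - j - 1) = ((j + 1 : ℕ) : ℝ) - κ by push_cast; ring]
      at this
    exact this

/-- The derivative of order `l + 1`, the first one that need not stay bounded: as
`(A - τ̄)^{-α}` is not integrable, a factor `(A - τ̄)^{1+ε-α} ≤ vh^{1+ε-α}` is traded. -/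
theorem decay_top (F : Frame M T A B m) {α ε : ℝ} {l : ℕ} (hκ : 0 < κ) (hκl : κ = l + α)
    (hα : 0 < α) (hα1 : α ≤ 1) (hε : 0 < ε) (hu : IsModeSolution M lam u)
    (hdata : ∀ j : ℕ, PowSmooth M (κ - j) (fun ρ => nullD M u j (-tort M ρ) ρ)) :
    ∃ C, 0 ≤ C ∧ ∀ τ ρ, Dom M T A univ τ ρ →
      |nullD M u (l + 1) τ ρ| ≤ C * ((A - τ) ^ (-ε) * vh M A τ ρ ^ (1 + ε - α)) := by
  have hd := decay_nullD F hκ hu hdata l (by linarith)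
  have weak : ∀ i ≤ l, ∃ C, 0 ≤ C ∧ ∀ τ ρ, Dom M T A univ τ ρ →
      |nullD M u i τ ρ| ≤ C * ((A - τ) ^ (-(ε + 1)) * vh M A τ ρ ^ (1 + ε - α)) := by
    intro i hi
    obtain ⟨C, hC, h⟩ := hd i hi
    refine ⟨C, hC, fun τ ρ hdom => (h τ ρ hdom).trans (mul_le_mul_of_nonneg_left ?_ hC)⟩
    have hs := hdom.one_le_sg F
    have hs0 : 0 < A - τ := by linarith
    have hil : (i : ℝ) ≤ l := by exact_mod_cast hi
    calc (A - τ) ^ ((i : ℝ) - κ) ≤ (A - τ) ^ (-(ε + 1) + (1 + ε - α)) :=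
          Real.rpow_le_rpow_of_exponent_le hs (by linarith)
      _ = (A - τ) ^ (-(ε + 1)) * (A - τ) ^ (1 + ε - α) := Real.rpow_add hs0 _ _
      _ ≤ _ := by
          gcongr
          · linarith
          · exact hdom.sg_le_vh
  obtain ⟨C, hC, h⟩ := weak l le_rfl
  obtain ⟨C', hC', h'⟩ := weak (l - 1) (by omega)
  have hw : ∀ τ ρ, Dom M T A univ τ ρ →
      0 ≤ (A - τ) ^ (-(ε + 1)) * vh M A τ ρ ^ (1 + ε - α) := by
    intro τ ρ hdom
    have hs0 : 0 < A - τ := by linarith [hdom.one_le_sg F]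
    have hv := hdom.vh_pos F
    positivity
  exact transport_step F hu hdata l (C := max C C') hε (by rw [hκl]; ring)
    (le_max_of_le_left hC)
    (fun τ ρ hdom => (h τ ρ hdom).trans
      (mul_le_mul_of_nonneg_right (le_max_left _ _) (hw τ ρ hdom)))
    (fun τ ρ hdom => (h' τ ρ hdom).trans
      (mul_le_mul_of_nonneg_right (le_max_right _ _) (hw τ ρ hdom)))

end

/-! ### Regularity up to null infinity -/

theorem rpow_sub_le {x y δ : ℝ} (hx : 0 ≤ x) (hxy : x ≤ y) (h0 : 0 ≤ δ) (h1 : δ ≤ 1) :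
    y ^ δ - x ^ δ ≤ (y - x) ^ δ := by
  have := Real.rpow_add_le_add_rpow (sub_nonneg.mpr hxy) hx h0 h1
  rw [sub_add_cancel] at this
  linarith

section
variable {M T₁ T₂ A B m κ α ε δ ρ₀ : ℝ} {u : ℝ → ℝ → ℝ} {l : ℕ}

/-- The decay estimates, restricted to `τ̄ ∈ [T₁, T₂]` and to `ρ̄` so small that `t ≥ 0`. -/
theorem near_infinity {lam : ℝ} (F : Frame M T₂ A B m) (hκ : 0 < κ) (hκl : κ = l + α)
    (hα : 0 < α) (hα1 : α ≤ 1) (hε : 0 < ε) (hδα : δ ≤ α - ε)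
    (hT : T₁ < T₂) (hu : IsModeSolution M lam u)
    (hdata : ∀ j : ℕ, PowSmooth M (κ - j) (fun ρ => nullD M u j (-tort M ρ) ρ)) :
    ∃ m₁, 0 < m₁ ∧ m₁ < 1 / (2 * M) ∧ ∀ i ≤ l, ∃ C, 0 ≤ C ∧ ∀ τ ∈ Icc T₁ T₂, ∀ ρ, 0 < ρ →
      ρ ≤ m₁ → |nullD M u (i + 1) τ ρ| ≤ C * ρ ^ (δ - 1) := by
  have hB0 : 0 < B := by linarith [F.hB]
  have hA : 0 < A - T₁ := by linarith [F.hAT]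
  have hm := F.hm
  refine ⟨min (min m (1 / (A - T₁))) 1, by positivity, ?_, ?_⟩
  · exact ((min_le_left _ _).trans (min_le_left _ _)).trans_lt F.hm'
  have hdom : ∀ τ ∈ Icc T₁ T₂, ∀ ρ, 0 < ρ → ρ ≤ min (min m (1 / (A - T₁))) 1 →
      Dom M T₂ A univ τ ρ ∧ ρ ≤ 1 := by
    intro τ hτ ρ h0 h1
    rw [le_min_iff, le_min_iff] at h1
    obtain ⟨⟨h1, h2⟩, h3⟩ := h1
    refine ⟨⟨h0, h1.trans_lt F.hm', hτ.2, ?_, mem_univ _⟩, h3⟩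
    rw [le_one_div h0 hA] at h2
    linarith [F.lo ρ h0 h1, hτ.1]
  intro i hi
  rcases hi.lt_or_eq with hlt | rfl
  · have hc : ((i + 1 : ℕ) : ℝ) ≤ l := by exact_mod_cast hlt
    obtain ⟨C, hC, h⟩ := decay_nullD F hκ hu hdata (i + 1) (by linarith) (i + 1) le_rfl
    refine ⟨C, hC, fun τ hτ ρ h0 h1 => ?_⟩
    obtain ⟨hd, hρ1⟩ := hdom τ hτ ρ h0 h1
    refine (h τ ρ hd).trans (mul_le_mul_of_nonneg_left ?_ hC)
    exact (Real.rpow_le_one_of_one_le_of_nonpos (hd.one_le_sg F) (by linarith)).trans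
      (Real.one_le_rpow_of_pos_of_le_one_of_nonpos h0 hρ1 (by linarith))
  · obtain ⟨C, hC, h⟩ := decay_top F hκ hκl hα hα1 hε hu hdata
    refine ⟨C * (2 * B) ^ (1 + ε - α), by positivity, fun τ hτ ρ h0 h1 => ?_⟩
    obtain ⟨hd, hρ1⟩ := hdom τ hτ ρ h0 h1
    have hv := hd.vh_pos F
    rw [mul_assoc]
    refine (h τ ρ hd).trans (mul_le_mul_of_nonneg_left ?_ hC)
    have e1 : (A - τ) ^ (-ε) ≤ 1 :=
      Real.rpow_le_one_of_one_le_of_nonpos (hd.one_le_sg F) (by linarith)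
    calc (A - τ) ^ (-ε) * vh M A τ ρ ^ (1 + ε - α) ≤ 1 * vh M A τ ρ ^ (1 + ε - α) := by gcongr
      _ ≤ (2 * B / ρ) ^ (1 + ε - α) := by
          rw [one_mul]
          exact Real.rpow_le_rpow hv.le (hd.vh_le F) (by linarith)
      _ = (2 * B) ^ (1 + ε - α) * ρ ^ (-(1 + ε - α)) := by
          rw [Real.div_rpow (by positivity) h0.le, Real.rpow_neg h0.le, div_eq_mul_inv]
      _ ≤ (2 * B) ^ (1 + ε - α) * ρ ^ (δ - 1) := by
          gcongr ?_ * ?_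
          exact Real.rpow_le_rpow_of_exponent_ge h0 hρ1 (by linarith)

/-- Away from null infinity the derivatives are bounded by compactness, so a bound near null
infinity holds up to `ρ₀`. -/
theorem extend_bound (hM : 0 < M)
    (hs : ContDiffOn ℝ ∞ (uncurry u) ((univ : Set ℝ) ×ˢ Ioi (2 * M))) {m₁ C : ℝ} (hm₁ : 0 < m₁)
    (hρ₀ : 0 < ρ₀) (hρ₀' : ρ₀ < 1 / (2 * M)) (hC : 0 ≤ C) (hδ1 : δ ≤ 1) (i : ℕ)
    (h : ∀ τ ∈ Icc T₁ T₂, ∀ ρ, 0 < ρ → ρ ≤ m₁ → |nullD M u i τ ρ| ≤ C * ρ ^ (δ - 1)) :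
    ∃ C', 0 ≤ C' ∧ ∀ τ ∈ Icc T₁ T₂, ∀ ρ ∈ Ioc 0 ρ₀, |nullD M u i τ ρ| ≤ C' * ρ ^ (δ - 1) := by
  have hcont : ContinuousOn (uncurry (nullD M u i)) (Icc T₁ T₂ ×ˢ Icc m₁ ρ₀) :=
    (contDiffOn_nullD hM hs i).continuousOn.mono fun p hp =>
      ⟨mem_univ _, hm₁.trans_le hp.2.1, hp.2.2.trans_lt hρ₀'⟩
  obtain ⟨N, hN⟩ := (isCompact_Icc.prod isCompact_Icc).exists_bound_of_continuousOn hcont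
  set w := ρ₀ ^ (δ - 1) with hw
  have hw0 : 0 < w := Real.rpow_pos_of_pos hρ₀ _
  refine ⟨max C (N / w), le_max_of_le_left hC, fun τ hτ ρ hρ => ?_⟩
  have hp : 0 ≤ ρ ^ (δ - 1) := Real.rpow_nonneg hρ.1.le _
  rcases le_total ρ m₁ with h1 | h1
  · exact (h τ hτ ρ hρ.1 h1).trans (mul_le_mul_of_nonneg_right (le_max_left _ _) hp)
  · have h2 : |nullD M u i τ ρ| ≤ N := hN (τ, ρ) ⟨hτ, h1, hρ.2⟩
    have h3 : w ≤ ρ ^ (δ - 1) :=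
      Real.rpow_le_rpow_of_nonpos hρ.1 hρ.2 (by linarith)
    have hN0 : 0 ≤ N := (abs_nonneg _).trans h2
    calc |nullD M u i τ ρ| ≤ N / w * w := by rwa [div_mul_cancel₀ _ hw0.ne']
      _ ≤ max C (N / w) * ρ ^ (δ - 1) :=
          mul_le_mul (le_max_right _ _) h3 hw0.le (le_max_of_le_left hC)

theorem holder_of_deriv_bound_s15 (hM : 0 < M)
    (hs : ContDiffOn ℝ ∞ (uncurry u) ((univ : Set ℝ) ×ˢ Ioi (2 * M))) {C : ℝ}
    (hρ₀' : ρ₀ < 1 / (2 * M)) (hC : 0 ≤ C) (hδ : 0 < δ) (hδ1 : δ ≤ 1) (i : ℕ)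
    (h : ∀ τ ∈ Icc T₁ T₂, ∀ ρ ∈ Ioc 0 ρ₀, |nullD M u (i + 1) τ ρ| ≤ C * ρ ^ (δ - 1)) :
    ∀ τ ∈ Icc T₁ T₂, ∀ ρ ∈ Ioc 0 ρ₀, ∀ ρ' ∈ Ioc 0 ρ₀,
      |nullD M u i τ ρ - nullD M u i τ ρ'| ≤ C / δ * |ρ - ρ'| ^ δ := by
  intro τ hτ
  have main : ∀ x ∈ Ioc 0 ρ₀, ∀ y ∈ Ioc 0 ρ₀, x ≤ y →
      |nullD M u i τ y - nullD M u i τ x| ≤ C / δ * (y - x) ^ δ := by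
    intro x hx y hy hxy
    have key := abs_sub_le_of_deriv hxy (f := fun z => nullD M u i τ z)
      (f' := fun z => nullD M u (i + 1) τ z) (g := fun z => C / δ * z ^ δ)
      (g' := fun z => C * z ^ (δ - 1))
      (fun z hz => hasDerivAt_nullD hM hs i τ (hx.1.trans_le hz.1)
        ((hz.2.trans hy.2).trans_lt hρ₀')) ?_
      (fun z hz => h τ hτ z ⟨hx.1.trans_le hz.1, hz.2.trans hy.2⟩)
    · refine key.trans ?_
      rw [← mul_sub]
      exact mul_le_mul_of_nonneg_left (rpow_sub_le hx.1.le hxy hδ.le hδ1) (by positivity)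
    · intro z hz
      refine ((Real.hasDerivAt_rpow_const (p := δ)
        (Or.inl (hx.1.trans_le hz.1).ne')).const_mul (C / δ)).congr_deriv ?_
      field_simp
  intro ρ hρ ρ' hρ'
  rcases le_total ρ ρ' with h1 | h1
  · rw [abs_sub_comm, abs_sub_comm ρ, abs_of_nonneg (sub_nonneg.mpr h1)]
    exact main ρ hρ ρ' hρ' h1
  · rw [abs_of_nonneg (sub_nonneg.mpr h1)]
    exact main ρ' hρ' ρ hρ h1

/-- A function that is continuous on `[T₁,T₂] × (0,ρ₀]` and Hölder in `ρ`, uniformly in `τ`,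
extends continuously to `ρ = 0`: its values at `max ρ (ρ₀ / (n + 1))` converge uniformly. -/
theorem exists_extension {G : ℝ → ℝ → ℝ} {C : ℝ} (hC : 0 ≤ C) (hδ : 0 < δ) (hρ₀ : 0 < ρ₀)
    (hG : ContinuousOn (uncurry G) (Icc T₁ T₂ ×ˢ Ioc 0 ρ₀))
    (hH : ∀ τ ∈ Icc T₁ T₂, ∀ ρ ∈ Ioc 0 ρ₀, ∀ ρ' ∈ Ioc 0 ρ₀,
      |G τ ρ - G τ ρ'| ≤ C * |ρ - ρ'| ^ δ) :
    ∃ F : ℝ → ℝ → ℝ, ContinuousOn (uncurry F) (Icc T₁ T₂ ×ˢ Icc 0 ρ₀) ∧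
      ∀ τ ∈ Icc T₁ T₂, ∀ ρ ∈ Ioc 0 ρ₀, F τ ρ = G τ ρ := by
  set e : ℕ → ℝ := fun n => ρ₀ / (n + 1) with he
  have he0 : ∀ n, 0 < e n := fun n => by positivity
  have he1 : ∀ n, e n ≤ ρ₀ := fun n =>
    div_le_self hρ₀.le (by linarith [n.cast_nonneg (α := ℝ)])
  have heanti : ∀ {n k}, n ≤ k → e k ≤ e n := fun {n k} hnk => by
    have : (n : ℝ) ≤ k := by exact_mod_cast hnk
    simp only [he]
    gcongr
  have helim : Tendsto e atTop (nhds 0) := by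
    have := (tendsto_one_div_add_atTop_nhds_zero_nat (𝕜 := ℝ)).const_mul ρ₀
    simpa only [he, mul_one_div, mul_zero] using this
  set Φ : ℕ → ℝ × ℝ → ℝ := fun n p => G p.1 (max p.2 (e n)) with hΦ
  have hmem : ∀ n, ∀ ρ ∈ Icc 0 ρ₀, max ρ (e n) ∈ Ioc 0 ρ₀ := fun n ρ hρ =>
    ⟨lt_max_of_lt_right (he0 n), max_le hρ.2 (he1 n)⟩
  have hcont : ∀ n, ContinuousOn (Φ n) (Icc T₁ T₂ ×ˢ Icc 0 ρ₀) := by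
    intro n
    refine hG.comp (f := fun p : ℝ × ℝ => (p.1, max p.2 (e n))) (by fun_prop) ?_
    exact fun p hp => ⟨hp.1, hmem n p.2 hp.2⟩
  have hdiff : ∀ n k, n ≤ k → ∀ p ∈ Icc T₁ T₂ ×ˢ Icc 0 ρ₀, |Φ n p - Φ k p| ≤ C * e n ^ δ := by
    intro n k hnk p hp
    refine (hH p.1 hp.1 _ (hmem n p.2 hp.2) _ (hmem k p.2 hp.2)).trans ?_
    refine mul_le_mul_of_nonneg_left (Real.rpow_le_rpow (abs_nonneg _) ?_ hδ.le) hC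
    simp only [max_comm p.2]
    refine (abs_max_sub_max_le_abs (e n) (e k) p.2).trans ?_
    rw [abs_of_nonneg (sub_nonneg.mpr (heanti hnk))]
    linarith [he0 k]
  have hlim : Tendsto (fun n => C * e n ^ δ) atTop (nhds 0) := by
    have := (helim.rpow_const (p := δ) (Or.inr hδ.le)).const_mul C
    simpa [Real.zero_rpow hδ.ne'] using this
  have hcau : UniformCauchySeqOn Φ atTop (Icc T₁ T₂ ×ˢ Icc 0 ρ₀) := by
    rw [Metric.uniformCauchySeqOn_iff]
    intro η hη
    obtain ⟨N, hN⟩ := (hlim.eventually_lt_const (half_pos hη)).exists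
    refine ⟨N, fun n hn k hk p hp => ?_⟩
    rw [Real.dist_eq]
    have h1 := hdiff N n hn p hp
    have h2 := hdiff N k hk p hp
    rw [abs_sub_comm] at h1
    have h3 := abs_sub_le (Φ n p) (Φ N p) (Φ k p)
    linarith
  have hptw : ∀ p ∈ Icc T₁ T₂ ×ˢ Icc 0 ρ₀, ∃ y, Tendsto (fun n => Φ n p) atTop (nhds y) :=
    fun p hp => cauchySeq_tendsto_of_complete (hcau.cauchySeq hp)
  choose! Y hY using hptw
  have hunif : TendstoUniformlyOn Φ Y atTop (Icc T₁ T₂ ×ˢ Icc 0 ρ₀) :=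
    hcau.tendstoUniformlyOn_of_tendsto hY
  refine ⟨fun τ ρ => Y (τ, ρ), ?_, fun τ hτ ρ hρ => ?_⟩
  · exact hunif.continuousOn (Frequently.of_forall hcont)
  · have h1 := hY (τ, ρ) ⟨hτ, hρ.1.le, hρ.2⟩
    refine tendsto_nhds_unique h1 (tendsto_const_nhds.congr' ?_)
    filter_upwards [helim.eventually_lt_const hρ.1] with n hn
    simp only [hΦ]
    rw [max_eq_left hn.le]

end

/-- Null-infinity half of Theorem 1.1 for `k = 0` (single mode): if the initial data
decay like `r^{−κ−1}`, `r^{−κ−2}` at infinity, with `κ = l + α`, then the rescaled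
solution `V` is `C^{l,δ}` up to null infinity `{ρ̄ = 0}`, where `δ = min(α−ε, 1/2)`. -/
theorem null_infinity_regularity_from_decay
    (M lam κ α : ℝ) (l : ℕ) (hM : 0 < M) (hlam : 0 ≤ lam)
    (hκ : 0 < κ) (hκdec : κ = l + α) (hα : α ∈ Set.Ioc (0:ℝ) 1)
    (u : ℝ → ℝ → ℝ) (hu : IsModeSolution M lam u)
    (φt ψt : ℝ → ℝ)
    (hφt : ContDiffOn ℝ ∞ φt (Set.Ico 0 (1/(2*M))))
    (hψt : ContDiffOn ℝ ∞ ψt (Set.Ico 0 (1/(2*M))))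
    (hφ : ∀ r : ℝ, 2*M < r → u 0 r = r ^ (-κ-1) * φt (1/r))
    (hψ : ∀ r : ℝ, 2*M < r → pdt u 0 r = r ^ (-κ-2) * ψt (1/r))
    (ε δ : ℝ) (hε : 0 < ε) (hδ : δ = min (α - ε) (1/2)) (hδpos : 0 < δ)
    (T₁ T₂ ρ₀ : ℝ) (hT : T₁ < T₂) (hρ₀ : 0 < ρ₀) (hρ₀' : ρ₀ < 1/(2*M)) :
    (∀ i : ℕ, i ≤ l → ∃ F : ℝ → ℝ → ℝ,
      ContinuousOn (Function.uncurry F) (Set.Icc T₁ T₂ ×ˢ Set.Icc 0 ρ₀) ∧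
      ∀ τ ∈ Set.Icc T₁ T₂, ∀ ρ ∈ Set.Ioc (0:ℝ) ρ₀,
        F τ ρ = iteratedDeriv i (fun p => nullV M u τ p) ρ) ∧
    (∃ C : ℝ, ∀ τ ∈ Set.Icc T₁ T₂, ∀ ρ ∈ Set.Ioc (0:ℝ) ρ₀, ∀ ρ' ∈ Set.Ioc (0:ℝ) ρ₀,
      |iteratedDeriv l (fun p => nullV M u τ p) ρ
        - iteratedDeriv l (fun p => nullV M u τ p) ρ'| ≤ C * |ρ - ρ'| ^ δ) := by
  have hδα : δ ≤ α - ε := hδ ▸ min_le_left _ _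
  have hδ1 : δ ≤ 1 := by linarith [hδ ▸ min_le_right (α - ε) (1 / 2)]
  have hdata := initial_data hM hu hφt hψt hφ hψ
  obtain ⟨A, B, m, F⟩ := exists_frame hM T₂
  obtain ⟨m₁, hm₁, -, hnear⟩ :=
    near_infinity F hκ hκdec hα.1 hα.2 hε hδα hT hu hdata
  have hH : ∀ i ≤ l, ∃ C, 0 ≤ C ∧ ∀ τ ∈ Icc T₁ T₂, ∀ ρ ∈ Ioc 0 ρ₀, ∀ ρ' ∈ Ioc 0 ρ₀,
      |nullD M u i τ ρ - nullD M u i τ ρ'| ≤ C * |ρ - ρ'| ^ δ := by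
    intro i hi
    obtain ⟨C, hC, h⟩ := hnear i hi
    obtain ⟨C', hC', h'⟩ := extend_bound hM hu.1 hm₁ hρ₀ hρ₀' hC hδ1 (i + 1) h
    exact ⟨C' / δ, by positivity, holder_of_deriv_bound_s15 hM hu.1 hρ₀' hC' hδpos hδ1 i h'⟩
  constructor
  · intro i hi
    obtain ⟨C, hC, h⟩ := hH i hi
    refine exists_extension hC hδpos hρ₀ ?_ h
    exact (contDiffOn_nullD hM hu.1 i).continuousOn.mono fun p hp =>
      ⟨mem_univ _, hp.2.1, hp.2.2.trans_lt hρ₀'⟩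
  · obtain ⟨C, -, h⟩ := hH l le_rfl
    exact ⟨C, h⟩
end
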